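/- Let F ⊆ (0, ∞) be a non-empty bounded set with dim_H F > 0. Then dim_A (F^F + F) ≥ min{2 · dim_A F, 1}, where F^F + F = {x^y + z : x, y, z ∈ F}. -/

import Mathlib

open Metric MeasureTheory Filter Set
open scoped ENNReal NNReal Pointwise Topology

noncomputable section

/-- The Assouad dimension of a subset of a (pseudo)metric space: the infimum of all
`α ≥ 0` for which there is `C > 0` such that for every `x ∈ E` and all scales `0 < r < R`,
the set `E ∩ B(x,R)` can be covered by at most `C (R/r)^α` sets of diameter at most `r`. -/
def assouadDim {X : Type*} [PseudoMetricSpace X] (E : Set X) : ℝ :=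
  sInf {α : ℝ | 0 ≤ α ∧ ∃ C : ℝ, 0 < C ∧ ∀ x ∈ E, ∀ r R : ℝ, 0 < r → r < R →
    ∃ 𝒰 : Finset (Set X), (E ∩ closedBall x R ⊆ ⋃ U ∈ 𝒰, U) ∧
      (∀ U ∈ 𝒰, EMetric.diam U ≤ ENNReal.ofReal r) ∧
      ((𝒰.card : ℝ) ≤ C * (R / r) ^ α)}

section Entropy

open scoped Classical in
/-- The number of indices carrying the same label as `p`. -/
def classCard {ι α : Type*} [Fintype ι] (f : ι → α) (p : ι) : ℝ :=
  ((Finset.univ.filter fun q => f q = f p).card : ℝ)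

/-- The (unnormalised) conditional entropy `∑ₚ log |class of p|` of the uniform measure given a
label. -/
def labelEntropy {ι α : Type*} [Fintype ι] (f : ι → α) : ℝ :=
  ∑ p, Real.log (classCard f p)

variable {ι α β γ : Type*} [Fintype ι]

lemma one_le_classCard (f : ι → α) (p : ι) : 1 ≤ classCard f p := by
  classical
  unfold classCard
  exact_mod_cast Finset.card_pos.mpr ⟨p, by simp⟩

lemma classCard_pos (f : ι → α) (p : ι) : 0 < classCard f p :=
  zero_lt_one.trans_le (one_le_classCard f p)

lemma classCard_mono {f : ι → α} {g : ι → β} (h : ∀ p q, f p = f q → g p = g q) (p : ι) :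
    classCard f p ≤ classCard g p := by
  classical
  unfold classCard
  exact_mod_cast Finset.card_le_card fun q hq => by
    simp only [Finset.mem_filter, Finset.mem_univ, true_and] at hq ⊢
    exact h _ _ hq

lemma classCard_congr {f : ι → α} {p q : ι} (h : f p = f q) : classCard f p = classCard f q := by
  unfold classCard; rw [h]

lemma labelEntropy_mono {f : ι → α} {g : ι → β} (h : ∀ p q, f p = f q → g p = g q) :
    labelEntropy f ≤ labelEntropy g :=
  Finset.sum_le_sum fun p _ => Real.log_le_log (classCard_pos f p) (classCard_mono h p)

lemma sum_inv_classCard_le (f : ι → α) (s : Finset ι) (v : Finset α) (hv : ∀ p ∈ s, f p ∈ v) :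
    ∑ p ∈ s, (classCard f p)⁻¹ ≤ (v.card : ℝ) := by
  classical
  rw [← Finset.sum_fiberwise_of_maps_to (g := f) (t := s.image f)
    (fun x hx => Finset.mem_image_of_mem f hx)]
  calc _ ≤ ∑ y ∈ s.image f, (1 : ℝ) := by
        refine Finset.sum_le_sum fun y hy => ?_
        obtain ⟨p0, hp0, rfl⟩ := Finset.mem_image.1 hy
        calc ∑ p ∈ s.filter (fun p => f p = f p0), (classCard f p)⁻¹
            = ∑ p ∈ s.filter (fun p => f p = f p0), (classCard f p0)⁻¹ := by
              refine Finset.sum_congr rfl fun p hp => ?_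
              rw [classCard_congr (Finset.mem_filter.1 hp).2]
          _ = ((s.filter (fun p => f p = f p0)).card : ℝ) * (classCard f p0)⁻¹ := by simp
          _ ≤ classCard f p0 * (classCard f p0)⁻¹ := by
              gcongr
              · exact inv_nonneg.2 (classCard_pos f p0).le
              · unfold classCard
                exact_mod_cast Finset.card_le_card
                  (Finset.filter_subset_filter _ (Finset.subset_univ _))
          _ = 1 := mul_inv_cancel₀ (classCard_pos f p0).ne'
    _ = ((s.image f).card : ℝ) := by simp
    _ ≤ _ := by
      exact_mod_cast Finset.card_le_card (Finset.image_subset_iff.2 hv)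

open scoped Classical in
lemma classCard_eq_sum (f : ι → α) (p : ι) :
    classCard f p = ∑ q, if f q = f p then (1 : ℝ) else 0 := by
  simp [classCard]

open scoped Classical in
/-- If within each class of `f` the label `g` takes at most `m` values, then the average number of
`g`-classes in an `f`-class is at most `m`. -/
lemma sum_classCard_div_le (f : ι → α) (g : ι → β) (m : ℝ)
    (hm : ∀ p, ∃ v : Finset β, (v.card : ℝ) ≤ m ∧ ∀ q, f q = f p → g q ∈ v) :
    ∑ p, classCard f p / classCard g p ≤ m * Fintype.card ι := by
  calc ∑ p, classCard f p / classCard g p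
      = ∑ p, ∑ q, (if f q = f p then (classCard g p)⁻¹ else 0) := by
        refine Finset.sum_congr rfl fun p _ => ?_
        rw [classCard_eq_sum, div_eq_mul_inv, Finset.sum_mul]
        refine Finset.sum_congr rfl fun q _ => ?_
        split_ifs <;> simp
    _ = ∑ q, ∑ p ∈ Finset.univ.filter (fun p => f p = f q), (classCard g p)⁻¹ := by
        rw [Finset.sum_comm]
        refine Finset.sum_congr rfl fun q _ => ?_
        rw [Finset.sum_filter]
        refine Finset.sum_congr rfl fun p _ => ?_
        simp only [eq_comm]
    _ ≤ ∑ q : ι, m := by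
        refine Finset.sum_le_sum fun q _ => ?_
        obtain ⟨v, hv, hv'⟩ := hm q
        exact (sum_inv_classCard_le g _ v fun p hp => hv' p (Finset.mem_filter.1 hp).2).trans hv
    _ = _ := by simp [mul_comm]

lemma log_le_div_add_log {y m : ℝ} (hy : 0 < y) (hm : 0 < m) :
    Real.log y ≤ y / m - 1 + Real.log m := by
  have := Real.log_le_sub_one_of_pos (div_pos hy hm)
  rw [Real.log_div hy.ne' hm.ne'] at this
  linarith

open scoped Classical in
lemma labelEntropy_le_add_log (f : ι → α) (g : ι → β) (m : ℝ) (hm0 : 0 < m)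
    (hm : ∀ p, ∃ v : Finset β, (v.card : ℝ) ≤ m ∧ ∀ q, f q = f p → g q ∈ v) :
    labelEntropy f ≤ labelEntropy g + Fintype.card ι * Real.log m := by
  have key : labelEntropy f - labelEntropy g ≤
      ∑ p, (classCard f p / classCard g p / m - 1 + Real.log m) := by
    unfold labelEntropy
    rw [← Finset.sum_sub_distrib]
    refine Finset.sum_le_sum fun p _ => ?_
    rw [← Real.log_div (classCard_pos f p).ne' (classCard_pos g p).ne']
    exact log_le_div_add_log (div_pos (classCard_pos f p) (classCard_pos g p)) hm0
  rw [Finset.sum_add_distrib, Finset.sum_sub_distrib, ← Finset.sum_div] at key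
  have h1 := sum_classCard_div_le f g m hm
  have h2 : (∑ p, classCard f p / classCard g p) / m ≤ Fintype.card ι := by
    rw [div_le_iff₀ hm0]; linarith
  simp only [Finset.sum_const, Finset.card_univ, nsmul_eq_mul, mul_one] at key
  linarith

/-- The likelihood ratio measuring the failure of conditional independence of the labels `x`, `y`
given `z`. -/
def likelihood (x : ι → α) (y : ι → β) (z : ι → γ) (p : ι) : ℝ :=
  classCard (fun q => (x q, y q)) p * classCard z p / (classCard x p * classCard y p)

lemma likelihood_pos (x : ι → α) (y : ι → β) (z : ι → γ) (p : ι) : 0 < likelihood x y z p :=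
  div_pos (mul_pos (classCard_pos _ _) (classCard_pos _ _))
    (mul_pos (classCard_pos _ _) (classCard_pos _ _))

open scoped Classical in
lemma sum_inv_likelihood_le {x : ι → α} {y : ι → β} {z : ι → γ}
    (hx : ∀ p q, x p = x q → z p = z q) (hy : ∀ p q, y p = y q → z p = z q) :
    ∑ p, (likelihood x y z p)⁻¹ ≤ Fintype.card ι := by
  have hterm : ∀ p, (likelihood x y z p)⁻¹ = ∑ q, ∑ q',
      (if x q = x p ∧ y q' = y p then (classCard (fun q => (x q, y q)) p)⁻¹ * (classCard z p)⁻¹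
        else 0) := by
    intro p
    have e : (likelihood x y z p)⁻¹ = (classCard x p * classCard y p) *
        ((classCard (fun q => (x q, y q)) p)⁻¹ * (classCard z p)⁻¹) := by
      unfold likelihood
      rw [inv_div, div_eq_mul_inv, mul_inv]
    rw [e, classCard_eq_sum x, classCard_eq_sum y, Finset.sum_mul_sum, Finset.sum_mul]
    refine Finset.sum_congr rfl fun q _ => ?_
    rw [Finset.sum_mul]
    refine Finset.sum_congr rfl fun q' _ => ?_
    by_cases h1 : x q = x p <;> by_cases h2 : y q' = y p <;> simp [h1, h2]
  calc ∑ p, (likelihood x y z p)⁻¹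
      = ∑ q, ∑ q', ∑ p, (if x q = x p ∧ y q' = y p then
          (classCard (fun q => (x q, y q)) p)⁻¹ * (classCard z p)⁻¹ else 0) := by
        simp_rw [hterm]
        rw [Finset.sum_comm]
        refine Finset.sum_congr rfl fun q _ => ?_
        rw [Finset.sum_comm]
    _ ≤ ∑ q, ∑ q', (if z q' = z q then (classCard z q)⁻¹ else 0) := by
        refine Finset.sum_le_sum fun q _ => Finset.sum_le_sum fun q' _ => ?_
        rw [← Finset.sum_filter]
        by_cases hz : z q' = z q
        · rw [if_pos hz]
          calc _ = ∑ p ∈ Finset.univ.filter (fun p => x q = x p ∧ y q' = y p),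
                (classCard (fun q => (x q, y q)) p)⁻¹ * (classCard z q)⁻¹ := by
                refine Finset.sum_congr rfl fun p hp => ?_
                rw [classCard_congr (hx q p (Finset.mem_filter.1 hp).2.1)]
            _ ≤ 1 * (classCard z q)⁻¹ := by
                rw [← Finset.sum_mul]
                gcongr
                · exact inv_nonneg.2 (classCard_pos z q).le
                · refine (sum_inv_classCard_le _ _ {(x q, y q')} ?_).trans (by simp)
                  simp only [Finset.mem_filter, Finset.mem_univ, true_and,
                    Finset.mem_singleton, and_imp]
                  rintro p h1 h2
                  rw [← h1, ← h2]
            _ = _ := one_mul _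
        · rw [if_neg hz]
          refine le_of_eq (Finset.sum_eq_zero fun p hp => ?_)
          obtain ⟨h1, h2⟩ := (Finset.mem_filter.1 hp).2
          exact absurd ((hy _ _ h2).trans (hx _ _ h1).symm) hz
    _ = ∑ q : ι, (1 : ℝ) := by
        refine Finset.sum_congr rfl fun q _ => ?_
        have : ∀ q', (if z q' = z q then (classCard z q)⁻¹ else 0) =
            (if z q' = z q then (1 : ℝ) else 0) * (classCard z q)⁻¹ := by
          intro q'; split_ifs <;> simp
        simp_rw [this]
        rw [← Finset.sum_mul, ← classCard_eq_sum, mul_inv_cancel₀ (classCard_pos z q).ne']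
    _ = _ := by simp

lemma sum_log_likelihood (x : ι → α) (y : ι → β) (z : ι → γ) :
    ∑ p, Real.log (likelihood x y z p) =
      labelEntropy (fun q => (x q, y q)) + labelEntropy z - labelEntropy x - labelEntropy y := by
  unfold labelEntropy
  rw [← Finset.sum_add_distrib, ← Finset.sum_sub_distrib, ← Finset.sum_sub_distrib]
  refine Finset.sum_congr rfl fun p _ => ?_
  unfold likelihood
  have h1 := (classCard_pos (fun q => (x q, y q)) p).ne'
  have h2 := (classCard_pos z p).ne'
  have h3 := (classCard_pos x p).ne'
  have h4 := (classCard_pos y p).ne'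
  rw [Real.log_div (mul_ne_zero h1 h2) (mul_ne_zero h3 h4), Real.log_mul h1 h2,
    Real.log_mul h3 h4]
  ring

lemma one_sub_inv_le_log_likelihood (x : ι → α) (y : ι → β) (z : ι → γ) (p : ι) :
    1 - (likelihood x y z p)⁻¹ ≤ Real.log (likelihood x y z p) :=
  Real.one_sub_inv_le_log_of_pos (likelihood_pos x y z p)

lemma labelEntropy_supermodular {x : ι → α} {y : ι → β} {z : ι → γ}
    (hx : ∀ p q, x p = x q → z p = z q) (hy : ∀ p q, y p = y q → z p = z q) :
    labelEntropy x + labelEntropy y ≤ labelEntropy (fun q => (x q, y q)) + labelEntropy z := by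
  have h1 := sum_log_likelihood x y z
  have h2 := Finset.sum_le_sum (s := Finset.univ)
    fun p _ => one_sub_inv_le_log_likelihood x y z p
  have h3 := sum_inv_likelihood_le hx hy
  rw [Finset.sum_sub_distrib] at h2
  simp only [Finset.sum_const, Finset.card_univ, nsmul_eq_mul, mul_one] at h2
  linarith

open scoped Classical in
lemma card_large_likelihood {x : ι → α} {y : ι → β} {z : ι → γ}
    (hx : ∀ p q, x p = x q → z p = z q) (hy : ∀ p q, y p = y q → z p = z q) (lam : ℝ) :
    lam * ((Finset.univ.filter fun p => lam < Real.log (likelihood x y z p)).card : ℝ) ≤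
      labelEntropy (fun q => (x q, y q)) + labelEntropy z - labelEntropy x - labelEntropy y
        + Fintype.card ι := by
  rw [← sum_log_likelihood]
  have h3 := sum_inv_likelihood_le hx hy
  calc lam * ((Finset.univ.filter fun p => lam < Real.log (likelihood x y z p)).card : ℝ)
      = ∑ p, (if lam < Real.log (likelihood x y z p) then lam else 0) := by
        rw [← Finset.sum_filter]; simp [mul_comm]
    _ ≤ ∑ p, (Real.log (likelihood x y z p) + (likelihood x y z p)⁻¹) := by
        refine Finset.sum_le_sum fun p _ => ?_
        have h := one_sub_inv_le_log_likelihood x y z p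
        have h' := inv_pos.2 (likelihood_pos x y z p)
        split_ifs with hp <;> linarith
    _ ≤ _ := by rw [Finset.sum_add_distrib]; linarith

open scoped Classical in
/-- The proportion of the class of `p` whose integer label `b` differs from `b p` by at
least `2`. -/
def farFraction (x : ι → α) (b : ι → ℤ) (p : ι) : ℝ :=
  ((Finset.univ.filter fun q => x q = x p ∧ 2 ≤ |b q - b p|).card : ℝ) / classCard x p

open scoped Classical in
lemma near_card_eq (x : ι → α) (b : ι → ℤ) (p : ι) :
    ((Finset.univ.filter fun q => x q = x p ∧ |b q - b p| ≤ 1).card : ℝ) =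
      classCard x p * (1 - farFraction x b p) := by
  have h : classCard x p =
      ((Finset.univ.filter fun q => x q = x p ∧ |b q - b p| ≤ 1).card : ℝ) +
      ((Finset.univ.filter fun q => x q = x p ∧ 2 ≤ |b q - b p|).card : ℝ) := by
    unfold classCard
    rw [← Nat.cast_add, ← Finset.card_union_of_disjoint]
    · congr 2
      ext q
      simp only [Finset.mem_filter, Finset.mem_univ, true_and, Finset.mem_union]
      constructor
      · intro hq
        rcases le_or_gt (|b q - b p|) 1 with h | h
        · exact Or.inl ⟨hq, h⟩
        · exact Or.inr ⟨hq, h⟩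
      · rintro (h | h) <;> exact h.1
    · rw [Finset.disjoint_filter]
      rintro q - ⟨-, h1⟩ ⟨-, h2⟩
      omega
  unfold farFraction
  have h0 := (classCard_pos x p).ne'
  field_simp
  linarith

lemma farFraction_nonneg (x : ι → α) (b : ι → ℤ) (p : ι) : 0 ≤ farFraction x b p :=
  div_nonneg (Nat.cast_nonneg _) (classCard_pos x p).le

lemma farFraction_lt_one (x : ι → α) (b : ι → ℤ) (p : ι) : farFraction x b p < 1 := by
  classical
  have h := near_card_eq x b p
  have h1 : (0 : ℝ) <
      ((Finset.univ.filter fun q => x q = x p ∧ |b q - b p| ≤ 1).card : ℝ) := by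
    exact_mod_cast Finset.card_pos.mpr ⟨p, by simp⟩
  rw [h] at h1
  have := (mul_pos_iff_of_pos_left (classCard_pos x p)).1 h1
  linarith

lemma log_inv_near_le {ν G : ℝ} (hν0 : 0 < ν) (hν1 : ν ≤ 1) (hG : 1 ≤ G) :
    -Real.log (ν + 1 / G) ≤ (2 * Real.log G + 2) * (1 - ν) := by
  have hlogG : 0 ≤ Real.log G := Real.log_nonneg hG
  have hG0 : 0 < G := by linarith
  have hGi : 0 < 1 / G := by positivity
  rcases le_or_gt (1 / 2) ν with h | h
  · have h1 : Real.log ν ≤ Real.log (ν + 1 / G) := Real.log_le_log hν0 (by linarith)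
    have h2 := Real.one_sub_inv_le_log_of_pos hν0
    have h3 : ν⁻¹ - 1 ≤ 2 * (1 - ν) := by
      have : ν⁻¹ - 1 = ν⁻¹ * (1 - ν) := by field_simp
      rw [this]
      refine mul_le_mul_of_nonneg_right ?_ (by linarith)
      rw [inv_le_comm₀ hν0 (by norm_num)]
      linarith
    have h4 : 0 ≤ 2 * Real.log G * (1 - ν) := mul_nonneg (by linarith) (by linarith)
    nlinarith
  · have h1 : Real.log (1 / G) ≤ Real.log (ν + 1 / G) := Real.log_le_log hGi (by linarith)
    rw [one_div, Real.log_inv] at h1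
    have h4 : Real.log G ≤ 2 * Real.log G * (1 - ν) := by nlinarith
    rw [one_div] at *
    nlinarith

open scoped Classical in
lemma sum_near_div_le (x : ι → α) (b : ι → ℤ) :
    ∑ p, classCard x p * (1 - farFraction x b p) / classCard (fun q => (x q, b q)) p ≤
      3 * Fintype.card ι := by
  calc _ = ∑ p, ∑ q, (if x q = x p ∧ |b q - b p| ≤ 1 then
        (classCard (fun q => (x q, b q)) p)⁻¹ else 0) := by
        refine Finset.sum_congr rfl fun p _ => ?_
        rw [← near_card_eq, div_eq_mul_inv, ← Finset.sum_filter]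
        simp
    _ = ∑ q, ∑ p ∈ Finset.univ.filter (fun p => x q = x p ∧ |b q - b p| ≤ 1),
        (classCard (fun q => (x q, b q)) p)⁻¹ := by
        rw [Finset.sum_comm]
        refine Finset.sum_congr rfl fun q _ => ?_
        rw [Finset.sum_filter]
    _ ≤ ∑ q : ι, (3 : ℝ) := by
        refine Finset.sum_le_sum fun q _ => (sum_inv_classCard_le _ _
          ({(x q, b q - 1), (x q, b q), (x q, b q + 1)} : Finset (α × ℤ)) ?_).trans ?_
        · simp only [Finset.mem_filter, Finset.mem_univ, true_and, and_imp]
          intro p h1 h2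
          rw [abs_le] at h2
          simp only [Finset.mem_insert, Finset.mem_singleton, Prod.mk.injEq, h1, true_and]
          omega
        · exact_mod_cast Finset.card_le_three
    _ = _ := by simp [mul_comm]

open scoped Classical in
/-- If refining the label `x` by the integer label `b` loses a lot of entropy, then many pairs in
a common class of `x` have `b`-labels that are far apart. -/
lemma labelEntropy_sub_le_far (x : ι → α) (b : ι → ℤ) {G : ℝ} (hG : 1 ≤ G)
    (hm : ∀ p, ∃ v : Finset ℤ, (v.card : ℝ) ≤ G ∧ ∀ q, x q = x p → b q ∈ v) :
    labelEntropy x - labelEntropy (fun q => (x q, b q)) ≤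
      Fintype.card ι * Real.log 4 + (2 * Real.log G + 2) * ∑ p, farFraction x b p := by
  have hG0 : 0 < G := by linarith
  have h1 := sum_near_div_le x b
  have h2 := sum_classCard_div_le x (fun q => (x q, b q)) G fun p => by
    obtain ⟨v, hv, hv'⟩ := hm p
    exact ⟨({x p} : Finset α) ×ˢ v, by simpa using hv, fun q hq => by simp [hq, hv' q hq]⟩
  have key : labelEntropy x - labelEntropy (fun q => (x q, b q)) ≤
      ∑ p, ((classCard x p * (1 - farFraction x b p) / classCard (fun q => (x q, b q)) p +
        classCard x p / classCard (fun q => (x q, b q)) p / G) / 4 - 1 + Real.log 4 +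
        (2 * Real.log G + 2) * farFraction x b p) := by
    unfold labelEntropy
    rw [← Finset.sum_sub_distrib]
    refine Finset.sum_le_sum fun p _ => ?_
    have hc := classCard_pos x p
    have hd := classCard_pos (fun q => (x q, b q)) p
    have hf0 := farFraction_nonneg x b p
    have hf1 := farFraction_lt_one x b p
    have hv : 0 < (1 - farFraction x b p) + 1 / G :=
      add_pos (by linarith) (by positivity)
    have e1 := log_inv_near_le (ν := 1 - farFraction x b p) (by linarith) (by linarith) hG
    have e2 := log_le_div_add_log (y := classCard x p * ((1 - farFraction x b p) + 1 / G) /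
      classCard (fun q => (x q, b q)) p) (m := 4) (by positivity) (by norm_num)
    rw [Real.log_div (by positivity) hd.ne', Real.log_mul hc.ne' hv.ne'] at e2
    have e3 : classCard x p * (1 - farFraction x b p + 1 / G) /
        classCard (fun q => (x q, b q)) p =
        classCard x p * (1 - farFraction x b p) / classCard (fun q => (x q, b q)) p +
        classCard x p / classCard (fun q => (x q, b q)) p / G := by
      field_simp
    rw [e3] at e2
    rw [sub_sub_cancel] at e1
    linarith
  rw [Finset.sum_add_distrib, Finset.sum_add_distrib, Finset.sum_sub_distrib, ← Finset.sum_div,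
    Finset.sum_add_distrib, ← Finset.sum_div, ← Finset.mul_sum] at key
  have h3 : (∑ p, classCard x p / classCard (fun q => (x q, b q)) p) / G ≤ Fintype.card ι := by
    rw [div_le_iff₀ hG0]; linarith
  simp only [Finset.sum_const, Finset.card_univ, nsmul_eq_mul, mul_one] at key
  linarith

end Entropy

section Walk

/-- There is an alternating walk `p → q' → q → ⋯` of length `2 * k` between `r` and `r'`, the steps
being taken along the supports of the kernels `B (s i)` and `B (t i)`. -/
def Reach {ι D : Type*} (r r' : Finset ι) (B : D → ι → ι → ℝ) :
    (k : ℕ) → ι → (Fin k → D) → (Fin k → D) → Prop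
  | 0, p, _, _ => p ∈ r
  | k + 1, p, s, t => p ∈ r ∧ ∃ q' ∈ r', ∃ q ∈ r, 0 < B (s 0) p q' ∧ 0 < B (t 0) q q' ∧
      Reach r r' B k q (Fin.tail s) (Fin.tail t)

/-- Iterates of the kernel `M Mᵀ` on `r`, applied to the constant function `1`. -/
def walkMass {ι : Type*} (r r' : Finset ι) (M : ι → ι → ℝ) : ℕ → ι → ℝ
  | 0, _ => 1
  | k + 1, p => ∑ q ∈ r, (∑ q' ∈ r', M p q' * M q q') * walkMass r r' M k q

variable {ι D : Type*}

lemma sum_walkMass_mul_succ (r r' : Finset ι) (M : ι → ι → ℝ) (j l : ℕ) :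
    ∑ p ∈ r, walkMass r r' M (j + 1) p * walkMass r r' M l p =
      ∑ p ∈ r, walkMass r r' M j p * walkMass r r' M (l + 1) p := by
  simp only [walkMass, Finset.sum_mul, Finset.mul_sum]
  rw [Finset.sum_comm]
  refine Finset.sum_congr rfl fun p _ => Finset.sum_congr rfl fun q _ =>
    Finset.sum_congr rfl fun q' _ => by ring

lemma sum_walkMass_mul (r r' : Finset ι) (M : ι → ι → ℝ) (j l : ℕ) :
    ∑ p ∈ r, walkMass r r' M j p * walkMass r r' M l p =
      ∑ p ∈ r, walkMass r r' M (j + l) p := by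
  induction j generalizing l with
  | zero => simp [walkMass]
  | succ j ih => rw [sum_walkMass_mul_succ, ih]; congr! 2; ring

lemma le_sum_walkMass (r r' : Finset ι) (hr : r.Nonempty) {M : ι → ι → ℝ} {φ c : ℝ}
    (hφ : 0 < φ) (hc : 0 ≤ c)
    (hlow : c * r.card * r'.card / φ ≤ ∑ p ∈ r, ∑ q ∈ r', M p q) (a : ℕ) :
    r.card * (c ^ 2 * (r.card * r'.card / φ ^ 2)) ^ (2 ^ a) ≤
      ∑ p ∈ r, walkMass r r' M (2 ^ a) p := by
  have hr0 : (0 : ℝ) < r.card := by exact_mod_cast Finset.card_pos.2 hr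
  induction a with
  | zero =>
    rw [pow_zero, pow_one]
    have h1 : ∑ p ∈ r, walkMass r r' M 1 p = ∑ q' ∈ r', (∑ p ∈ r, M p q') ^ 2 := by
      simp only [walkMass, mul_one]
      simp_rw [sq, Finset.sum_mul_sum]
      calc _ = ∑ p ∈ r, ∑ q' ∈ r', ∑ q ∈ r, M p q' * M q q' :=
            Finset.sum_congr rfl fun p _ => Finset.sum_comm
        _ = _ := Finset.sum_comm
    rw [h1]
    rcases r'.eq_empty_or_nonempty with rfl | hr'
    · simp
    have hr0' : (0 : ℝ) < r'.card := by exact_mod_cast Finset.card_pos.2 hr'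
    have h2 : (∑ q' ∈ r', ∑ p ∈ r, M p q') ^ 2 ≤ r'.card * ∑ q' ∈ r', (∑ p ∈ r, M p q') ^ 2 :=
      sq_sum_le_card_mul_sum_sq
    rw [Finset.sum_comm] at hlow
    have h3 : (c * r.card * r'.card / φ) ^ 2 ≤ (∑ q' ∈ r', ∑ p ∈ r, M p q') ^ 2 :=
      pow_le_pow_left₀ (by positivity) hlow 2
    have h4 : (c * r.card * r'.card / φ) ^ 2 =
        r'.card * (r.card * (c ^ 2 * (r.card * r'.card / φ ^ 2))) := by
      field_simp
    rw [h4] at h3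
    exact le_of_mul_le_mul_left (h3.trans h2) hr0'
  | succ a ih =>
    set X := (c ^ 2 * ((r.card : ℝ) * r'.card / φ ^ 2)) ^ (2 ^ a) with hX
    have hX0 : 0 ≤ X := by positivity
    have h2 : (∑ p ∈ r, walkMass r r' M (2 ^ a) p) ^ 2 ≤
        r.card * ∑ p ∈ r, walkMass r r' M (2 ^ a) p ^ 2 := sq_sum_le_card_mul_sum_sq
    have h3 : ∑ p ∈ r, walkMass r r' M (2 ^ a) p ^ 2 =
        ∑ p ∈ r, walkMass r r' M (2 ^ (a + 1)) p := by
      simp_rw [sq]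
      rw [sum_walkMass_mul, ← two_mul, ← pow_succ']
    rw [h3] at h2
    have h4 : (r.card * X) ^ 2 ≤ (∑ p ∈ r, walkMass r r' M (2 ^ a) p) ^ 2 :=
      pow_le_pow_left₀ (by positivity) ih 2
    have h5 : (c ^ 2 * ((r.card : ℝ) * r'.card / φ ^ 2)) ^ (2 ^ (a + 1)) = X ^ 2 := by
      rw [hX, ← pow_mul, ← pow_succ]
    rw [h5]
    refine le_of_mul_le_mul_left ?_ hr0
    calc (r.card : ℝ) * (r.card * X ^ 2) = (r.card * X) ^ 2 := by ring
      _ ≤ _ := h4.trans h2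

open scoped Classical in
lemma walkMass_le [Fintype D] [Nonempty D] (r r' : Finset ι) {B : D → ι → ι → ℝ}
    (hB : ∀ t p q, 0 ≤ B t p q) {x x' : ℝ} (hx : 0 ≤ x) (hx' : 0 ≤ x')
    (hrow : ∀ t, ∀ p ∈ r, ∑ q' ∈ r', B t p q' ≤ x')
    (hcol : ∀ t, ∀ q' ∈ r', ∑ q ∈ r, B t q q' ≤ x) (k : ℕ) (p : ι) (hp : p ∈ r) :
    walkMass r r' (fun p q => (∑ t, B t p q) / Fintype.card D) k p *
        (Fintype.card D : ℝ) ^ (2 * k) ≤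
      (x * x') ^ k * ((Finset.univ.filter fun st : (Fin k → D) × (Fin k → D) =>
        Reach r r' B k p st.1 st.2).card : ℝ) := by
  have hD : (0 : ℝ) < Fintype.card D := by exact_mod_cast Fintype.card_pos
  induction k generalizing p with
  | zero => simp [walkMass, Reach, hp]
  | succ k ih =>
    set X : ℝ := (Fintype.card D : ℝ) with hX
    set M : ι → ι → ℝ := fun p q => (∑ t, B t p q) / X with hM
    have hR : ∀ q, ((Finset.univ.filter fun st : (Fin k → D) × (Fin k → D) =>
        Reach r r' B k q st.1 st.2).card : ℝ) = ∑ s, ∑ t, if Reach r r' B k q s t then (1 : ℝ)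
          else 0 := by
      intro q
      rw [Finset.card_filter, ← Finset.univ_product_univ, Finset.sum_product]
      push_cast
      rfl
    have hinner : ∀ (t0 t1 : D) (s t : Fin k → D),
        ∑ q ∈ r, ∑ q' ∈ r', B t0 p q' * B t1 q q' * (if Reach r r' B k q s t then (1 : ℝ)
          else 0) ≤ x * x' * (if Reach r r' B (k + 1) p (Fin.cons t0 s) (Fin.cons t1 t)
            then 1 else 0) := by
      intro t0 t1 s t
      split_ifs with hre
      · rw [mul_one, Finset.sum_comm]
        calc _ ≤ ∑ q' ∈ r', ∑ q ∈ r, B t0 p q' * B t1 q q' := by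
              refine Finset.sum_le_sum fun q' _ => Finset.sum_le_sum fun q _ => ?_
              refine mul_le_of_le_one_right (mul_nonneg (hB _ _ _) (hB _ _ _)) ?_
              split_ifs <;> norm_num
          _ ≤ ∑ q' ∈ r', B t0 p q' * x := by
              refine Finset.sum_le_sum fun q' hq' => ?_
              rw [← Finset.mul_sum]
              exact mul_le_mul_of_nonneg_left (hcol t1 q' hq') (hB _ _ _)
          _ ≤ x' * x := by
              rw [← Finset.sum_mul]
              exact mul_le_mul_of_nonneg_right (hrow t0 p hp) hx
          _ = x * x' := mul_comm _ _
      · rw [mul_zero]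
        refine Finset.sum_nonpos fun q hq => Finset.sum_nonpos fun q' hq' => ?_
        split_ifs with hre'
        · rw [mul_one]
          by_contra! hpos
          have h1 : B t0 p q' ≠ 0 := fun h => by simp [h] at hpos
          have h2 : B t1 q q' ≠ 0 := fun h => by simp [h] at hpos
          exact hre ⟨hp, q', hq', q, hq, lt_of_le_of_ne (hB _ _ _) (Ne.symm h1),
            lt_of_le_of_ne (hB _ _ _) (Ne.symm h2), hre'⟩
        · rw [mul_zero]
    have hcons : ∀ f : (Fin (k + 1) → D) → ℝ, ∑ s, f s = ∑ t0, ∑ s, f (Fin.cons t0 s) := by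
      intro f
      rw [← (Fin.consEquiv (fun _ => D)).sum_comp, Fintype.sum_prod_type]
      rfl
    calc walkMass r r' M (k + 1) p * X ^ (2 * (k + 1))
        = ∑ q ∈ r, (∑ q' ∈ r', (∑ t0, B t0 p q') * (∑ t1, B t1 q q')) *
            (walkMass r r' M k q * X ^ (2 * k)) := by
          simp only [walkMass]
          rw [Finset.sum_mul]
          refine Finset.sum_congr rfl fun q _ => ?_
          have : ∑ q' ∈ r', (∑ t0, B t0 p q') * (∑ t1, B t1 q q') =
              (∑ q' ∈ r', M p q' * M q q') * X ^ 2 := by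
            rw [Finset.sum_mul]
            refine Finset.sum_congr rfl fun q' _ => ?_
            simp only [hM]
            field_simp
          rw [this]
          ring
      _ ≤ ∑ q ∈ r, (∑ q' ∈ r', (∑ t0, B t0 p q') * (∑ t1, B t1 q q')) *
            ((x * x') ^ k * ∑ s, ∑ t, if Reach r r' B k q s t then (1 : ℝ) else 0) := by
          refine Finset.sum_le_sum fun q hq => ?_
          refine mul_le_mul_of_nonneg_left ?_ ?_
          · rw [← hR]; exact ih q hq
          · exact Finset.sum_nonneg fun q' _ => mul_nonneg
              (Finset.sum_nonneg fun t _ => hB _ _ _) (Finset.sum_nonneg fun t _ => hB _ _ _)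
      _ = (x * x') ^ k * ∑ t0, ∑ t1, ∑ s, ∑ t, ∑ q ∈ r, ∑ q' ∈ r', B t0 p q' * B t1 q q' *
            (if Reach r r' B k q s t then (1 : ℝ) else 0) := by
          have e1 : ∀ t0 t1, ∑ s : Fin k → D, ∑ t : Fin k → D, ∑ q ∈ r, ∑ q' ∈ r',
              B t0 p q' * B t1 q q' * (if Reach r r' B k q s t then (1 : ℝ) else 0) =
              ∑ q ∈ r, ∑ q' ∈ r', B t0 p q' * B t1 q q' *
                ∑ s, ∑ t, (if Reach r r' B k q s t then (1 : ℝ) else 0) := by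
            intro t0 t1
            simp_rw [Finset.mul_sum]
            calc _ = ∑ s : Fin k → D, ∑ q ∈ r, ∑ t : Fin k → D, ∑ q' ∈ r',
                  B t0 p q' * B t1 q q' * (if Reach r r' B k q s t then (1 : ℝ) else 0) :=
                  Finset.sum_congr rfl fun s _ => Finset.sum_comm
              _ = ∑ q ∈ r, ∑ s : Fin k → D, ∑ t : Fin k → D, ∑ q' ∈ r',
                  B t0 p q' * B t1 q q' * (if Reach r r' B k q s t then (1 : ℝ) else 0) :=
                  Finset.sum_comm
              _ = ∑ q ∈ r, ∑ s : Fin k → D, ∑ q' ∈ r', ∑ t : Fin k → D,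
                  B t0 p q' * B t1 q q' * (if Reach r r' B k q s t then (1 : ℝ) else 0) :=
                  Finset.sum_congr rfl fun q _ => Finset.sum_congr rfl fun s _ => Finset.sum_comm
              _ = _ := Finset.sum_congr rfl fun q _ => Finset.sum_comm
          simp_rw [e1]
          set N : ι → ℝ := fun q => ∑ s, ∑ t, (if Reach r r' B k q s t then (1 : ℝ) else 0)
          have e2 : ∑ t0, ∑ t1, ∑ q ∈ r, ∑ q' ∈ r', B t0 p q' * B t1 q q' * N q =
              ∑ q ∈ r, (∑ q' ∈ r', (∑ t0, B t0 p q') * (∑ t1, B t1 q q')) * N q := by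
            simp_rw [Finset.sum_mul_sum, Finset.sum_mul]
            calc _ = ∑ t0, ∑ q ∈ r, ∑ t1, ∑ q' ∈ r', B t0 p q' * B t1 q q' * N q :=
                  Finset.sum_congr rfl fun t0 _ => Finset.sum_comm
              _ = ∑ q ∈ r, ∑ t0, ∑ t1, ∑ q' ∈ r', B t0 p q' * B t1 q q' * N q :=
                  Finset.sum_comm
              _ = ∑ q ∈ r, ∑ t0, ∑ q' ∈ r', ∑ t1, B t0 p q' * B t1 q q' * N q :=
                  Finset.sum_congr rfl fun q _ => Finset.sum_congr rfl fun t0 _ =>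
                    Finset.sum_comm
              _ = _ := Finset.sum_congr rfl fun q _ => Finset.sum_comm
          rw [e2, Finset.mul_sum]
          exact Finset.sum_congr rfl fun q _ => by ring
      _ ≤ (x * x') ^ k * ∑ t0, ∑ t1, ∑ s, ∑ t, x * x' *
            (if Reach r r' B (k + 1) p (Fin.cons t0 s) (Fin.cons t1 t) then 1 else 0) := by
          gcongr
          exact hinner _ _ _ _
      _ = (x * x') ^ (k + 1) * ∑ t0, ∑ t1, ∑ s, ∑ t,
            (if Reach r r' B (k + 1) p (Fin.cons t0 s) (Fin.cons t1 t) then (1 : ℝ) else 0) := by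
          simp_rw [← Finset.mul_sum]
          ring
      _ = _ := by
          congr 1
          rw [Finset.card_filter, ← Finset.univ_product_univ, Finset.sum_product]
          push_cast
          rw [hcons]
          refine Finset.sum_congr rfl fun t0 _ => ?_
          rw [Finset.sum_comm]
          refine Finset.sum_congr rfl fun s _ => ?_
          rw [hcons]

open scoped Classical in
/-- Sidorenko-type lower bound: some starting point admits many alternating walks. -/
lemma exists_many_reach [Fintype D] [Nonempty D] (r r' : Finset ι) (hr : r.Nonempty)
    (hr' : r'.Nonempty) {B : D → ι → ι → ℝ} (hB : ∀ t p q, 0 ≤ B t p q) {φ c Λ : ℝ}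
    (hφ : 0 < φ) (hc : 0 ≤ c) (hΛ : 0 < Λ)
    (hrow : ∀ t, ∀ p ∈ r, ∑ q' ∈ r', B t p q' ≤ Λ * r'.card / φ)
    (hcol : ∀ t, ∀ q' ∈ r', ∑ q ∈ r, B t q q' ≤ Λ * r.card / φ)
    (hlow : c * r.card * r'.card / φ ≤ (∑ t, ∑ p ∈ r, ∑ q ∈ r', B t p q) / Fintype.card D)
    (a : ℕ) :
    ∃ p ∈ r, (c / Λ) ^ (2 * 2 ^ a) * (Fintype.card D : ℝ) ^ (2 * 2 ^ a) ≤
      ((Finset.univ.filter fun st : (Fin (2 ^ a) → D) × (Fin (2 ^ a) → D) =>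
        Reach r r' B (2 ^ a) p st.1 st.2).card : ℝ) := by
  have hr0 : (0 : ℝ) < r.card := by exact_mod_cast Finset.card_pos.2 hr
  have hr0' : (0 : ℝ) < r'.card := by exact_mod_cast Finset.card_pos.2 hr'
  set θ : ℝ := r.card * r'.card / φ ^ 2 with hθ
  have hθ0 : 0 < θ := by positivity
  set X : ℝ := (Fintype.card D : ℝ) with hX
  have h1 := le_sum_walkMass r r' hr (M := fun p q => (∑ t, B t p q) / X) hφ hc (by
    refine hlow.trans (le_of_eq ?_)
    simp_rw [← Finset.sum_div]
    congr 1
    rw [Finset.sum_comm]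
    refine Finset.sum_congr rfl fun p _ => Finset.sum_comm) a
  by_contra! hcon
  have h2 : ∀ p ∈ r, walkMass r r' (fun p q => (∑ t, B t p q) / X) (2 ^ a) p * X ^ (2 * 2 ^ a) <
      (c ^ 2 * θ) ^ 2 ^ a * X ^ (2 * 2 ^ a) := by
    intro p hp
    have h3 := walkMass_le r r' hB (x := Λ * r.card / φ) (x' := Λ * r'.card / φ)
      (by positivity) (by positivity) hrow hcol (2 ^ a) p hp
    have h4 : Λ * r.card / φ * (Λ * r'.card / φ) = Λ ^ 2 * θ := by
      rw [hθ]; field_simp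
    rw [h4] at h3
    refine h3.trans_lt ?_
    refine (mul_lt_mul_of_pos_left (hcon p hp) (by positivity)).trans_le (le_of_eq ?_)
    rw [pow_mul (c / Λ), ← mul_assoc, ← mul_pow]
    congr 2
    field_simp
  have h5 := Finset.sum_lt_sum_of_nonempty hr h2
  rw [← Finset.sum_mul, Finset.sum_const, nsmul_eq_mul] at h5
  have hX0 : 0 < X := by rw [hX]; exact_mod_cast Fintype.card_pos
  have h6 := mul_le_mul_of_nonneg_right h1 (show 0 ≤ X ^ (2 * 2 ^ a) by positivity)
  linarith

end Walk

section Kernel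

variable {ι α β γ : Type*} [Fintype ι]

open scoped Classical in
/-- The transition kernel joining far-apart points of a common class of `x`, restricted to points
of moderate likelihood. -/
def farKernel (x : ι → α) (y : ι → β) (z : ι → γ) (b : ι → ℤ) (lam : ℝ) (p q : ι) : ℝ :=
  if x q = x p ∧ 2 ≤ |b q - b p| ∧ Real.log (likelihood x y z p) ≤ lam ∧
    Real.log (likelihood x y z q) ≤ lam then (classCard x p)⁻¹ else 0

lemma farKernel_nonneg (x : ι → α) (y : ι → β) (z : ι → γ) (b : ι → ℤ) (lam : ℝ) (p q : ι) :
    0 ≤ farKernel x y z b lam p q := by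
  unfold farKernel
  split_ifs
  · exact inv_nonneg.2 (classCard_pos x p).le
  · exact le_rfl

lemma farKernel_symm (x : ι → α) (y : ι → β) (z : ι → γ) (b : ι → ℤ) (lam : ℝ) (p q : ι) :
    farKernel x y z b lam p q = farKernel x y z b lam q p := by
  unfold farKernel
  by_cases h : x q = x p
  · rw [classCard_congr h, abs_sub_comm]
    simp only [h, true_and]
    congr 2
    exact propext (by tauto)
  · rw [if_neg (by tauto), if_neg (by intro h'; exact h h'.1.symm)]

lemma of_farKernel_pos {x : ι → α} {y : ι → β} {z : ι → γ} {b : ι → ℤ} {lam : ℝ} {p q : ι}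
    (h : 0 < farKernel x y z b lam p q) : x q = x p ∧ 2 ≤ |b q - b p| := by
  unfold farKernel at h
  split_ifs at h with h'
  · exact ⟨h'.1, h'.2.1⟩
  · exact absurd h (lt_irrefl _)

open scoped Classical in
lemma sum_farKernel_ge (x : ι → α) (y : ι → β) (z : ι → γ) (b : ι → ℤ) (lam : ℝ) :
    ∑ p, farFraction x b p -
      2 * ((Finset.univ.filter fun p => lam < Real.log (likelihood x y z p)).card : ℝ) ≤
      ∑ p, ∑ q, farKernel x y z b lam p q := by
  let bad : ι → ℝ := fun p => if lam < Real.log (likelihood x y z p) then 1 else 0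
  have hbad : ((Finset.univ.filter fun p => lam < Real.log (likelihood x y z p)).card : ℝ) =
      ∑ p, bad p := by simp [bad]
  have hbad0 : ∀ p, 0 ≤ bad p := fun p => by simp only [bad]; split_ifs <;> norm_num
  have h1 : ∑ p, ∑ q, (if x q = x p then (classCard x p)⁻¹ * bad p else 0) = ∑ p, bad p := by
    refine Finset.sum_congr rfl fun p _ => ?_
    have : ∀ q, (if x q = x p then (classCard x p)⁻¹ * bad p else 0) =
        (if x q = x p then (1 : ℝ) else 0) * ((classCard x p)⁻¹ * bad p) := fun q => by
      split_ifs <;> simp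
    simp_rw [this]
    rw [← Finset.sum_mul, ← classCard_eq_sum, ← mul_assoc,
      mul_inv_cancel₀ (classCard_pos x p).ne', one_mul]
  have h2 : ∑ p, ∑ q, (if x q = x p then (classCard x p)⁻¹ * bad q else 0) = ∑ p, bad p := by
    rw [← h1, Finset.sum_comm]
    refine Finset.sum_congr rfl fun p _ => Finset.sum_congr rfl fun q _ => ?_
    by_cases h : x p = x q
    · rw [if_pos h, if_pos h.symm, classCard_congr h]
    · rw [if_neg h, if_neg (Ne.symm h)]
  have h3 : ∀ p, farFraction x b p = ∑ q, (if x q = x p ∧ 2 ≤ |b q - b p| then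
      (classCard x p)⁻¹ else 0) := by
    intro p
    unfold farFraction
    rw [← Finset.sum_filter, Finset.sum_const, nsmul_eq_mul, div_eq_mul_inv]
  rw [hbad, two_mul]
  nth_rewrite 1 [← h1]
  rw [← h2]
  simp_rw [h3]
  rw [← sub_sub, ← Finset.sum_sub_distrib, ← Finset.sum_sub_distrib]
  refine Finset.sum_le_sum fun p _ => ?_
  rw [← Finset.sum_sub_distrib, ← Finset.sum_sub_distrib]
  refine Finset.sum_le_sum fun q _ => ?_
  have hc := inv_nonneg.2 (classCard_pos x p).le
  unfold farKernel
  by_cases hx : x q = x p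
  · simp only [hx, true_and, if_true]
    by_cases hf : 2 ≤ |b q - b p|
    · simp only [hf, true_and, if_true]
      by_cases hp : Real.log (likelihood x y z p) ≤ lam
      · by_cases hq : Real.log (likelihood x y z q) ≤ lam
        · rw [if_pos ⟨hp, hq⟩]
          nlinarith [mul_nonneg hc (hbad0 p), mul_nonneg hc (hbad0 q)]
        · rw [if_neg (by tauto)]
          have : bad q = 1 := if_pos (not_le.1 hq)
          rw [this]
          nlinarith [mul_nonneg hc (hbad0 p)]
      · rw [if_neg (by tauto)]
        have : bad p = 1 := if_pos (not_le.1 hp)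
        rw [this]
        nlinarith [mul_nonneg hc (hbad0 q)]
    · simp only [hf, false_and, if_false]
      nlinarith [mul_nonneg hc (hbad0 p), mul_nonneg hc (hbad0 q)]
  · simp [hx]

open scoped Classical in
lemma sum_farKernel_row_le {x : ι → α} {y : ι → β} {z : ι → γ} (b : ι → ℤ) (lam : ℝ)
    (hx : ∀ p q, x p = x q → z p = z q) (p p' : ι) :
    ∑ q ∈ Finset.univ.filter (fun q => y q = y p'), farKernel x y z b lam p q ≤
      Real.exp lam * classCard y p' / classCard z p := by
  by_cases hex : ∃ q, y q = y p' ∧ farKernel x y z b lam p q ≠ 0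
  · obtain ⟨q0, hq0, hK⟩ := hex
    have hcond : x q0 = x p ∧ 2 ≤ |b q0 - b p| ∧ Real.log (likelihood x y z p) ≤ lam ∧
        Real.log (likelihood x y z q0) ≤ lam := by
      by_contra h
      exact hK (if_neg h)
    calc ∑ q ∈ Finset.univ.filter (fun q => y q = y p'), farKernel x y z b lam p q
        ≤ ∑ q ∈ Finset.univ.filter (fun q => y q = y p'),
            (if (x q, y q) = (x q0, y q0) then (classCard x q0)⁻¹ else 0) := by
          refine Finset.sum_le_sum fun q hq => ?_
          have hyq := (Finset.mem_filter.1 hq).2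
          unfold farKernel
          split_ifs with h1 h2 h2
          · rw [classCard_congr hcond.1]
          · exact absurd (by rw [h1.1, hcond.1, hyq, hq0]) h2
          · exact inv_nonneg.2 (classCard_pos x q0).le
          · exact le_rfl
      _ ≤ ∑ q, (if (x q, y q) = (x q0, y q0) then (classCard x q0)⁻¹ else 0) := by
          refine Finset.sum_le_sum_of_subset_of_nonneg (Finset.filter_subset _ _) fun q _ _ => ?_
          split_ifs
          · exact inv_nonneg.2 (classCard_pos x q0).le
          · exact le_rfl
      _ = classCard (fun q => (x q, y q)) q0 * (classCard x q0)⁻¹ := by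
          rw [classCard_eq_sum (fun q => (x q, y q)), Finset.sum_mul]
          refine Finset.sum_congr rfl fun q _ => ?_
          by_cases h : (x q, y q) = (x q0, y q0) <;> simp only [h, if_true, if_false] <;> simp
      _ ≤ _ := by
          have h1 : likelihood x y z q0 ≤ Real.exp lam := by
            rw [← Real.log_le_iff_le_exp (likelihood_pos x y z q0)]
            exact hcond.2.2.2
          have hzc : classCard z p = classCard z q0 := classCard_congr (hx _ _ hcond.1.symm)
          have hyc : classCard y p' = classCard y q0 := classCard_congr hq0.symm
          rw [hzc, hyc]
          unfold likelihood at h1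
          have hx0 := classCard_pos x q0
          have hy0 := classCard_pos y q0
          have hz0 := classCard_pos z q0
          rw [div_le_iff₀ (mul_pos hx0 hy0)] at h1
          rw [le_div_iff₀ hz0, ← div_eq_mul_inv, div_mul_eq_mul_div, div_le_iff₀ hx0]
          linarith
  · push Not at hex
    rw [Finset.sum_eq_zero fun q hq => hex q (Finset.mem_filter.1 hq).2]
    exact div_nonneg (mul_nonneg (Real.exp_pos _).le (classCard_pos y p').le)
      (classCard_pos z p).le

open scoped Classical in
/-- Block averaging: a kernel supported on pairs with equal `z`-label and large total mass has
large mass on some product of two `y`-classes. -/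
lemma exists_block_mass {y : ι → β} {z : ι → γ} (M : ι → ι → ℝ)
    (hy : ∀ p q, y p = y q → z p = z q)
    (hM : ∀ p q, z p ≠ z q → M p q = 0) {c : ℝ} (hcard : 0 < Fintype.card ι)
    (hsum : c * Fintype.card ι ≤ ∑ p, ∑ q, M p q) :
    ∃ p p', z p = z p' ∧ c * classCard y p * classCard y p' / classCard z p ≤
      ∑ q ∈ Finset.univ.filter (fun q => y q = y p),
        ∑ q' ∈ Finset.univ.filter (fun q' => y q' = y p'), M q q' := by
  by_contra! hcon
  have hpair : ∀ q, ∑ p, (if y q = y p then (classCard y p)⁻¹ else 0) = 1 := by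
    intro q
    have : ∀ p, (if y q = y p then (classCard y p)⁻¹ else 0) =
        (if y p = y q then (1 : ℝ) else 0) * (classCard y q)⁻¹ := by
      intro p
      by_cases h : y q = y p
      · rw [if_pos h, if_pos h.symm, classCard_congr h, one_mul]
      · rw [if_neg h, if_neg (Ne.symm h), zero_mul]
    simp_rw [this]
    rw [← Finset.sum_mul, ← classCard_eq_sum, mul_inv_cancel₀ (classCard_pos y q).ne']
  have hS : ∑ q, ∑ q', M q q' = ∑ p, ∑ p', (classCard y p)⁻¹ * (classCard y p')⁻¹ *
      ∑ q ∈ Finset.univ.filter (fun q => y q = y p),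
        ∑ q' ∈ Finset.univ.filter (fun q' => y q' = y p'), M q q' := by
    calc ∑ q, ∑ q', M q q' = ∑ q, ∑ q', ∑ p, ∑ p',
          ((if y q = y p then (classCard y p)⁻¹ else 0) *
            (if y q' = y p' then (classCard y p')⁻¹ else 0)) * M q q' := by
          refine Finset.sum_congr rfl fun q _ => Finset.sum_congr rfl fun q' _ => ?_
          simp_rw [← Finset.sum_mul]
          rw [← Finset.sum_mul_sum, hpair, hpair, one_mul, one_mul]
      _ = ∑ q, ∑ p, ∑ q', ∑ p', ((if y q = y p then (classCard y p)⁻¹ else 0) *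
            (if y q' = y p' then (classCard y p')⁻¹ else 0)) * M q q' :=
          Finset.sum_congr rfl fun q _ => Finset.sum_comm
      _ = ∑ p, ∑ q, ∑ q', ∑ p', ((if y q = y p then (classCard y p)⁻¹ else 0) *
            (if y q' = y p' then (classCard y p')⁻¹ else 0)) * M q q' := Finset.sum_comm
      _ = ∑ p, ∑ q, ∑ p', ∑ q', ((if y q = y p then (classCard y p)⁻¹ else 0) *
            (if y q' = y p' then (classCard y p')⁻¹ else 0)) * M q q' :=
          Finset.sum_congr rfl fun p _ => Finset.sum_congr rfl fun q _ => Finset.sum_comm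
      _ = ∑ p, ∑ p', ∑ q, ∑ q', ((if y q = y p then (classCard y p)⁻¹ else 0) *
            (if y q' = y p' then (classCard y p')⁻¹ else 0)) * M q q' :=
          Finset.sum_congr rfl fun p _ => Finset.sum_comm
      _ = _ := by
          refine Finset.sum_congr rfl fun p _ => Finset.sum_congr rfl fun p' _ => ?_
          rw [Finset.sum_filter, Finset.mul_sum]
          refine Finset.sum_congr rfl fun q _ => ?_
          rw [Finset.sum_filter]
          split_ifs with h
          · rw [Finset.mul_sum]
            refine Finset.sum_congr rfl fun q' _ => ?_
            split_ifs <;> simp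
          · simp
  have hle : ∀ p p', (classCard y p)⁻¹ * (classCard y p')⁻¹ *
      ∑ q ∈ Finset.univ.filter (fun q => y q = y p),
        ∑ q' ∈ Finset.univ.filter (fun q' => y q' = y p'), M q q' ≤
      (if z p' = z p then (1 : ℝ) else 0) * (c * (classCard z p)⁻¹) ∧
      (z p' = z p → (classCard y p)⁻¹ * (classCard y p')⁻¹ *
      ∑ q ∈ Finset.univ.filter (fun q => y q = y p),
        ∑ q' ∈ Finset.univ.filter (fun q' => y q' = y p'), M q q' <
      (if z p' = z p then (1 : ℝ) else 0) * (c * (classCard z p)⁻¹)) := by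
    intro p p'
    have hp := classCard_pos y p
    have hp' := classCard_pos y p'
    by_cases h : z p' = z p
    · have h1 := hcon p p' h.symm
      have h2 : (classCard y p)⁻¹ * (classCard y p')⁻¹ *
          (c * classCard y p * classCard y p' / classCard z p) = c * (classCard z p)⁻¹ := by
        field_simp
      have h3 := mul_lt_mul_of_pos_left h1 (mul_pos (inv_pos.2 hp) (inv_pos.2 hp'))
      rw [h2] at h3
      rw [if_pos h, one_mul]
      exact ⟨h3.le, fun _ => h3⟩
    · refine ⟨?_, fun h' => absurd h' h⟩
      rw [if_neg h, zero_mul]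
      refine le_of_eq ?_
      rw [Finset.sum_eq_zero, mul_zero]
      intro q hq
      refine Finset.sum_eq_zero fun q' hq' => hM _ _ ?_
      rw [hy _ _ (Finset.mem_filter.1 hq).2, hy _ _ (Finset.mem_filter.1 hq').2]
      exact Ne.symm h
  obtain ⟨p0⟩ := Fintype.card_pos_iff.1 hcard
  have hlt : ∑ q, ∑ q', M q q' < ∑ p, ∑ p', (if z p' = z p then (1 : ℝ) else 0) *
      (c * (classCard z p)⁻¹) := by
    rw [hS]
    refine Finset.sum_lt_sum (fun p _ => Finset.sum_le_sum fun p' _ => (hle p p').1)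
      ⟨p0, Finset.mem_univ _, Finset.sum_lt_sum (fun p' _ => (hle p0 p').1)
        ⟨p0, Finset.mem_univ _, (hle p0 p0).2 rfl⟩⟩
  have heq : ∑ p, ∑ p', (if z p' = z p then (1 : ℝ) else 0) * (c * (classCard z p)⁻¹) =
      c * Fintype.card ι := by
    calc _ = ∑ p : ι, c := by
          refine Finset.sum_congr rfl fun p _ => ?_
          rw [← Finset.sum_mul, ← classCard_eq_sum]
          have := (classCard_pos z p).ne'
          field_simp
      _ = _ := by simp [mul_comm]
  linarith

open scoped Classical in
/-- If on average the labels `x t` and `y` are nearly independent given `z`, and `x t`-classes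
contain many far-apart pairs, then there are two `y`-classes joined by many walks. -/
lemma exists_classes_many_reach {D : Type*} [Fintype D] [Nonempty D]
    {x : D → ι → α} {y : ι → β} {z : ι → γ} {b : ι → ℤ} (hcard : 0 < Fintype.card ι)
    (hx : ∀ t p q, x t p = x t q → z p = z q) (hy : ∀ p q, y p = y q → z p = z q)
    {c I lam : ℝ} (hc : 0 < c) (hlam : 0 < lam) (hIlam : 8 * (I + 1) ≤ c * lam)
    (hfar : c / 2 * Fintype.card ι * Fintype.card D ≤ ∑ t, ∑ p, farFraction (x t) b p)
    (hdef : ∑ t, (labelEntropy (fun q => (x t q, y q)) + labelEntropy z - labelEntropy (x t) -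
      labelEntropy y) ≤ I * Fintype.card ι * Fintype.card D) (a : ℕ) :
    ∃ (p0 p1 : ι), 2 ≤ |b p1 - b p0| ∧ ∃ p, y p = y p0 ∧
      (c / 4 / Real.exp lam) ^ (2 * 2 ^ a) * (Fintype.card D : ℝ) ^ (2 * 2 ^ a) ≤
      ((Finset.univ.filter fun st : (Fin (2 ^ a) → D) × (Fin (2 ^ a) → D) =>
        Reach (Finset.univ.filter fun q => y q = y p0) (Finset.univ.filter fun q => y q = y p1)
          (fun t => farKernel (x t) y z b lam) (2 ^ a) p st.1 st.2).card : ℝ) := by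
  have hD : (0 : ℝ) < Fintype.card D := by exact_mod_cast Fintype.card_pos
  have hN : (0 : ℝ) < Fintype.card ι := by exact_mod_cast hcard
  set B : D → ι → ι → ℝ := fun t => farKernel (x t) y z b lam with hBdef
  have hbad : lam * ∑ t, ((Finset.univ.filter fun p =>
      lam < Real.log (likelihood (x t) y z p)).card : ℝ) ≤
      (I + 1) * Fintype.card ι * Fintype.card D := by
    rw [Finset.mul_sum]
    calc _ ≤ ∑ t, (labelEntropy (fun q => (x t q, y q)) + labelEntropy z - labelEntropy (x t) -
          labelEntropy y + Fintype.card ι) :=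
          Finset.sum_le_sum fun t _ => card_large_likelihood (hx t) hy lam
      _ ≤ _ := by
          rw [Finset.sum_add_distrib]
          simp only [Finset.sum_const, Finset.card_univ, nsmul_eq_mul]
          linarith
  have hbad' : 2 * ∑ t, ((Finset.univ.filter fun p =>
      lam < Real.log (likelihood (x t) y z p)).card : ℝ) ≤
      c / 4 * Fintype.card ι * Fintype.card D := by
    refine le_of_mul_le_mul_left ?_ hlam
    have := mul_le_mul_of_nonneg_right hIlam (mul_pos hN hD).le
    nlinarith
  have htot : c / 4 * Fintype.card ι * Fintype.card D ≤ ∑ t, ∑ p, ∑ q, B t p q := by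
    have h1 := Finset.sum_le_sum (s := Finset.univ)
      fun t _ => sum_farKernel_ge (x t) y z b lam
    rw [Finset.sum_sub_distrib, ← Finset.mul_sum] at h1
    linarith
  obtain ⟨p, p', hzz, hblock⟩ := exists_block_mass
    (M := fun p q => (∑ t, B t p q) / Fintype.card D) hy (c := c / 4) (by
      intro p q hpq
      rw [Finset.sum_eq_zero, zero_div]
      intro t _
      refine if_neg fun h => hpq ?_
      exact (hx t _ _ h.1).symm) hcard (by
      simp_rw [← Finset.sum_div]
      rw [le_div_iff₀ hD]
      refine htot.trans (le_of_eq ?_)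
      rw [Finset.sum_comm]
      refine Finset.sum_congr rfl fun p _ => ?_
      rw [Finset.sum_comm])
  have hblock' : c / 4 * classCard y p * classCard y p' / classCard z p ≤
      (∑ t, ∑ q ∈ Finset.univ.filter (fun q => y q = y p),
        ∑ q' ∈ Finset.univ.filter (fun q' => y q' = y p'), B t q q') / Fintype.card D := by
    refine hblock.trans (le_of_eq ?_)
    simp_rw [← Finset.sum_div]
    congr 1
    symm
    rw [Finset.sum_comm]
    refine Finset.sum_congr rfl fun p _ => ?_
    rw [Finset.sum_comm]
  have hpos : 0 < c / 4 * classCard y p * classCard y p' / classCard z p :=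
    div_pos (mul_pos (mul_pos (by linarith) (classCard_pos y p)) (classCard_pos y p'))
      (classCard_pos z p)
  have hex : ∃ t, ∃ q, y q = y p ∧ ∃ q', y q' = y p' ∧ 0 < B t q q' := by
    by_contra! hcon
    have : (∑ t, ∑ q ∈ Finset.univ.filter (fun q => y q = y p),
        ∑ q' ∈ Finset.univ.filter (fun q' => y q' = y p'), B t q q') ≤ 0 :=
      Finset.sum_nonpos fun t _ => Finset.sum_nonpos fun q hq => Finset.sum_nonpos fun q' hq' =>
        hcon t q (Finset.mem_filter.1 hq).2 q' (Finset.mem_filter.1 hq').2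
    have h2 := div_nonpos_of_nonpos_of_nonneg this hD.le
    linarith
  obtain ⟨t, q, hq, q', hq', hBpos⟩ := hex
  refine ⟨q, q', (of_farKernel_pos hBpos).2, ?_⟩
  have hzc : ∀ {v w}, z v = z w → classCard z v = classCard z w := fun h => classCard_congr h
  obtain ⟨v, hv, hval⟩ := exists_many_reach (Finset.univ.filter fun v => y v = y q)
    (Finset.univ.filter fun v => y v = y q') ⟨q, by simp⟩ ⟨q', by simp⟩ (B := B)
    (fun t p q => farKernel_nonneg _ _ _ _ _ _ _) (φ := classCard z p) (c := c / 4)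
    (Λ := Real.exp lam) (classCard_pos z p) (by linarith) (Real.exp_pos _) (by
      intro t v hv
      have h1 := sum_farKernel_row_le (y := y) b lam (hx t) v q'
      have h2 : z v = z p := hy _ _ ((Finset.mem_filter.1 hv).2.trans hq)
      rw [hzc h2] at h1
      exact h1) (by
      intro t v hv
      have h1 := sum_farKernel_row_le (y := y) b lam (hx t) v q
      have h2 : z v = z p := (hy _ _ ((Finset.mem_filter.1 hv).2.trans hq')).trans hzz.symm
      rw [hzc h2] at h1
      refine le_trans (le_of_eq ?_) h1
      exact Finset.sum_congr rfl fun w _ => farKernel_symm _ _ _ _ _ _ _) (by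
      rw [hq, hq']
      exact hblock') a
  exact ⟨v, (Finset.mem_filter.1 hv).2, hval⟩

end Kernel

section SpreadTree

/-- The subtree of a binary tree of integers determined by its first bit. -/
def subtree {m : ℕ} (u : (Fin (m + 1) → Bool) → ℤ) (b : Bool) : (Fin m → Bool) → ℤ :=
  fun w => u (Fin.cons b w)

/-- A labelled binary tree of depth `m` and rank `n`: at each level, the two subtrees either
coincide, or they are separated by a distance comparable with a power of two; the latter
(branching) happens exactly `n` times along each path. -/
def IsSpreadTree (κ L : ℕ) : (m n : ℕ) → ((Fin m → Bool) → ℤ) → Prop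
  | 0, n, _ => n = 0
  | m + 1, n, u => (∀ v w, |u v - u w| ≤ 2 ^ (L * (m + 1))) ∧
      ((subtree u false = subtree u true ∧ IsSpreadTree κ L m n (subtree u true)) ∨
        ∃ n', n = n' + 1 ∧ (∀ b, IsSpreadTree κ L m n' (subtree u b)) ∧
          ∃ j ≤ L, 32 * κ ≤ 2 ^ j ∧ ∃ b : Bool, ∀ x y,
            2 ^ j * 2 ^ (L * m) ≤ subtree u b y - subtree u (!b) x ∧
            subtree u b y - subtree u (!b) x ≤ 8 * (2 ^ j * 2 ^ (L * m)))

lemma IsSpreadTree.abs_sub_le {κ L m n : ℕ} {u : (Fin m → Bool) → ℤ}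
    (h : IsSpreadTree κ L m n u) (v w : Fin m → Bool) : |u v - u w| ≤ 2 ^ (L * m) := by
  cases m with
  | zero => simp [Subsingleton.elim v w]
  | succ m => exact h.1 v w

lemma IsSpreadTree.neg {κ L m n : ℕ} {u : (Fin m → Bool) → ℤ}
    (h : IsSpreadTree κ L m n u) : IsSpreadTree κ L m n (fun w => -u w) := by
  induction m generalizing n with
  | zero => exact h
  | succ m ih =>
    refine ⟨fun v w => ?_, ?_⟩
    · have := h.1 w v
      rwa [neg_sub_neg]
    · rcases h.2 with ⟨h1, h2⟩ | ⟨n', hn, h1, j, hj, hκ, b, hb⟩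
      · refine Or.inl ⟨?_, ih h2⟩
        funext w
        exact congrArg Neg.neg (congrFun h1 w)
      · refine Or.inr ⟨n', hn, fun b => ih (h1 b), j, hj, hκ, !b, fun x y => ?_⟩
        have := hb y x
        simp only [subtree, Bool.not_not] at this ⊢
        constructor <;> linarith [this.1, this.2]

lemma isSpreadTree_const (κ L m : ℕ) (z : ℤ) : IsSpreadTree κ L m 0 (fun _ => z) := by
  induction m with
  | zero => rfl
  | succ m ih => exact ⟨fun v w => by simp, Or.inl ⟨rfl, ih⟩⟩

/-- Any large set of integers in an interval of length `2 ^ (L * m)` contains a spread tree of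
large rank. -/
lemma exists_isSpreadTree {κ : ℕ} (hκ : 1 ≤ κ) (L m n : ℕ) (W : Finset ℤ) (c : ℤ)
    (hW : ∀ z ∈ W, z / 2 ^ (L * m) = c)
    (hcard : (2 * (64 * κ + 1)) ^ m * 2 ^ (L * n) < W.card) :
    ∃ u : (Fin m → Bool) → ℤ, IsSpreadTree κ L m n u ∧ ∀ w, u w ∈ W := by
  induction m generalizing n W c with
  | zero =>
    exfalso
    have h1 : W.card ≤ 1 := Finset.card_le_one.2 fun a ha b hb => by
      have h1 := hW a ha
      have h2 := hW b hb
      simp at h1 h2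
      rw [h1, h2]
    have h2 : 1 ≤ 2 ^ (L * n) := Nat.one_le_two_pow
    simp only [pow_zero, one_mul] at hcard
    omega
  | succ m ih =>
    classical
    cases n with
    | zero =>
      obtain ⟨z, hz⟩ := Finset.card_pos.1 (lt_of_le_of_lt (Nat.zero_le _) hcard)
      exact ⟨fun _ => z, isSpreadTree_const κ L _ z, fun _ => hz⟩
    | succ n =>
      set M : ℤ := 2 ^ (L * m) with hM
      have hM0 : 0 < M := by positivity
      have hML : (2 : ℤ) ^ (L * (m + 1)) = M * 2 ^ L := by rw [hM, ← pow_add]; ring_nf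
      set Q : ℕ := 64 * κ + 1 with hQ
      have hdiam : ∀ z ∈ W, ∀ z' ∈ W, |z - z'| ≤ 2 ^ (L * (m + 1)) := by
        intro z hz z' hz'
        have h1 := hW z hz
        have h2 := hW z' hz'
        have hpos : (0 : ℤ) < 2 ^ (L * (m + 1)) := by positivity
        have e1 := Int.emod_add_mul_ediv z (2 ^ (L * (m + 1)))
        have e2 := Int.emod_add_mul_ediv z' (2 ^ (L * (m + 1)))
        have e3 := Int.emod_nonneg z hpos.ne'
        have e4 := Int.emod_nonneg z' hpos.ne'
        have e5 := Int.emod_lt_of_pos z hpos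
        have e6 := Int.emod_lt_of_pos z' hpos
        rw [h1] at e1
        rw [h2] at e2
        rw [abs_le]
        constructor <;> linarith
      have hchild : ∀ z ∈ W, z / M ∈ Finset.Ico (c * 2 ^ L) (c * 2 ^ L + 2 ^ L) := by
        intro z hz
        have h1 := hW z hz
        rw [hML, ← Int.ediv_ediv_of_nonneg hM0.le] at h1
        have hpos : (0 : ℤ) < 2 ^ L := by positivity
        have e1 := Int.emod_add_mul_ediv (z / M) (2 ^ L)
        have e3 := Int.emod_nonneg (z / M) hpos.ne'
        have e5 := Int.emod_lt_of_pos (z / M) hpos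
        rw [h1] at e1
        rw [Finset.mem_Ico]
        constructor <;> linarith
      let ch : ℤ → Finset ℤ := fun y => W.filter fun z => z / M = y
      have hchW : ∀ y, ∀ z ∈ ch y, z ∈ W ∧ z / M = y := fun y z hz => by
        simpa [ch] using hz
      have hsum : W.card = ∑ y ∈ Finset.Ico (c * 2 ^ L) (c * 2 ^ L + 2 ^ L), (ch y).card :=
        Finset.card_eq_sum_card_fiberwise hchild
      set Y := Finset.Ico (c * 2 ^ L) (c * 2 ^ L + 2 ^ L) with hY
      have hYcard : Y.card = 2 ^ L := by
        rw [hY, Int.card_Ico, add_sub_cancel_left]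
        exact_mod_cast Int.toNat_natCast (2 ^ L)
      let fat := Y.filter fun y => (2 * Q) ^ m * 2 ^ (L * n) < (ch y).card
      by_cases hfar : ∃ y ∈ fat, ∃ y' ∈ fat, (Q : ℤ) ≤ y' - y
      · obtain ⟨y, hy, y', hy', hyy⟩ := hfar
        have hy1 := Finset.mem_filter.1 hy
        have hy1' := Finset.mem_filter.1 hy'
        obtain ⟨u, hu, huW⟩ := ih n (ch y) y (fun z hz => (hchW y z hz).2) hy1.2
        obtain ⟨u', hu', huW'⟩ := ih n (ch y') y' (fun z hz => (hchW y' z hz).2) hy1'.2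
        refine ⟨fun w => if w 0 then u' (Fin.tail w) else u (Fin.tail w), ⟨?_, Or.inr
          ⟨n, rfl, ?_, ?_⟩⟩, ?_⟩
        · intro v w
          refine hdiam _ ?_ _ ?_
          · dsimp only; split_ifs
            · exact (hchW _ _ (huW' _)).1
            · exact (hchW _ _ (huW _)).1
          · dsimp only; split_ifs
            · exact (hchW _ _ (huW' _)).1
            · exact (hchW _ _ (huW _)).1
        · rintro (_ | _)
          · exact hu
          · exact hu'
        · obtain ⟨D, hD⟩ := Int.eq_ofNat_of_zero_le (show 0 ≤ y' - y - 1 by omega)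
          have hD1 : 64 * κ ≤ D := by omega
          have hD2 : D + 1 < 2 ^ L := by
            have h1 := (Finset.mem_Ico.1 hy1.1).1
            have h2 := (Finset.mem_Ico.1 hy1'.1).2
            zify
            omega
          have hj1 : 2 ^ Nat.log 2 D ≤ D := Nat.pow_log_le_self 2 (by omega)
          have hj2 : D < 2 ^ (Nat.log 2 D + 1) := Nat.lt_pow_succ_log_self (by norm_num) D
          have hj3 : (2 : ℕ) ^ Nat.log 2 D < 2 ^ L := by omega
          refine ⟨Nat.log 2 D, ((Nat.pow_lt_pow_iff_right (by norm_num)).1 hj3).le, ?_, true,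
            fun x w => ?_⟩
          · rw [pow_succ] at hj2
            omega
          · change 2 ^ Nat.log 2 D * M ≤ u' w - u x ∧ u' w - u x ≤ 8 * (2 ^ Nat.log 2 D * M)
            have a1 := (hchW _ _ (huW x)).2
            have a2 := (hchW _ _ (huW' w)).2
            have b1 := Int.emod_add_mul_ediv (u x) M
            have b2 := Int.emod_add_mul_ediv (u' w) M
            have b3 := Int.emod_nonneg (u x) hM0.ne'
            have b4 := Int.emod_nonneg (u' w) hM0.ne'
            have b5 := Int.emod_lt_of_pos (u x) hM0
            have b6 := Int.emod_lt_of_pos (u' w) hM0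
            rw [a1] at b1
            rw [a2] at b2
            have hy2 : y' = y + D + 1 := by
              have : y' - y - 1 = (D : ℤ) := hD
              linarith
            subst hy2
            have c1 : (2 : ℤ) ^ Nat.log 2 D ≤ D := by exact_mod_cast hj1
            have c2 : (D : ℤ) + 2 ≤ 8 * 2 ^ Nat.log 2 D := by
              have : D + 2 ≤ 8 * 2 ^ Nat.log 2 D := by
                rw [pow_succ] at hj2; omega
              exact_mod_cast this
            have d1 := mul_le_mul_of_nonneg_right c1 hM0.le
            have d2 := mul_le_mul_of_nonneg_right c2 hM0.le
            constructor <;> nlinarith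
        · intro w
          dsimp only; split_ifs
          · exact (hchW _ _ (huW' _)).1
          · exact (hchW _ _ (huW _)).1
      · push Not at hfar
        set F := (2 * Q) ^ m * 2 ^ (L * (n + 1)) with hF
        have hFpos : 0 < F := by positivity
        have hfatcard : fat.card ≤ Q := by
          rcases fat.eq_empty_or_nonempty with he | hne
          · simp [he]
          · have hsub : fat ⊆ Finset.Ico (fat.min' hne) (fat.min' hne + Q) := by
              intro y hy
              have h1 := fat.min'_le y hy
              have h2 := hfar _ (fat.min'_mem hne) y hy
              rw [Finset.mem_Ico]
              constructor <;> linarith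
            simpa using Finset.card_le_card hsub
        have hex : ∃ y ∈ fat, F < (ch y).card := by
          by_contra! hcon
          have h1 : ∑ y ∈ fat, (ch y).card ≤ Q * F :=
            (Finset.sum_le_card_nsmul _ _ _ hcon).trans
              (by simpa using Nat.mul_le_mul_right F hfatcard)
          have h2 : ∑ y ∈ Y.filter (fun y => ¬ (2 * Q) ^ m * 2 ^ (L * n) < (ch y).card),
              (ch y).card ≤ F := by
            calc _ ≤ ∑ y ∈ Y.filter (fun y => ¬ (2 * Q) ^ m * 2 ^ (L * n) < (ch y).card),
                  (2 * Q) ^ m * 2 ^ (L * n) :=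
                  Finset.sum_le_sum fun y hy => not_lt.1 (Finset.mem_filter.1 hy).2
              _ ≤ ∑ y ∈ Y, (2 * Q) ^ m * 2 ^ (L * n) :=
                  Finset.sum_le_sum_of_subset (Finset.filter_subset _ _)
              _ = F := by
                  rw [Finset.sum_const, hYcard, hF, smul_eq_mul]; ring
          have h3 := Finset.sum_filter_add_sum_filter_not Y
            (fun y => (2 * Q) ^ m * 2 ^ (L * n) < (ch y).card) (fun y => (ch y).card)
          rw [← hsum] at h3
          have h4 : (2 * Q) ^ (m + 1) * 2 ^ (L * (n + 1)) = 2 * (Q * F) := by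
            rw [hF]; ring
          have h5 : F ≤ Q * F := Nat.le_mul_of_pos_left F (by omega)
          change ∑ y ∈ fat, (ch y).card + _ = _ at h3
          omega
        obtain ⟨y, hy, hyF⟩ := hex
        obtain ⟨u, hu, huW⟩ := ih (n + 1) (ch y) y (fun z hz => (hchW y z hz).2) hyF
        exact ⟨fun w => u (Fin.tail w), ⟨fun v w => hdiam _ (hchW _ _ (huW _)).1 _
          (hchW _ _ (huW _)).1, Or.inl ⟨rfl, hu⟩⟩, fun w => (hchW _ _ (huW _)).1⟩

/-- A set of integers without long chains of comparable gaps. -/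
def ChainFree (κ K : ℕ) (P : Set ℤ) : Prop :=
  ∀ (D : ℤ) (x : ℕ → ℤ), 32 * (κ : ℤ) ≤ D → (∀ a ≤ K, x a ∈ P) →
    (∀ a < K, D ≤ 2 * (x (a + 1) - x a) ∧ x (a + 1) - x a ≤ 9 * D) → False

lemma card_le_sum_card_subtree {J : Type*} [Fintype J] [DecidableEq J] {m : ℕ}
    (Ω : Finset (J → Fin (m + 1) → Bool)) :
    Ω.card ≤ ∑ ε : J → Bool, (Finset.univ.filter fun w : J → Fin m → Bool =>
      (fun i => Fin.cons (ε i) (w i) : J → Fin (m + 1) → Bool) ∈ Ω).card := by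
  rw [Finset.card_eq_sum_card_fiberwise (f := fun ω (i : J) => ω i 0) (t := Finset.univ)
    (fun _ _ => Finset.mem_coe.2 (Finset.mem_univ _))]
  refine Finset.sum_le_sum fun ε _ => ?_
  have hcons : ∀ ω : J → Fin (m + 1) → Bool, (fun i => ω i 0) = ε →
      (fun i => Fin.cons (ε i) (Fin.tail (ω i)) : J → Fin (m + 1) → Bool) = ω := by
    rintro ω rfl
    funext i
    exact Fin.cons_self_tail (ω i)
  refine Finset.card_le_card_of_injOn (fun ω i => Fin.tail (ω i)) ?_ ?_
  · intro ω hω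
    obtain ⟨h1, h2⟩ := Finset.mem_filter.1 hω
    simp only [Finset.coe_filter, Finset.mem_univ, true_and, Set.mem_ofPred_eq]
    rw [hcons ω h2]
    exact h1
  · intro ω hω ω' hω' h
    rw [← hcons ω (Finset.mem_filter.1 hω).2, ← hcons ω' (Finset.mem_filter.1 hω').2]
    funext i
    rw [show Fin.tail (ω i) = Fin.tail (ω' i) from congrFun h i]

lemma exists_dead_branch {J : Type*} [Fintype J] [DecidableEq J] {L K k' m : ℕ}
    (hk : (L + 1) * K ≤ k') {P : Set ℤ} (hP : ChainFree (Fintype.card J) K P)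
    (u : J → (Fin (m + 1) → Bool) → ℤ)
    (hu : ∀ i b v w, |subtree (u i) b v - subtree (u i) b w| ≤ 2 ^ (L * m))
    (S : Finset J) (hS : k' < S.card)
    (hbr : ∀ i ∈ S, ∃ j ≤ L, 32 * Fintype.card J ≤ 2 ^ j ∧ ∃ b : Bool, ∀ x y,
            2 ^ j * 2 ^ (L * m) ≤ subtree (u i) b y - subtree (u i) (!b) x ∧
            subtree (u i) b y - subtree (u i) (!b) x ≤ 8 * (2 ^ j * 2 ^ (L * m))) :
    ∃ ε : J → Bool, ∀ w : J → Fin m → Bool, ∑ i, u i (Fin.cons (ε i) (w i)) ∉ P := by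
  classical
  by_contra! hcon
  choose! j hjL hjκ hi hgap using hbr
  obtain ⟨j0, -, hj0⟩ := Finset.exists_lt_card_fiber_of_mul_lt_card_of_maps_to
    (s := S) (t := Finset.range (L + 1)) (f := j) (n := K)
    (fun i hi => Finset.mem_range.2 (Nat.lt_succ_of_le (hjL i hi)))
    (by rw [Finset.card_range]; omega)
  obtain ⟨e⟩ : Nonempty (Fin K ↪ {i // i ∈ S.filter fun i => j i = j0}) :=
    Function.Embedding.nonempty_of_card_le (by rw [Fintype.card_coe, Fintype.card_fin]; exact hj0.le)
  have heS : ∀ a, (e a : J) ∈ S ∧ j (e a) = j0 := fun a => Finset.mem_filter.1 (e a).2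
  let ε : ℕ → J → Bool := fun a i => if ∃ b : Fin K, (b : ℕ) < a ∧ (e b : J) = i then hi i
    else !(hi i)
  choose w hw using fun a => hcon (ε a)
  have hκpos : ∀ a : Fin K, 32 * Fintype.card J ≤ 2 ^ j0 := fun a =>
    (heS a).2 ▸ hjκ _ (heS a).1
  set M : ℤ := 2 ^ (L * m) with hM
  have hM0 : 1 ≤ M := one_le_pow₀ (by norm_num)
  rcases Nat.eq_zero_or_pos K with rfl | hK
  · exact hP (32 * Fintype.card J) (fun a => ∑ i, u i (Fin.cons (ε a i) (w a i))) le_rfl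
      (fun a _ => hw a) (by simp)
  · have hκ := hκpos ⟨0, hK⟩
    have hκ' : 32 * (Fintype.card J : ℤ) ≤ 2 ^ j0 := by exact_mod_cast hκ
    refine hP (2 ^ j0 * M) (fun a => ∑ i, u i (Fin.cons (ε a i) (w a i))) ?_
      (fun a _ => hw a) ?_
    · nlinarith
    intro a ha
    have hsplit : (∑ i, u i (Fin.cons (ε (a + 1) i) (w (a + 1) i))) -
        ∑ i, u i (Fin.cons (ε a i) (w a i)) =
        (u (e ⟨a, ha⟩) (Fin.cons (ε (a + 1) (e ⟨a, ha⟩)) (w (a + 1) (e ⟨a, ha⟩))) -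
          u (e ⟨a, ha⟩) (Fin.cons (ε a (e ⟨a, ha⟩)) (w a (e ⟨a, ha⟩)))) +
        ∑ i ∈ Finset.univ.erase (e ⟨a, ha⟩ : J), (u i (Fin.cons (ε (a + 1) i) (w (a + 1) i)) -
          u i (Fin.cons (ε a i) (w a i))) := by
      rw [← Finset.sum_sub_distrib, ← Finset.add_sum_erase _ _ (Finset.mem_univ (e ⟨a, ha⟩ : J))]
    have hrest : |∑ i ∈ Finset.univ.erase (e ⟨a, ha⟩ : J),
        (u i (Fin.cons (ε (a + 1) i) (w (a + 1) i)) - u i (Fin.cons (ε a i) (w a i)))| ≤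
        Fintype.card J * M := by
      refine (Finset.abs_sum_le_sum_abs _ _).trans ?_
      calc _ ≤ ∑ i ∈ Finset.univ.erase (e ⟨a, ha⟩ : J), M := by
            refine Finset.sum_le_sum fun i hi' => ?_
            have hne := Finset.ne_of_mem_erase hi'
            have : ε (a + 1) i = ε a i := by
              simp only [ε]
              congr 1
              refine propext ⟨?_, ?_⟩
              · rintro ⟨b, hb, rfl⟩
                refine ⟨b, ?_, rfl⟩
                rcases Nat.lt_succ_iff_lt_or_eq.1 hb with h | h
                · exact h
                · exact absurd (by congr 1; congr 1; exact Fin.ext h) hne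
              · rintro ⟨b, hb, h⟩
                exact ⟨b, hb.trans (Nat.lt_succ_self a), h⟩
            rw [this]
            exact hu i (ε a i) _ _
        _ ≤ ∑ i : J, M := Finset.sum_le_sum_of_subset_of_nonneg (Finset.erase_subset _ _)
            fun _ _ _ => by omega
        _ = _ := by simp
    have e1 : ε (a + 1) (e ⟨a, ha⟩) = hi (e ⟨a, ha⟩) :=
      if_pos ⟨⟨a, ha⟩, Nat.lt_succ_self a, rfl⟩
    have e2 : ε a (e ⟨a, ha⟩) = !(hi (e ⟨a, ha⟩)) := by
      refine if_neg ?_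
      rintro ⟨b, hb, h⟩
      have := e.injective (Subtype.ext h)
      rw [this] at hb
      exact lt_irrefl _ hb
    have hg := hgap _ (heS ⟨a, ha⟩).1 (w a (e ⟨a, ha⟩)) (w (a + 1) (e ⟨a, ha⟩))
    rw [(heS ⟨a, ha⟩).2] at hg
    simp only [subtree] at hg
    rw [← e2, ← e1] at hg
    rw [abs_le] at hrest
    have hMκ := mul_le_mul_of_nonneg_right hκ' (zero_le_one.trans hM0)
    constructor
    · linarith [hsplit, hg.1, hrest.1]
    · linarith [hsplit, hg.2, hrest.2]

/-- The decay base in the counting bound for sums over spread trees. -/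
def decayBase (κ : ℕ) : ℝ := 1 - (1 / 2) ^ κ / κ

lemma decayBase_pos {κ : ℕ} (hκ : 1 ≤ κ) : 0 < decayBase κ := by
  have h1 : ((1 : ℝ) / 2) ^ κ ≤ (1 / 2) ^ 1 := pow_le_pow_of_le_one (by norm_num) (by norm_num) hκ
  have h2 : (1 : ℝ) ≤ κ := by exact_mod_cast hκ
  have h3 : ((1 : ℝ) / 2) ^ κ / κ ≤ (1 / 2) ^ κ := div_le_self (by positivity) h2
  unfold decayBase
  norm_num at h1
  linarith

lemma decayBase_lt_one {κ : ℕ} (hκ : 1 ≤ κ) : decayBase κ < 1 := by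
  have h2 : (0 : ℝ) < κ := by exact_mod_cast hκ
  have h3 : 0 < ((1 : ℝ) / 2) ^ κ / κ := by positivity
  unfold decayBase
  linarith

lemma le_decayBase_pow {κ : ℕ} (hκ : 1 ≤ κ) : 1 - (1 / 2) ^ κ ≤ decayBase κ ^ κ := by
  have h2 : (0 : ℝ) < κ := by exact_mod_cast hκ
  have h0 := decayBase_pos hκ
  have h := one_add_mul_le_pow (a := -(((1 : ℝ) / 2) ^ κ / κ))
    (by unfold decayBase at h0; linarith) κ
  have e : (1 : ℝ) + κ * -(((1 : ℝ) / 2) ^ κ / κ) = 1 - (1 / 2) ^ κ := by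
    field_simp
    ring
  rw [e] at h
  unfold decayBase
  rwa [sub_eq_add_neg (1 : ℝ) ((1 / 2) ^ κ / κ)]

/-- Sums over independent spread trees rarely fall into a chain-free set. -/
lemma card_mul_decayBase_le {J : Type*} [Fintype J] [DecidableEq J] {L K k' : ℕ}
    (hk : (L + 1) * K ≤ k') (hκ : 1 ≤ Fintype.card J) {P : Set ℤ}
    (hP : ChainFree (Fintype.card J) K P) (m : ℕ) (n : J → ℕ) (u : J → (Fin m → Bool) → ℤ)
    (hu : ∀ i, IsSpreadTree (Fintype.card J) L m (n i) (u i))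
    (Ω : Finset (J → Fin m → Bool)) (hΩ : ∀ ω ∈ Ω, ∑ i, u i (ω i) ∈ P) :
    (Ω.card : ℝ) * decayBase (Fintype.card J) ^ (k' * m) ≤
      2 ^ (Fintype.card J * m) * decayBase (Fintype.card J) ^ (∑ i, n i) := by
  set κ := Fintype.card J with hκdef
  set q := decayBase κ with hq
  have hq0 : 0 < q := decayBase_pos hκ
  have hq1 : q ≤ 1 := (decayBase_lt_one hκ).le
  induction m generalizing n with
  | zero =>
    have hn : ∀ i, n i = 0 := hu
    simp only [hn, Finset.sum_const_zero, mul_zero, pow_zero, mul_one]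
    have : Ω.card ≤ 1 := (Finset.card_le_univ _).trans (by simp)
    exact_mod_cast this
  | succ m ih =>
    have hdata : ∀ i, ∃ (br : Bool) (n' : ℕ), (∀ b, IsSpreadTree κ L m n' (subtree (u i) b)) ∧
        n i = n' + (if br then 1 else 0) ∧ (br = true → ∃ j ≤ L, 32 * κ ≤ 2 ^ j ∧
          ∃ b : Bool, ∀ x y,
            2 ^ j * 2 ^ (L * m) ≤ subtree (u i) b y - subtree (u i) (!b) x ∧
            subtree (u i) b y - subtree (u i) (!b) x ≤ 8 * (2 ^ j * 2 ^ (L * m))) := by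
      intro i
      rcases (hu i).2 with ⟨h1, h2⟩ | ⟨n', hn, h1, h2⟩
      · refine ⟨false, n i, ?_, by simp, by simp⟩
        rintro (_ | _)
        · rwa [h1]
        · exact h2
      · exact ⟨true, n', h1, by simpa using hn, fun _ => h2⟩
    choose br n' htree hn hbr using hdata
    set s := (Finset.univ.filter fun i => br i = true).card with hs
    have hnsum : ∑ i, n i = ∑ i, n' i + s := by
      simp_rw [hn, Finset.sum_add_distrib, hs, Finset.card_filter]
    let Ωs : (J → Bool) → Finset (J → Fin m → Bool) := fun ε =>
      Finset.univ.filter fun w => (fun i => Fin.cons (ε i) (w i) : J → Fin (m + 1) → Bool) ∈ Ω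
    have hbound : ∀ ε, ((Ωs ε).card : ℝ) * q ^ (k' * m) ≤ 2 ^ (κ * m) * q ^ (∑ i, n' i) :=
      fun ε => ih n' (fun i => subtree (u i) (ε i)) (Ωs ε)
        (fun w hw => hΩ _ (Finset.mem_filter.1 hw).2) (fun i => htree i (ε i))
    have hcard : (Ω.card : ℝ) ≤ ∑ ε, ((Ωs ε).card : ℝ) := by
      exact_mod_cast card_le_sum_card_subtree Ω
    have hpow : q ^ (k' * (m + 1)) = q ^ (k' * m) * q ^ k' := by rw [← pow_add]; ring_nf
    have hpow2 : (2 : ℝ) ^ (κ * (m + 1)) = 2 ^ κ * 2 ^ (κ * m) := by rw [← pow_add]; ring_nf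
    rw [hpow, hpow2, hnsum, pow_add q]
    set X : ℝ := 2 ^ (κ * m) * q ^ (∑ i, n' i) with hX
    have hX0 : 0 ≤ X := by positivity
    have hcardε : (Finset.univ : Finset (J → Bool)).card = 2 ^ κ := by simp [hκdef]
    rcases le_or_gt s k' with hsk | hsk
    · have h1 : (Ω.card : ℝ) * q ^ (k' * m) ≤ 2 ^ κ * X := by
        calc _ ≤ (∑ ε, ((Ωs ε).card : ℝ)) * q ^ (k' * m) := by gcongr
          _ = ∑ ε, ((Ωs ε).card : ℝ) * q ^ (k' * m) := Finset.sum_mul _ _ _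
          _ ≤ ∑ _ε : J → Bool, X := Finset.sum_le_sum fun ε _ => hbound ε
          _ = 2 ^ κ * X := by rw [Finset.sum_const, hcardε, nsmul_eq_mul]; push_cast; ring
      have h2 : q ^ k' ≤ q ^ s := pow_le_pow_of_le_one hq0.le hq1 hsk
      calc _ = (Ω.card : ℝ) * q ^ (k' * m) * q ^ k' := by ring
        _ ≤ 2 ^ κ * X * q ^ s := by gcongr
        _ = _ := by rw [hX]; ring
    · obtain ⟨ε0, hε0⟩ := exists_dead_branch hk hP u
        (fun i b v w => (htree i b).abs_sub_le v w) (Finset.univ.filter fun i => br i = true) hsk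
        (fun i hi => hbr i (Finset.mem_filter.1 hi).2)
      have hempty : Ωs ε0 = ∅ := by
        refine Finset.filter_eq_empty_iff.2 fun w _ hw => ?_
        exact hε0 w (hΩ _ hw)
      have h1 : (Ω.card : ℝ) * q ^ (k' * m) ≤ (2 ^ κ - 1) * X := by
        calc _ ≤ (∑ ε, ((Ωs ε).card : ℝ)) * q ^ (k' * m) := by gcongr
          _ = ∑ ε, ((Ωs ε).card : ℝ) * q ^ (k' * m) := Finset.sum_mul _ _ _
          _ = ∑ ε ∈ Finset.univ.erase ε0, ((Ωs ε).card : ℝ) * q ^ (k' * m) := by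
              refine (Finset.sum_erase _ ?_).symm
              simp [hempty]
          _ ≤ ∑ _ε ∈ Finset.univ.erase ε0, X := Finset.sum_le_sum fun ε _ => hbound ε
          _ = (2 ^ κ - 1) * X := by
              rw [Finset.sum_const, Finset.card_erase_of_mem (Finset.mem_univ _), hcardε,
                nsmul_eq_mul, Nat.cast_sub Nat.one_le_two_pow]
              push_cast; ring
      have hsκ : s ≤ κ := Finset.card_le_univ _
      have h2 : (2 : ℝ) ^ κ - 1 ≤ 2 ^ κ * q ^ s := by
        have h3 := le_decayBase_pow hκ
        have h4 : q ^ κ ≤ q ^ s := pow_le_pow_of_le_one hq0.le hq1 hsκ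
        have h5 : (2 : ℝ) ^ κ * (1 - (1 / 2) ^ κ) = 2 ^ κ - 1 := by
          rw [mul_sub, ← mul_pow]; norm_num
        rw [← h5]
        gcongr
        exact h3.trans h4
      have hqk : q ^ k' ≤ 1 := pow_le_one₀ hq0.le hq1
      calc _ = (Ω.card : ℝ) * q ^ (k' * m) * q ^ k' := by ring
        _ ≤ (Ω.card : ℝ) * q ^ (k' * m) := mul_le_of_le_one_right (by positivity) hqk
        _ ≤ (2 ^ κ - 1) * X := h1
        _ ≤ 2 ^ κ * q ^ s * X := by gcongr
        _ = _ := by rw [hX]; ring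

end SpreadTree

section Projection

/-- The index of the dyadic interval of level `i` containing `v`. -/
def dyad (i : ℕ) (v : ℝ) : ℤ := ⌊2 ^ i * v⌋

lemma dyad_div (i j : ℕ) (v : ℝ) : dyad (i + j) v / 2 ^ j = dyad i v := by
  unfold dyad
  have h : (2 : ℝ) ^ i * v = 2 ^ (i + j) * v / ((2 ^ j : ℕ) : ℝ) := by
    push_cast
    rw [pow_add]
    field_simp
  rw [h, Int.floor_div_natCast]
  push_cast
  rfl

lemma dyad_eq_of_le {i j : ℕ} (hij : i ≤ j) {v w : ℝ} (h : dyad j v = dyad j w) :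
    dyad i v = dyad i w := by
  obtain ⟨k, rfl⟩ := Nat.exists_eq_add_of_le hij
  rw [← dyad_div i k v, ← dyad_div i k w, h]

lemma dyad_add_mem (i j : ℕ) (v : ℝ) :
    dyad (i + j) v ∈ Finset.Ico (dyad i v * 2 ^ j) ((dyad i v + 1) * 2 ^ j) := by
  have h := dyad_div i j v
  have h0 : (0 : ℤ) < 2 ^ j := by positivity
  rw [Finset.mem_Ico]
  constructor
  · rw [← h]; exact Int.ediv_mul_le _ h0.ne'
  · rw [← h]; exact Int.lt_ediv_add_one_mul_self _ h0

lemma abs_sub_lt_of_dyad_eq {i : ℕ} {v w : ℝ} (h : dyad i v = dyad i w) :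
    |v - w| < 1 / 2 ^ i := by
  have h1 := Int.abs_sub_lt_one_of_floor_eq_floor h
  have h0 : (0 : ℝ) < 2 ^ i := by positivity
  rw [← mul_sub, abs_mul, abs_of_pos h0] at h1
  rw [lt_div_iff₀ h0]
  linarith

lemma abs_floor_sub_floor_le {x y : ℝ} {c : ℤ} (h : |x - y| < c) : |⌊x⌋ - ⌊y⌋| ≤ c := by
  have h1 := Int.floor_le x
  have h2 := Int.lt_floor_add_one x
  have h3 := Int.floor_le y
  have h4 := Int.lt_floor_add_one y
  obtain ⟨h5, h6⟩ := abs_lt.1 h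
  rw [abs_le]
  constructor
  · have : ((⌊y⌋ : ℤ) : ℝ) - ⌊x⌋ < c + 1 := by linarith
    have : ⌊y⌋ - ⌊x⌋ < c + 1 := by exact_mod_cast this
    linarith
  · have : ((⌊x⌋ : ℤ) : ℝ) - ⌊y⌋ < c + 1 := by linarith
    have : ⌊x⌋ - ⌊y⌋ < c + 1 := by exact_mod_cast this
    linarith

variable {ι : Type*} [Fintype ι]

/-- Entropy of the partition by `β` at level `i` and by `α + t β` at level `l`. -/
def jointEntropy (α β : ι → ℝ) (t : ℝ) (i l : ℕ) : ℝ :=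
  labelEntropy fun p => (dyad i (β p), dyad l (α p + t * β p))

variable (α β : ι → ℝ) (t : ℝ)

lemma jointEntropy_anti {i i' l l' : ℕ} (hi : i ≤ i') (hl : l ≤ l') :
    jointEntropy α β t i' l' ≤ jointEntropy α β t i l := by
  refine labelEntropy_mono fun p q h => ?_
  rw [Prod.mk.injEq] at h ⊢
  exact ⟨dyad_eq_of_le hi h.1, dyad_eq_of_le hl h.2⟩

lemma jointEntropy_supermodular {i i' l l' : ℕ} (hi : i ≤ i') (hl : l ≤ l') :
    jointEntropy α β t i l' + jointEntropy α β t i' l ≤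
      jointEntropy α β t i' l' + jointEntropy α β t i l := by
  have h := labelEntropy_supermodular (x := fun p => (dyad i (β p), dyad l' (α p + t * β p)))
    (y := fun p => (dyad i' (β p), dyad l (α p + t * β p)))
    (z := fun p => (dyad i (β p), dyad l (α p + t * β p)))
    (fun p q h => by
      rw [Prod.mk.injEq] at h ⊢
      exact ⟨h.1, dyad_eq_of_le hl h.2⟩)
    (fun p q h => by
      rw [Prod.mk.injEq] at h ⊢
      exact ⟨dyad_eq_of_le hi h.1, h.2⟩)
  refine h.trans (add_le_add_left (labelEntropy_mono fun p q h => ?_) _)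
  simp only [Prod.mk.injEq] at h ⊢
  exact ⟨h.2.1, h.1.2⟩

lemma jointEntropy_le_add_left (i l f : ℕ) :
    jointEntropy α β t i l ≤ jointEntropy α β t (i + f) l +
      Fintype.card ι * (f * Real.log 2) := by
  have h := labelEntropy_le_add_log (fun p => (dyad i (β p), dyad l (α p + t * β p)))
    (fun p => (dyad (i + f) (β p), dyad l (α p + t * β p))) (2 ^ f) (by positivity) (by
      intro p
      refine ⟨Finset.Ico (dyad i (β p) * 2 ^ f) ((dyad i (β p) + 1) * 2 ^ f) ×ˢ
        {dyad l (α p + t * β p)}, ?_, fun q hq => ?_⟩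
      · rw [Finset.card_product, Finset.card_singleton, mul_one, Int.card_Ico, ← sub_mul,
          add_sub_cancel_left, one_mul]
        rw [show ((2 : ℤ) ^ f) = ((2 ^ f : ℕ) : ℤ) by push_cast; rfl, Int.toNat_natCast]
        push_cast
        exact le_rfl
      · rw [Prod.mk.injEq] at hq
        rw [Finset.mem_product, ← hq.1, ← hq.2]
        exact ⟨dyad_add_mem _ _ _, Finset.mem_singleton_self _⟩)
  rwa [Real.log_pow] at h

lemma jointEntropy_le_add_right (i l f : ℕ) :
    jointEntropy α β t i l ≤ jointEntropy α β t i (l + f) +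
      Fintype.card ι * (f * Real.log 2) := by
  have h := labelEntropy_le_add_log (fun p => (dyad i (β p), dyad l (α p + t * β p)))
    (fun p => (dyad i (β p), dyad (l + f) (α p + t * β p))) (2 ^ f) (by positivity) (by
      intro p
      refine ⟨{dyad i (β p)} ×ˢ Finset.Ico (dyad l (α p + t * β p) * 2 ^ f)
        ((dyad l (α p + t * β p) + 1) * 2 ^ f), ?_, fun q hq => ?_⟩
      · rw [Finset.card_product, Finset.card_singleton, one_mul, Int.card_Ico, ← sub_mul,
          add_sub_cancel_left, one_mul]
        rw [show ((2 : ℤ) ^ f) = ((2 ^ f : ℕ) : ℤ) by push_cast; rfl, Int.toNat_natCast]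
        push_cast
        exact le_rfl
      · rw [Prod.mk.injEq] at hq
        rw [Finset.mem_product, ← hq.1, ← hq.2]
        exact ⟨Finset.mem_singleton_self _, dyad_add_mem _ _ _⟩)
  rwa [Real.log_pow] at h

lemma card_mul_log_card_le (hβ0 : ∀ p, 0 ≤ β p) (hβ1 : ∀ p, β p < 1) {l : ℕ} {v : Finset ℤ}
    (hv : ∀ p, dyad l (α p + t * β p) ∈ v) {m : ℝ} (hm : 0 < m) (hvm : (v.card : ℝ) ≤ m) :
    Fintype.card ι * Real.log (Fintype.card ι) ≤
      jointEntropy α β t 0 l + Fintype.card ι * Real.log m := by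
  have h := labelEntropy_le_add_log (fun _ : ι => ())
    (fun p => (dyad 0 (β p), dyad l (α p + t * β p))) m hm (by
      intro p
      refine ⟨{0} ×ˢ v, by simpa using hvm, fun q _ => ?_⟩
      rw [Finset.mem_product]
      refine ⟨?_, hv q⟩
      simp [dyad, Int.floor_eq_zero_iff, hβ0 q, hβ1 q])
  have h2 : labelEntropy (fun _ : ι => ()) = Fintype.card ι * Real.log (Fintype.card ι) := by
    simp [labelEntropy, classCard]
  rwa [h2] at h

lemma jointEntropy_diag_le {n : ℕ} (hinj : Function.Injective fun p => (dyad n (α p), dyad n (β p)))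
    (hβ : ∀ p q, dyad n (β p) = dyad n (β q) → β p = β q) :
    jointEntropy α β t n n ≤ Fintype.card ι * Real.log 8 := by
  have h := labelEntropy_le_add_log (fun p => (dyad n (β p), dyad n (α p + t * β p)))
    (fun p => (dyad n (α p), dyad n (β p))) 8 (by norm_num) (by
      intro p
      refine ⟨Finset.Icc (dyad n (α p) - 1) (dyad n (α p) + 1) ×ˢ {dyad n (β p)}, ?_,
        fun q hq => ?_⟩
      · rw [Finset.card_product, Finset.card_singleton, mul_one, Int.card_Icc]
        rw [show dyad n (α p) + 1 + 1 - (dyad n (α p) - 1) = 3 by ring]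
        norm_num
      · rw [Prod.mk.injEq] at hq
        rw [Finset.mem_product]
        refine ⟨?_, by simp [hq.1]⟩
        have h1 := Int.abs_sub_lt_one_of_floor_eq_floor hq.2
        rw [hβ _ _ hq.1] at h1
        have h2 : |2 ^ n * α q - 2 ^ n * α p| < ((1 : ℤ) : ℝ) := by
          rw [Int.cast_one]
          have e1 : 2 ^ n * α q - 2 ^ n * α p =
              2 ^ n * (α q + t * β p) - 2 ^ n * (α p + t * β p) := by ring
          rw [e1]
          exact h1
        have h3 := abs_le.1 (abs_floor_sub_floor_le h2)
        rw [Finset.mem_Icc]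
        unfold dyad
        constructor <;> linarith [h3.1, h3.2])
  have h2 : labelEntropy (fun p => (dyad n (α p), dyad n (β p))) = 0 := by
    refine Finset.sum_eq_zero fun p _ => ?_
    have : classCard (fun p => (dyad n (α p), dyad n (β p))) p = 1 := by
      unfold classCard
      rw [Nat.cast_eq_one, Finset.card_eq_one]
      refine ⟨p, Finset.ext fun q => ?_⟩
      simp only [Finset.mem_filter, Finset.mem_univ, true_and, Finset.mem_singleton]
      exact ⟨fun h => hinj h, fun h => h ▸ rfl⟩
    rw [this, Real.log_one]
  rw [h2, zero_add] at h
  exact h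

/-- The information gained between levels `i` and `i + e`. -/
def levelGain (e i : ℕ) : ℝ := jointEntropy α β t i i - jointEntropy α β t i (i + e)

/-- The conditional mutual information defect at level `i` and scale `e`. -/
def scaleDefect (e i : ℕ) : ℝ :=
  jointEntropy α β t (i + e) (i + 2 * e) + jointEntropy α β t i (i + e) -
    jointEntropy α β t i (i + 2 * e) - jointEntropy α β t (i + e) (i + e)

lemma scaleDefect_eq (e i : ℕ) : scaleDefect α β t e i =
    levelGain α β t (2 * e) i - levelGain α β t e i - levelGain α β t e (i + e) := by
  unfold scaleDefect levelGain
  rw [show i + e + e = i + 2 * e by ring]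
  ring

lemma scaleDefect_nonneg (e i : ℕ) : 0 ≤ scaleDefect α β t e i := by
  have := jointEntropy_supermodular α β t (show i ≤ i + e by omega)
    (show i + e ≤ i + 2 * e by omega)
  unfold scaleDefect
  linarith

lemma levelGain_nonneg (e i : ℕ) : 0 ≤ levelGain α β t e i :=
  sub_nonneg.2 (jointEntropy_anti α β t le_rfl (by omega))

lemma levelGain_le (e i : ℕ) :
    levelGain α β t e i ≤ Fintype.card ι * (e * Real.log 2) := by
  have := jointEntropy_le_add_right α β t i i e
  unfold levelGain
  linarith

lemma sum_range_sub_shift (g : ℕ → ℝ) (n e : ℕ) :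
    ∑ i ∈ Finset.range n, g (i + e) + ∑ i ∈ Finset.range e, g i =
      ∑ i ∈ Finset.range n, g i + ∑ i ∈ Finset.range e, g (n + i) := by
  have h1 := Finset.sum_range_add g e n
  have h2 := Finset.sum_range_add g n e
  rw [add_comm e n] at h1
  simp_rw [add_comm _ e]
  linarith

lemma sum_scaleDefect_le (n e : ℕ) :
    ∑ i ∈ Finset.range n, scaleDefect α β t e i ≤
      ∑ i ∈ Finset.range n, levelGain α β t (2 * e) i -
        2 * ∑ i ∈ Finset.range n, levelGain α β t e i +
        e * (Fintype.card ι * (e * Real.log 2)) := by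
  have h1 := sum_range_sub_shift (levelGain α β t e) n e
  have h2 : ∑ i ∈ Finset.range e, levelGain α β t e i ≤
      e * (Fintype.card ι * (e * Real.log 2)) := by
    calc _ ≤ ∑ _i ∈ Finset.range e, (Fintype.card ι * (e * Real.log 2)) :=
          Finset.sum_le_sum fun i _ => levelGain_le α β t e i
      _ = _ := by simp
  have h3 : 0 ≤ ∑ i ∈ Finset.range e, levelGain α β t e (n + i) :=
    Finset.sum_nonneg fun i _ => levelGain_nonneg α β t e _
  simp_rw [scaleDefect_eq]
  rw [Finset.sum_sub_distrib, Finset.sum_sub_distrib]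
  linarith

lemma sum_sum_scaleDefect_le (n J : ℕ) (hJ : 2 ^ J ≤ n) :
    ∑ j ∈ Finset.range J, (∑ i ∈ Finset.range n, scaleDefect α β t (2 ^ j) i) / 2 ^ j ≤
      4 * n * Fintype.card ι := by
  have hlog : Real.log 2 ≤ 1 := by linarith [Real.log_two_lt_d9]
  have hlog0 : 0 ≤ Real.log 2 := Real.log_nonneg (by norm_num)
  set N : ℝ := (Fintype.card ι : ℝ) with hN
  have hN0 : 0 ≤ N := by positivity
  set S : ℕ → ℝ := fun j => ∑ i ∈ Finset.range n, levelGain α β t (2 ^ j) i with hS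
  have hstep : ∀ j, (∑ i ∈ Finset.range n, scaleDefect α β t (2 ^ j) i) / 2 ^ j ≤
      (2 * (S (j + 1) / 2 ^ (j + 1)) - 2 * (S j / 2 ^ j)) + 2 ^ j * N := by
    intro j
    have h := sum_scaleDefect_le α β t n (2 ^ j)
    have h0 : (0 : ℝ) < 2 ^ j := by positivity
    rw [div_le_iff₀ h0]
    refine h.trans ?_
    have e1 : ∑ i ∈ Finset.range n, levelGain α β t (2 * 2 ^ j) i = S (j + 1) := by
      simp only [hS, pow_succ']
    rw [e1]
    have e2 : ((2 * (S (j + 1) / 2 ^ (j + 1)) - 2 * (S j / 2 ^ j)) + 2 ^ j * N) * 2 ^ j =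
        S (j + 1) - 2 * S j + 2 ^ j * (N * 2 ^ j) := by
      rw [pow_succ]
      field_simp
    rw [e2]
    push_cast
    have : (2 : ℝ) ^ j * (N * (2 ^ j * Real.log 2)) ≤ 2 ^ j * (N * 2 ^ j) := by
      gcongr
      exact mul_le_of_le_one_right h0.le hlog
    linarith
  refine (Finset.sum_le_sum fun j _ => hstep j).trans ?_
  rw [Finset.sum_add_distrib, Finset.sum_range_sub (fun j => 2 * (S j / 2 ^ j)), ← Finset.sum_mul]
  have hgeo : ∑ j ∈ Finset.range J, (2 : ℝ) ^ j = 2 ^ J - 1 := by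
    rw [geom_sum_eq (by norm_num)]; norm_num
  rw [hgeo]
  have hSJ : S J / 2 ^ J ≤ n * N := by
    rw [div_le_iff₀ (by positivity)]
    calc S J ≤ ∑ _i ∈ Finset.range n, N * 2 ^ J := by
          refine Finset.sum_le_sum fun i _ => (levelGain_le α β t _ i).trans ?_
          push_cast
          gcongr
          exact mul_le_of_le_one_right (by positivity) hlog
      _ = _ := by simp; ring
  have hS0 : 0 ≤ S 0 / 2 ^ 0 :=
    div_nonneg (Finset.sum_nonneg fun i _ => levelGain_nonneg α β t _ _) (by positivity)
  have hJ' : (2 : ℝ) ^ J * N ≤ n * N := by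
    gcongr
    exact_mod_cast hJ
  nlinarith [hN0, mul_nonneg (Nat.cast_nonneg (α := ℝ) n) hN0]

/-- The entropy decrease when `β` is refined by `f` levels, summed over all levels. -/
lemma sum_jointEntropy_sub_ge (n f e l : ℕ) (hl : n + 2 * e ≤ l) :
    f * (jointEntropy α β t f l - jointEntropy α β t n l) ≤
      ∑ i ∈ Finset.range n, (jointEntropy α β t i (i + 2 * e) -
        jointEntropy α β t (i + f) (i + 2 * e)) := by
  have h1 : ∑ i ∈ Finset.range n, (jointEntropy α β t i l - jointEntropy α β t (i + f) l) ≤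
      ∑ i ∈ Finset.range n, (jointEntropy α β t i (i + 2 * e) -
        jointEntropy α β t (i + f) (i + 2 * e)) := by
    refine Finset.sum_le_sum fun i hi => ?_
    have hi := Finset.mem_range.1 hi
    have := jointEntropy_supermodular α β t (show i ≤ i + f by omega)
      (show i + 2 * e ≤ l by omega)
    linarith
  refine le_trans ?_ h1
  have h2 := sum_range_sub_shift (fun i => jointEntropy α β t i l) n f
  rw [Finset.sum_sub_distrib]
  have h3 : f * jointEntropy α β t f l ≤ ∑ i ∈ Finset.range f, jointEntropy α β t i l := by
    calc _ = ∑ _i ∈ Finset.range f, jointEntropy α β t f l := by simp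
      _ ≤ _ := Finset.sum_le_sum fun i hi =>
        jointEntropy_anti α β t (Finset.mem_range.1 hi).le le_rfl
  have h4 : ∑ i ∈ Finset.range f, jointEntropy α β t (n + i) l ≤ f * jointEntropy α β t n l := by
    calc _ ≤ ∑ _i ∈ Finset.range f, jointEntropy α β t n l :=
        Finset.sum_le_sum fun i hi => jointEntropy_anti α β t (by omega) le_rfl
      _ = _ := by simp
  linarith

end Projection

section LocalLabels

variable {ι : Type*} (α β : ι → ℝ)

/-- Label by `β` at level `i` and by `α + t₀ β` at level `i + e`. -/
def baseLabel (t₀ : ℝ) (i e : ℕ) (p : ι) : ℤ × ℤ :=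
  (dyad i (β p), dyad (i + e) (α p + t₀ * β p))

/-- The base label refined by `α + t β` at level `i + 2 * e`. -/
def slopeLabel (t₀ t : ℝ) (i e : ℕ) (p : ι) : (ℤ × ℤ) × ℤ :=
  (baseLabel α β t₀ i e p, dyad (i + 2 * e) (α p + t * β p))

/-- The base label refined by `β` at level `i + e`. -/
def heightLabel (t₀ : ℝ) (i e : ℕ) (p : ι) : (ℤ × ℤ) × ℤ :=
  (baseLabel α β t₀ i e p, dyad (i + e) (β p))

lemma baseLabel_eq_of_slopeLabel {t₀ t : ℝ} {i e : ℕ} (p q : ι)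
    (h : slopeLabel α β t₀ t i e p = slopeLabel α β t₀ t i e q) :
    baseLabel α β t₀ i e p = baseLabel α β t₀ i e q := (Prod.mk.inj h).1

lemma baseLabel_eq_of_heightLabel {t₀ : ℝ} {i e : ℕ} (p q : ι)
    (h : heightLabel α β t₀ i e p = heightLabel α β t₀ i e q) :
    baseLabel α β t₀ i e p = baseLabel α β t₀ i e q := (Prod.mk.inj h).1

lemma dyad_mem_of_slope_close {t₀ t : ℝ} {i e : ℕ} (ht : |t - t₀| ≤ 1 / 2 ^ e) {p q : ι}
    (h1 : dyad i (β q) = dyad i (β p))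
    (h2 : dyad (i + e) (α q + t * β q) = dyad (i + e) (α p + t * β p)) :
    dyad (i + e) (α q + t₀ * β q) ∈ Finset.Icc (dyad (i + e) (α p + t₀ * β p) - 2)
      (dyad (i + e) (α p + t₀ * β p) + 2) := by
  have h3 := Int.abs_sub_lt_one_of_floor_eq_floor h2
  have h4 := abs_sub_lt_of_dyad_eq h1
  have h5 : |2 ^ (i + e) * ((t - t₀) * (β q - β p))| ≤ 1 := by
    rw [abs_mul, abs_mul, abs_of_pos (show (0 : ℝ) < 2 ^ (i + e) by positivity)]
    calc (2 : ℝ) ^ (i + e) * (|t - t₀| * |β q - β p|) ≤ 2 ^ (i + e) * (1 / 2 ^ e * (1 / 2 ^ i)) := by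
          gcongr
      _ = 1 := by rw [pow_add]; field_simp
  have h6 : |2 ^ (i + e) * (α q + t₀ * β q) - 2 ^ (i + e) * (α p + t₀ * β p)| < ((2 : ℤ) : ℝ) := by
    have e1 : 2 ^ (i + e) * (α q + t₀ * β q) - 2 ^ (i + e) * (α p + t₀ * β p) =
        (2 ^ (i + e) * (α q + t * β q) - 2 ^ (i + e) * (α p + t * β p)) -
          2 ^ (i + e) * ((t - t₀) * (β q - β p)) := by ring
    rw [e1]
    refine (abs_sub _ _).trans_lt ?_
    push_cast
    linarith
  have h7 := abs_le.1 (abs_floor_sub_floor_le h6)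
  rw [Finset.mem_Icc]
  unfold dyad
  constructor <;> linarith [h7.1, h7.2]

lemma card_Icc_two_le (z : ℤ) : ((Finset.Icc (z - 2) (z + 2)).card : ℝ) ≤ 8 := by
  rw [Int.card_Icc, show z + 2 + 1 - (z - 2) = 5 by ring]
  norm_num

variable {α β} [Fintype ι]

lemma labelEntropy_baseLabel_le {t₀ t : ℝ} {i e : ℕ} (ht : |t - t₀| ≤ 1 / 2 ^ e) :
    labelEntropy (baseLabel α β t₀ i e) ≤
      jointEntropy α β t i (i + e) + Fintype.card ι * Real.log 8 := by
  refine labelEntropy_le_add_log _ _ 8 (by norm_num) fun p =>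
    ⟨{dyad i (β p)} ×ˢ Finset.Icc (dyad (i + e) (α p + t * β p) - 2)
      (dyad (i + e) (α p + t * β p) + 2), ?_, fun q hq => ?_⟩
  · rw [Finset.card_product, Finset.card_singleton, one_mul]
    exact card_Icc_two_le _
  · have hq := Prod.mk.inj hq
    rw [Finset.mem_product]
    exact ⟨by simp [hq.1], dyad_mem_of_slope_close α β (by rwa [abs_sub_comm]) hq.1 hq.2⟩

lemma jointEntropy_le_slopeLabel {t₀ t : ℝ} {i e : ℕ} (ht : |t - t₀| ≤ 1 / 2 ^ e) :
    jointEntropy α β t i (i + 2 * e) ≤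
      labelEntropy (slopeLabel α β t₀ t i e) + Fintype.card ι * Real.log 8 := by
  refine labelEntropy_le_add_log _ _ 8 (by norm_num) fun p =>
    ⟨({dyad i (β p)} ×ˢ Finset.Icc (dyad (i + e) (α p + t₀ * β p) - 2)
      (dyad (i + e) (α p + t₀ * β p) + 2)) ×ˢ {dyad (i + 2 * e) (α p + t * β p)}, ?_,
        fun q hq => ?_⟩
  · rw [Finset.card_product, Finset.card_product, Finset.card_singleton, one_mul,
      Finset.card_singleton, mul_one]
    exact card_Icc_two_le _
  · have hq := Prod.mk.inj hq
    rw [Finset.mem_product, Finset.mem_product]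
    exact ⟨⟨by simp [slopeLabel, baseLabel, hq.1], dyad_mem_of_slope_close α β ht hq.1
      (dyad_eq_of_le (by omega) hq.2)⟩, by simp [slopeLabel, hq.2]⟩

lemma jointEntropy_le_heightLabel {t₀ t : ℝ} {i e : ℕ} (ht : |t - t₀| ≤ 1 / 2 ^ e) :
    jointEntropy α β t (i + e) (i + e) ≤
      labelEntropy (heightLabel α β t₀ i e) + Fintype.card ι * Real.log 8 := by
  refine labelEntropy_le_add_log _ _ 8 (by norm_num) fun p =>
    ⟨({dyad i (β p)} ×ˢ Finset.Icc (dyad (i + e) (α p + t₀ * β p) - 2)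
      (dyad (i + e) (α p + t₀ * β p) + 2)) ×ˢ {dyad (i + e) (β p)}, ?_, fun q hq => ?_⟩
  · rw [Finset.card_product, Finset.card_product, Finset.card_singleton, one_mul,
      Finset.card_singleton, mul_one]
    exact card_Icc_two_le _
  · have hq := Prod.mk.inj hq
    have hi : dyad i (β q) = dyad i (β p) := dyad_eq_of_le (by omega) hq.1
    rw [Finset.mem_product, Finset.mem_product]
    exact ⟨⟨by simp [heightLabel, baseLabel, hi], dyad_mem_of_slope_close α β ht hi hq.2⟩,
      by simp [heightLabel, hq.1]⟩

/-- The defect of the local labels. -/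
def labelDefect (α β : ι → ℝ) (t₀ t : ℝ) (i e : ℕ) : ℝ :=
  labelEntropy (fun q => (slopeLabel α β t₀ t i e q, heightLabel α β t₀ i e q)) +
    labelEntropy (baseLabel α β t₀ i e) - labelEntropy (slopeLabel α β t₀ t i e) -
    labelEntropy (heightLabel α β t₀ i e)

lemma labelDefect_nonneg (t₀ t : ℝ) (i e : ℕ) : 0 ≤ labelDefect α β t₀ t i e := by
  have := labelEntropy_supermodular (baseLabel_eq_of_slopeLabel α β (t₀ := t₀) (t := t) (i := i)
    (e := e)) (baseLabel_eq_of_heightLabel α β)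
  unfold labelDefect
  linarith

lemma labelDefect_le {t₀ t : ℝ} {i e : ℕ} (ht : |t - t₀| ≤ 1 / 2 ^ e) :
    labelDefect α β t₀ t i e ≤ scaleDefect α β t e i + 3 * (Fintype.card ι * Real.log 8) := by
  have h1 := labelEntropy_baseLabel_le (α := α) (β := β) (i := i) ht
  have h2 := jointEntropy_le_slopeLabel (α := α) (β := β) (i := i) ht
  have h3 := jointEntropy_le_heightLabel (α := α) (β := β) (i := i) ht
  have h4 : labelEntropy (fun q => (slopeLabel α β t₀ t i e q, heightLabel α β t₀ i e q)) ≤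
      jointEntropy α β t (i + e) (i + 2 * e) := by
    refine labelEntropy_mono fun p q h => ?_
    simp only [slopeLabel, heightLabel, Prod.mk.injEq] at h ⊢
    exact ⟨h.2.2, h.1.2⟩
  unfold labelDefect scaleDefect
  linarith

lemma jointEntropy_sub_le_far {t₀ t : ℝ} {i e : ℕ} (f : ℕ) (ht : |t - t₀| ≤ 1 / 2 ^ e) :
    jointEntropy α β t i (i + 2 * e) - jointEntropy α β t (i + f) (i + 2 * e) ≤
      Fintype.card ι * (Real.log 8 + Real.log 4) + (2 * (f * Real.log 2) + 2) *
        ∑ p, farFraction (slopeLabel α β t₀ t i e) (fun p => dyad (i + f) (β p)) p := by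
  have h1 := jointEntropy_le_slopeLabel (α := α) (β := β) (i := i) ht
  have h2 : labelEntropy (fun q => (slopeLabel α β t₀ t i e q, dyad (i + f) (β q))) ≤
      jointEntropy α β t (i + f) (i + 2 * e) := by
    refine labelEntropy_mono fun p q h => ?_
    simp only [slopeLabel, Prod.mk.injEq] at h ⊢
    exact ⟨h.2, h.1.2⟩
  have h3 := labelEntropy_sub_le_far (slopeLabel α β t₀ t i e) (fun p => dyad (i + f) (β p))
    (G := 2 ^ f) (one_le_pow₀ one_le_two) (by
      intro p
      refine ⟨Finset.Ico (dyad i (β p) * 2 ^ f) ((dyad i (β p) + 1) * 2 ^ f), ?_,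
        fun q hq => ?_⟩
      · rw [Int.card_Ico, ← sub_mul, add_sub_cancel_left, one_mul]
        rw [show ((2 : ℤ) ^ f) = ((2 ^ f : ℕ) : ℤ) by push_cast; rfl, Int.toNat_natCast]
        push_cast
        exact le_rfl
      · simp only [slopeLabel, baseLabel, Prod.mk.injEq] at hq
        rw [← hq.1.1]
        exact dyad_add_mem _ _ _)
  rw [Real.log_pow] at h3
  linarith

/-- Selection of a good level. -/
lemma exists_good_level {D : Type*} [Fintype D] [Nonempty D] {t₀ : ℝ} {t : D → ℝ} {e f n : ℕ}
    (hcard : 0 < Fintype.card ι) (hn : 1 ≤ n)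
    (ht : ∀ ω, |t ω - t₀| ≤ 1 / 2 ^ e) {X c : ℝ} (hX : 0 ≤ X)
    (hc : c = 1 / (2 * (f * Real.log 2) + 2))
    (hdef : ∀ ω, ∑ i ∈ Finset.range n, scaleDefect α β (t ω) e i ≤ X * n * Fintype.card ι)
    (hgain : ∀ ω, 5 * n * (Fintype.card ι : ℝ) ≤ ∑ i ∈ Finset.range n,
      (jointEntropy α β (t ω) i (i + 2 * e) - jointEntropy α β (t ω) (i + f) (i + 2 * e))) :
    ∃ i < n, c / 2 * Fintype.card ι * Fintype.card D ≤ ∑ ω, ∑ p,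
        farFraction (slopeLabel α β t₀ (t ω) i e) (fun p => dyad (i + f) (β p)) p ∧
      ∑ ω, labelDefect α β t₀ (t ω) i e ≤
        2 * (X + 7) / c * Fintype.card ι * Fintype.card D := by
  have hlog2 : Real.log 2 < 0.6931471808 := Real.log_two_lt_d9
  have hlog20 : 0 < Real.log 2 := Real.log_pos (by norm_num)
  have hlog4 : Real.log 4 = 2 * Real.log 2 := by
    rw [show (4 : ℝ) = 2 ^ 2 by norm_num, Real.log_pow]; norm_num
  have hlog8 : Real.log 8 = 3 * Real.log 2 := by
    rw [show (8 : ℝ) = 2 ^ 3 by norm_num, Real.log_pow]; norm_num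
  set N : ℝ := (Fintype.card ι : ℝ) with hN
  have hN0 : 0 < N := by rw [hN]; exact_mod_cast hcard
  set M : ℝ := (Fintype.card D : ℝ) with hM
  have hM0 : 0 < M := by rw [hM]; exact_mod_cast Fintype.card_pos
  have hn0 : (0 : ℝ) < n := by exact_mod_cast hn
  have hc0 : 0 < c := by rw [hc]; positivity
  set Fa : ℕ → ℝ := fun i => ∑ ω, ∑ p,
        farFraction (slopeLabel α β t₀ (t ω) i e) (fun p => dyad (i + f) (β p)) p with hFa
  set De : ℕ → ℝ := fun i => ∑ ω, labelDefect α β t₀ (t ω) i e with hDe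
  have hDe0 : ∀ i, 0 ≤ De i := fun i => Finset.sum_nonneg fun ω _ => labelDefect_nonneg _ _ _ _
  have hFaN : ∀ i, Fa i ≤ N * M := by
    intro i
    calc Fa i ≤ ∑ _ω : D, ∑ _p : ι, (1 : ℝ) :=
          Finset.sum_le_sum fun ω _ => Finset.sum_le_sum fun p _ => (farFraction_lt_one _ _ _).le
      _ = N * M := by simp [hN, hM]; ring
  have hDeS : ∑ i ∈ Finset.range n, De i ≤ (X + 7) * n * N * M := by
    rw [Finset.sum_comm]
    calc _ ≤ ∑ _ω : D, (X + 7) * n * N := by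
          refine Finset.sum_le_sum fun ω _ => ?_
          calc _ ≤ ∑ i ∈ Finset.range n, (scaleDefect α β (t ω) e i + 3 * (N * Real.log 8)) :=
                Finset.sum_le_sum fun i _ => labelDefect_le (ht ω)
            _ = ∑ i ∈ Finset.range n, scaleDefect α β (t ω) e i + n * (3 * (N * Real.log 8)) := by
                rw [Finset.sum_add_distrib]; simp
            _ ≤ _ := by
                have := hdef ω
                rw [hlog8]
                nlinarith [mul_pos hn0 hN0]
      _ = _ := by simp [hM]; ring
  have hFaS : c * n * N * M ≤ ∑ i ∈ Finset.range n, Fa i := by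
    rw [Finset.sum_comm]
    calc c * n * N * M = ∑ _ω : D, c * n * N := by simp [hM]; ring
      _ ≤ _ := by
          refine Finset.sum_le_sum fun ω _ => ?_
          have h1 := (hgain ω).trans (Finset.sum_le_sum (s := Finset.range n)
            fun i _ => jointEntropy_sub_le_far (t₀ := t₀) (i := i) f (ht ω))
          have e1 := Finset.mul_sum (Finset.range n) (fun i => ∑ p, farFraction
            (slopeLabel α β t₀ (t ω) i e) (fun p => dyad (i + f) (β p)) p)
            (2 * (f * Real.log 2) + 2)
          rw [Finset.sum_add_distrib, ← e1] at h1
          simp only [Finset.sum_const, Finset.card_range, nsmul_eq_mul, ← hN] at h1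
          have h2 : (0 : ℝ) < 2 * (f * Real.log 2) + 2 := by positivity
          rw [hc, mul_assoc, one_div_mul_eq_div, div_le_iff₀ h2]
          rw [hlog8, hlog4] at h1
          nlinarith [mul_pos hn0 hN0]
  have hXp : 0 < X + 7 := by linarith
  have hex : ∃ i ∈ Finset.range n, c / 2 * N * M ≤ Fa i - c / (2 * (X + 7)) * De i := by
    refine Finset.exists_le_of_sum_le (Finset.nonempty_range_iff.2 (by omega)) ?_
    rw [Finset.sum_sub_distrib, ← Finset.mul_sum (Finset.range n) De]
    have : c / (2 * (X + 7)) * ∑ i ∈ Finset.range n, De i ≤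
        c / (2 * (X + 7)) * ((X + 7) * n * N * M) := by gcongr
    have e1 : c / (2 * (X + 7)) * ((X + 7) * n * N * M) = c / 2 * n * N * M := by
      field_simp
    rw [e1] at this
    simp only [Finset.sum_const, Finset.card_range, nsmul_eq_mul]
    linarith
  obtain ⟨i, hi, hle⟩ := hex
  have h1 : 0 ≤ c / (2 * (X + 7)) * De i := mul_nonneg (by positivity) (hDe0 i)
  refine ⟨i, Finset.mem_range.1 hi, by linarith, ?_⟩
  have h2 : c / (2 * (X + 7)) * De i ≤ N * M := by
    have := hFaN i
    have : 0 ≤ c / 2 * N * M := by positivity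
    linarith
  rw [div_mul_eq_mul_div, div_le_iff₀ (by linarith)] at h2
  rw [mul_assoc, div_mul_eq_mul_div, le_div_iff₀ hc0]
  linarith

end LocalLabels

section Decay

/-- Finite subsets of the range of `v` obey an Assouad-type packing bound down to scale `r₀`. -/
def PackingBound {ι : Type*} (v : ι → ℝ) (r₀ C u : ℝ) : Prop :=
  ∀ D : Finset ℝ, (∀ x ∈ D, ∃ q, v q = x) → ∀ r R : ℝ, r₀ ≤ r → r ≤ R →
    (∀ x ∈ D, ∀ y ∈ D, x ≠ y → r ≤ |x - y|) → (∀ x ∈ D, ∀ y ∈ D, |x - y| ≤ R) →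
    (D.card : ℝ) ≤ C * (R / r) ^ u

lemma chain_bounds {D : ℤ} {x : ℕ → ℤ} {K : ℕ}
    (h : ∀ a < K, D ≤ 2 * (x (a + 1) - x a) ∧ x (a + 1) - x a ≤ 9 * D) {a b : ℕ} (hab : a ≤ b)
    (hb : b ≤ K) : D * (b - a) ≤ 2 * (x b - x a) ∧ x b - x a ≤ 9 * D * (b - a) := by
  induction b, hab using Nat.le_induction with
  | base => simp
  | succ b hab ih =>
    have h1 := ih (by omega)
    have h2 := h b (by omega)
    push_cast
    constructor <;> nlinarith [h1.1, h1.2, h2.1, h2.2]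

lemma chainFree_of_packingBound {ι : Type*} {v : ι → ℝ} {r₀ C u η x₀ : ℝ} {k K : ℕ} (hk : 1 ≤ k)
    (hK1 : 1 ≤ K) (hK : C * (40 * K) ^ u < K + 1) (hη : η ≠ 0) (hr₀ : r₀ ≤ 16 * |η|)
    (hv : PackingBound v r₀ C u) :
    ChainFree (2 * k) K {σ : ℤ | ∃ q, |v q - x₀ - η * σ| ≤ 7 * k * |η|} := by
  intro D x hD hx hgap
  have : Nonempty ι := ⟨(hx 0 (Nat.zero_le _)).choose⟩
  choose! q hq using hx
  have hη0 : 0 < |η| := abs_pos.2 hη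
  have hk' : (1 : ℝ) ≤ k := by exact_mod_cast hk
  have hK' : (1 : ℝ) ≤ K := by exact_mod_cast hK1
  have hD' : 64 * (k : ℝ) ≤ D := by
    have : 64 * (k : ℤ) ≤ D := by push_cast at hD; linarith
    exact_mod_cast this
  have hpair : ∀ a b, a < b → b ≤ K → |η| * D / 4 ≤ |v (q b) - v (q a)| ∧
      |v (q b) - v (q a)| ≤ 40 * K * (|η| * D / 4) := by
    intro a b hab hb
    have hc := chain_bounds hgap hab.le hb
    have ha1 : (1 : ℤ) ≤ b - a := by
      have : (a : ℤ) + 1 ≤ b := by exact_mod_cast hab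
      linarith
    have hD0 : 0 < D := by
      have : (0 : ℝ) < D := by linarith
      exact_mod_cast this
    have h1 : D ≤ 2 * (x b - x a) := by nlinarith [hc.1]
    have h2 : x b - x a ≤ 9 * D * K := by
      have : (b : ℤ) - a ≤ K := by omega
      nlinarith [hc.2]
    have h1' : (D : ℝ) ≤ 2 * (x b - x a) := by exact_mod_cast h1
    have h2' : (x b : ℝ) - x a ≤ 9 * D * K := by exact_mod_cast h2
    have e1 := hq a (by omega)
    have e2 := hq b hb
    have e3 : |(v (q b) - v (q a)) - η * (x b - x a)| ≤ 14 * k * |η| := by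
      have : (v (q b) - v (q a)) - η * (x b - x a) =
          (v (q b) - x₀ - η * x b) - (v (q a) - x₀ - η * x a) := by ring
      rw [this]
      exact (abs_sub _ _).trans (by linarith)
    have e4 : |η * ((x b : ℝ) - x a)| = |η| * (x b - x a) := by
      rw [abs_mul, abs_of_nonneg (a := (x b : ℝ) - x a)]
      linarith
    have e5 := abs_sub_abs_le_abs_sub (η * ((x b : ℝ) - x a)) (v (q b) - v (q a))
    have e6 := abs_sub_abs_le_abs_sub (v (q b) - v (q a)) (η * ((x b : ℝ) - x a))
    rw [abs_sub_comm (η * _)] at e5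
    rw [e4] at e5 e6
    constructor
    · nlinarith
    · have h3 : (D : ℝ) ≤ D * K := by nlinarith
      nlinarith
  have hinj : Set.InjOn (fun a => v (q a)) (Finset.range (K + 1) : Set ℕ) := by
    have key : ∀ a b, a < b → b ≤ K → v (q a) ≠ v (q b) := by
      intro a b hab hb h
      have := (hpair a b hab hb).1
      rw [h, sub_self, abs_zero] at this
      nlinarith
    intro a ha b hb hab
    have ha := Finset.mem_range.1 (Finset.mem_coe.1 ha)
    have hb := Finset.mem_range.1 (Finset.mem_coe.1 hb)
    rcases lt_trichotomy a b with h | h | h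
    · exact absurd hab (key a b h (by omega))
    · exact h
    · exact absurd hab.symm (key b a h (by omega))
  have hδ : 0 < |η| * D / 4 := by
    have : (0 : ℝ) < D := by linarith
    positivity
  have hcard := hv ((Finset.range (K + 1)).image fun a => v (q a)) (by
      intro y hy
      obtain ⟨a, _, rfl⟩ := Finset.mem_image.1 hy
      exact ⟨q a, rfl⟩) (|η| * D / 4) (40 * K * (|η| * D / 4)) (by nlinarith) (by nlinarith) (by
      intro y hy z hz hyz
      obtain ⟨a, ha, rfl⟩ := Finset.mem_image.1 hy
      obtain ⟨b, hb, rfl⟩ := Finset.mem_image.1 hz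
      have ha := Finset.mem_range.1 ha
      have hb := Finset.mem_range.1 hb
      rcases lt_trichotomy a b with h | h | h
      · rw [abs_sub_comm]; exact (hpair a b h (by omega)).1
      · exact absurd (by rw [h]) hyz
      · exact (hpair b a h (by omega)).1) (by
      intro y hy z hz
      obtain ⟨a, ha, rfl⟩ := Finset.mem_image.1 hy
      obtain ⟨b, hb, rfl⟩ := Finset.mem_image.1 hz
      have ha := Finset.mem_range.1 ha
      have hb := Finset.mem_range.1 hb
      rcases lt_trichotomy a b with h | h | h
      · rw [abs_sub_comm]; exact (hpair a b h (by omega)).2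
      · rw [h, sub_self, abs_zero]; positivity
      · exact (hpair b a h (by omega)).2)
  rw [Finset.card_image_of_injOn hinj, Finset.card_range, mul_div_cancel_right₀ _ hδ.ne'] at hcard
  push_cast at hcard
  linarith

open scoped Classical in
/-- The endpoint of a walk is determined, up to a small error, by the slopes used. -/
lemma exists_endpoint {ι D : Type*} [Fintype ι] {α β : ι → ℝ} {t₀ lam : ℝ} {t : D → ℝ} {i e : ℕ}
    {b : ι → ℤ} (ht : ∀ ω, |t ω - t₀| ≤ 1 / 2 ^ e) {p0 p1 : ι} (k : ℕ) (p : ι)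
    (s s' : Fin k → D)
    (h : Reach (Finset.univ.filter fun q => heightLabel α β t₀ i e q = heightLabel α β t₀ i e p0)
      (Finset.univ.filter fun q => heightLabel α β t₀ i e q = heightLabel α β t₀ i e p1)
      (fun ω => farKernel (slopeLabel α β t₀ (t ω) i e) (heightLabel α β t₀ i e)
        (baseLabel α β t₀ i e) b lam) k p s s') :
    ∃ q, |(α q + t₀ * β q) - (α p + t₀ * β p) -
      (β p1 - β p0) * ∑ j, (t (s' j) - t (s j))| ≤ 6 * k * (1 / 2 ^ (i + 2 * e)) := by
  induction k generalizing p with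
  | zero => exact ⟨p, by simp⟩
  | succ k ih =>
    obtain ⟨hp, q', hq', q, hq, h1, h2, h3⟩ := h
    obtain ⟨w, hw⟩ := ih q _ _ h3
    refine ⟨w, ?_⟩
    have hρ : ∀ {v v' : ι}, heightLabel α β t₀ i e v = heightLabel α β t₀ i e v' →
        |β v - β v'| ≤ 1 / 2 ^ (i + e) := fun h =>
      (abs_sub_lt_of_dyad_eq (Prod.mk.inj h).2).le
    have hp' := hρ (Finset.mem_filter.1 hp).2
    have hq0 := hρ (Finset.mem_filter.1 hq).2
    have hq1 := hρ (Finset.mem_filter.1 hq').2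
    have h1' := (abs_sub_lt_of_dyad_eq (Prod.mk.inj (of_farKernel_pos h1).1).2).le
    have h2' := (abs_sub_lt_of_dyad_eq (Prod.mk.inj (of_farKernel_pos h2).1).2).le
    have hmul : ∀ (ω : D) {x : ℝ}, |x| ≤ 1 / 2 ^ (i + e) →
        |(t ω - t₀) * x| ≤ 1 / 2 ^ (i + 2 * e) := by
      intro ω x hx
      rw [abs_mul]
      calc |t ω - t₀| * |x| ≤ 1 / 2 ^ e * (1 / 2 ^ (i + e)) := by
            gcongr
            exact ht ω
        _ = 1 / 2 ^ (i + 2 * e) := by rw [two_mul, ← add_assoc, pow_add _ (i + e)]; field_simp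
    have m1 := abs_le.1 (hmul (s 0) hq1)
    have m2 := abs_le.1 (hmul (s 0) hp')
    have m3 := abs_le.1 (hmul (s' 0) hq0)
    have m4 := abs_le.1 (hmul (s' 0) hq1)
    have h1'' := abs_le.1 h1'
    have h2'' := abs_le.1 h2'
    have hw' := abs_le.1 hw
    rw [Fin.sum_univ_succ]
    simp only [Fin.tail] at hw'
    set Z := ∑ j : Fin k, (t (s' j.succ) - t (s j.succ))
    set ρ : ℝ := 1 / 2 ^ (i + 2 * e)
    push_cast
    rw [abs_le]
    constructor <;> nlinarith [m1.1, m1.2, m2.1, m2.2, m3.1, m3.2, m4.1, m4.2, h1''.1, h1''.2,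
      h2''.1, h2''.2, hw'.1, hw'.2]

lemma abs_sub_dyad_le {l : ℕ} {x : ℝ} : |x - dyad l x / 2 ^ l - 1 / 2 / 2 ^ l| ≤ 1 / 2 / 2 ^ l := by
  have h0 : (0 : ℝ) < 2 ^ l := by positivity
  have h1 := Int.floor_le (2 ^ l * x)
  have h2 := Int.lt_floor_add_one (2 ^ l * x)
  have e1 : x - dyad l x / 2 ^ l - 1 / 2 / 2 ^ l = (2 ^ l * x - dyad l x - 1 / 2) / 2 ^ l := by
    field_simp
  rw [e1, abs_div, abs_of_pos h0]
  gcongr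
  unfold dyad
  rw [abs_le]
  constructor <;> linarith

open scoped Classical in
/-- Main single-scale estimate: a large set of slopes with small defect and projections obeying a
packing bound forces an exponential inequality. -/
lemma decay_bound {ι : Type*} [Fintype ι] {α β : ι → ℝ} (hcard : 0 < Fintype.card ι)
    {n e f L m g a K k' rank : ℕ} (hn : 1 ≤ n) (he : e = L * m + g) (hfg : f ≤ g)
    {X c lam r₀ C u : ℝ} (hX : 0 ≤ X) (hc : c = 1 / (2 * (f * Real.log 2) + 2))
    (hlam : 0 < lam) (hlamX : 8 * (2 * (X + 7) / c + 1) ≤ c * lam)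
    (hK1 : 1 ≤ K) (hK : C * (40 * K) ^ u < K + 1) (hk' : (L + 1) * K ≤ k')
    (hr₀ : r₀ ≤ 1 / 2 ^ (n + 2 * e)) {T : Set ℝ}
    (hdef : ∀ t ∈ T, ∑ i ∈ Finset.range n, scaleDefect α β t e i ≤ X * n * Fintype.card ι)
    (hgain : ∀ t ∈ T, 5 * n * (Fintype.card ι : ℝ) ≤ ∑ i ∈ Finset.range n,
      (jointEntropy α β t i (i + 2 * e) - jointEntropy α β t (i + f) (i + 2 * e)))
    (hpack : ∀ t ∈ T, PackingBound (fun p => α p + t * β p) r₀ C u)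
    {W : Finset ℤ} {z₀ : ℤ} (hWT : ∀ z ∈ W, ∃ t ∈ T, dyad (e + L * m) t = z)
    (hWz : ∀ z ∈ W, z / 2 ^ (L * m) = z₀)
    (hWcard : (2 * (64 * (2 * 2 ^ a) + 1)) ^ m * 2 ^ (L * rank) < W.card) :
    (c / 4 / Real.exp lam) ^ (2 * 2 ^ a) * decayBase (2 * 2 ^ a) ^ (k' * m) ≤
      decayBase (2 * 2 ^ a) ^ (2 * 2 ^ a * rank) := by
  obtain ⟨τ, hτ, hτW⟩ := exists_isSpreadTree (κ := 2 * 2 ^ a) (by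
    have : 1 ≤ 2 ^ a := Nat.one_le_two_pow
    omega) L m rank W z₀ hWz hWcard
  choose t htT htz using fun w => hWT (τ w) (hτW w)
  set k : ℕ := 2 ^ a with hkdef
  have hk1 : 1 ≤ k := Nat.one_le_two_pow
  set t₀ : ℝ := t (fun _ => true) with ht₀
  have hclose : ∀ w, |t w - t₀| ≤ 1 / 2 ^ e := by
    intro w
    have h : ∀ w, dyad e (t w) = z₀ := fun w => by
      rw [← dyad_div e (L * m), htz, hWz _ (hτW w)]
    exact (abs_sub_lt_of_dyad_eq ((h w).trans (h _).symm)).le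
  have hc0 : 0 < c := by
    rw [hc]
    have : 0 < Real.log 2 := Real.log_pos (by norm_num)
    positivity
  obtain ⟨i, hi, hfar, hde⟩ := exists_good_level (t₀ := t₀) (t := t) hcard hn hclose hX hc
    (fun w => hdef _ (htT w)) (fun w => hgain _ (htT w))
  obtain ⟨p0, p1, hp01, p, hp, hcount⟩ := exists_classes_many_reach
    (x := fun w => slopeLabel α β t₀ (t w) i e) (y := heightLabel α β t₀ i e)
    (z := baseLabel α β t₀ i e) (b := fun p => dyad (i + f) (β p)) hcard
    (fun w => baseLabel_eq_of_slopeLabel α β) (baseLabel_eq_of_heightLabel α β) hc0 hlam hlamX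
    hfar hde a
  set d : ℝ := β p1 - β p0 with hd
  have hd1 : 1 / 2 ^ (i + f) ≤ |d| := by
    have h0 : (0 : ℝ) < 2 ^ (i + f) := by positivity
    by_contra! hlt
    rw [lt_div_iff₀ h0] at hlt
    have h1 : |2 ^ (i + f) * β p1 - 2 ^ (i + f) * β p0| < ((1 : ℤ) : ℝ) := by
      rw [← mul_sub, abs_mul, abs_of_pos h0]
      push_cast
      linarith
    have h2 := abs_floor_sub_floor_le h1
    have : |dyad (i + f) (β p1) - dyad (i + f) (β p0)| ≤ 1 := h2
    linarith
  set len : ℝ := 1 / 2 ^ (e + L * m) with hlen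
  have hlen0 : 0 < len := by positivity
  have hd0 : 0 < |d| := lt_of_lt_of_le (by positivity) hd1
  set η : ℝ := d * len with hη
  have hηabs : |η| = |d| * len := by rw [hη, abs_mul, abs_of_pos hlen0]
  have hη0 : η ≠ 0 := mul_ne_zero (abs_pos.1 hd0) hlen0.ne'
  have hρ : 1 / 2 ^ (i + 2 * e) ≤ |η| := by
    rw [hηabs]
    calc (1 : ℝ) / 2 ^ (i + 2 * e) ≤ 1 / 2 ^ (i + f + (e + L * m)) := by
          apply one_div_le_one_div_of_le (by positivity)
          exact pow_le_pow_right₀ one_le_two (by omega)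
      _ = 1 / 2 ^ (i + f) * len := by rw [hlen, pow_add _ (i + f)]; field_simp
      _ ≤ |d| * len := by gcongr
  have hr₀' : r₀ ≤ 16 * |η| := by
    have h1 : (1 : ℝ) / 2 ^ (n + 2 * e) ≤ 1 / 2 ^ (i + 2 * e) := by
      apply one_div_le_one_div_of_le (by positivity)
      exact pow_le_pow_right₀ one_le_two (by omega)
    have := abs_nonneg η
    linarith
  have hchain := chainFree_of_packingBound (x₀ := α p + t₀ * β p) hk1 hK1 hK hη0 hr₀'
    (hpack _ (htT fun _ => true))
  set P : Set ℤ := {σ : ℤ | ∃ q, |(fun p => α p + t₀ * β p) q - (α p + t₀ * β p) - η * σ| ≤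
    7 * k * |η|} with hP
  have hJ : Fintype.card (Fin k ⊕ Fin k) = 2 * k := by simp [two_mul]
  set E := Equiv.sumArrowEquivProdArrow (Fin k) (Fin k) (Fin m → Bool) with hE
  set R : Finset ((Fin k → Fin m → Bool) × (Fin k → Fin m → Bool)) :=
    (Finset.univ.filter fun st =>
        Reach (Finset.univ.filter fun q => heightLabel α β t₀ i e q = heightLabel α β t₀ i e p0)
        (Finset.univ.filter fun q => heightLabel α β t₀ i e q = heightLabel α β t₀ i e p1)
          (fun w => farKernel (slopeLabel α β t₀ (t w) i e) (heightLabel α β t₀ i e)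
            (baseLabel α β t₀ i e) (fun p => dyad (i + f) (β p)) lam) k p st.1 st.2) with hR
  have hdecay := card_mul_decayBase_le (J := Fin k ⊕ Fin k) (P := P) hk' (by omega)
    (by rw [hJ]; exact hchain) m (fun _ => rank)
    (Sum.elim (fun _ w => -τ w) (fun _ => τ)) (by
      rw [hJ]
      rintro (j | j)
      · exact hτ.neg
      · exact hτ) (R.map E.symm.toEmbedding) (by
      intro ω hω
      obtain ⟨st, hst, rfl⟩ := Finset.mem_map.1 hω
      obtain ⟨q, hq⟩ := exists_endpoint hclose k p st.1 st.2 (Finset.mem_filter.1 hst).2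
      refine ⟨q, ?_⟩
      rw [Fintype.sum_sum_type]
      simp only [Sum.elim_inl, Sum.elim_inr]
      have e1 : ∀ j, E.symm st (Sum.inl j) = st.1 j := fun j => rfl
      have e2 : ∀ j, E.symm st (Sum.inr j) = st.2 j := fun j => rfl
      simp only [Equiv.coe_toEmbedding, e1, e2]
      have hsum : |∑ j, (t (st.2 j) - t (st.1 j)) -
          len * ((∑ j, -τ (st.1 j) + ∑ j, τ (st.2 j) : ℤ) : ℝ)| ≤ k * len := by
        push_cast
        rw [Finset.sum_neg_distrib, mul_add, mul_neg, Finset.mul_sum, Finset.mul_sum,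
          neg_add_eq_sub, ← Finset.sum_sub_distrib, ← Finset.sum_sub_distrib]
        calc _ ≤ ∑ j : Fin k, |t (st.2 j) - t (st.1 j) -
              (len * (τ (st.2 j) : ℝ) - len * (τ (st.1 j) : ℝ))| := Finset.abs_sum_le_sum_abs _ _
          _ ≤ ∑ _j : Fin k, len := by
              refine Finset.sum_le_sum fun j _ => ?_
              have h1 := abs_le.1 (abs_sub_dyad_le (l := e + L * m) (x := t (st.2 j)))
              have h2 := abs_le.1 (abs_sub_dyad_le (l := e + L * m) (x := t (st.1 j)))
              rw [htz] at h1 h2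
              have e3 : ∀ y : ℝ, len * y = y / 2 ^ (e + L * m) := fun y => by
                rw [hlen]; field_simp
              have e4 : 1 / 2 / 2 ^ (e + L * m) = len / 2 := by rw [hlen]; ring
              rw [e4] at h1 h2
              rw [e3, e3, abs_le]
              constructor <;> linarith [h1.1, h1.2, h2.1, h2.2]
          _ = k * len := by simp
      set σ : ℝ := ((∑ j, -τ (st.1 j) + ∑ j, τ (st.2 j) : ℤ) : ℝ)
      have e3 : (α q + t₀ * β q) - (α p + t₀ * β p) - η * σ =
          ((α q + t₀ * β q) - (α p + t₀ * β p) - d * ∑ j, (t (st.2 j) - t (st.1 j))) +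
            d * (∑ j, (t (st.2 j) - t (st.1 j)) - len * σ) := by rw [hη]; ring
      show |(α q + t₀ * β q) - (α p + t₀ * β p) - η * σ| ≤ _
      rw [e3]
      refine (abs_add_le _ _).trans ?_
      rw [abs_mul]
      have h5 : 6 * (k : ℝ) * (1 / 2 ^ (i + 2 * e)) ≤ 6 * k * |η| := by gcongr
      have h6 := mul_le_mul_of_nonneg_left hsum hd0.le
      rw [hηabs] at h5 ⊢
      nlinarith [hq, h5, h6])
  rw [Finset.card_map, hJ] at hdecay
  rw [Fintype.card_pi, Finset.prod_const, Finset.card_univ, Fintype.card_bool, Fintype.card_fin]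
    at hcount
  have hq0 : 0 < decayBase (2 * k) := decayBase_pos (by omega)
  simp only [Finset.sum_const, Finset.card_univ, hJ, smul_eq_mul] at hdecay
  have hcountR : (c / 4 / Real.exp lam) ^ (2 * k) * ((2 ^ m : ℕ) : ℝ) ^ (2 * k) ≤ (R.card : ℝ) := by
    convert hcount
  have h7 := (mul_le_mul_of_nonneg_right hcountR (pow_nonneg hq0.le (k' * m))).trans hdecay
  push_cast at h7
  rw [← pow_mul, mul_comm m (2 * k), mul_right_comm, mul_comm ((2 : ℝ) ^ (2 * k * m))] at h7
  exact le_of_mul_le_mul_right h7 (by positivity)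

end Decay

section Core

open scoped Classical in
/-- If no dyadic interval branches much between consecutive scales, the set has few cells. -/
lemma exists_cover_of_no_branching {S : Set ℝ} {B e a : ℕ} (hS : ∀ t ∈ S, |t| ≤ B) {τ : ℝ}
    (hno : ∀ b < a, ∀ (z₀ : ℤ) (W : Finset ℤ), (∀ z ∈ W, ∃ t ∈ S, dyad (2 * (2 ^ b * e)) t = z) →
      (∀ z ∈ W, z / 2 ^ (2 ^ b * e) = z₀) → (W.card : ℝ) ≤ 2 ^ (τ * (2 ^ b * e))) :
    ∃ Z : Finset ℤ, (∀ t ∈ S, dyad (2 ^ a * e) t ∈ Z) ∧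
      (Z.card : ℝ) ≤ (2 * B + 1) * 2 ^ e * 2 ^ (τ * ((2 ^ a - 1) * e)) := by
  induction a with
  | zero =>
    refine ⟨Finset.Icc (-(B * 2 ^ e)) (B * 2 ^ e), fun t ht => ?_, ?_⟩
    · rw [pow_zero, one_mul, Finset.mem_Icc]
      have h0 : (0 : ℝ) < 2 ^ e := by positivity
      obtain ⟨h1, h2⟩ := abs_le.1 (hS t ht)
      constructor
      · refine Int.le_floor.2 ?_
        push_cast
        nlinarith
      · have : (dyad e t : ℝ) ≤ ((B * 2 ^ e : ℤ) : ℝ) := by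
          refine (Int.floor_le _).trans ?_
          push_cast
          nlinarith
        exact_mod_cast this
    · rw [Int.card_Icc]
      have h1 : (B : ℤ) * 2 ^ e + 1 - -(B * 2 ^ e) = ((2 * (B * 2 ^ e) + 1 : ℕ) : ℤ) := by
        push_cast; ring
      rw [h1, Int.toNat_natCast]
      push_cast
      have h2 : (1 : ℝ) ≤ 2 ^ e := one_le_pow₀ one_le_two
      simp only [pow_zero, sub_self, zero_mul, mul_zero, Real.rpow_zero, mul_one]
      nlinarith
  | succ a ih =>
    obtain ⟨Z, hZ, hcard⟩ := ih fun b hb => hno b (by omega)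
    set E := 2 ^ a * e with hE
    have hE2 : 2 ^ (a + 1) * e = 2 * E := by rw [hE]; ring
    set W : ℤ → Finset ℤ := fun z₀ => (Finset.Ico (z₀ * 2 ^ E) ((z₀ + 1) * 2 ^ E)).filter
      fun z => (∃ t ∈ S, dyad (2 * E) t = z) ∧ z / 2 ^ E = z₀ with hW
    refine ⟨Z.biUnion W, fun t ht => ?_, ?_⟩
    · rw [hE2, Finset.mem_biUnion]
      have h1 := dyad_add_mem E E t
      have h2 := dyad_div E E t
      rw [← two_mul] at h1 h2
      exact ⟨dyad E t, hZ t ht, Finset.mem_filter.2 ⟨h1, ⟨t, ht, rfl⟩, h2⟩⟩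
    · have h1 : ∀ z₀ ∈ Z, ((W z₀).card : ℝ) ≤ 2 ^ (τ * (2 ^ a * e)) := fun z₀ _ =>
        hno a (by omega) z₀ (W z₀) (fun z hz => (Finset.mem_filter.1 hz).2.1)
          (fun z hz => (Finset.mem_filter.1 hz).2.2)
      calc ((Z.biUnion W).card : ℝ) ≤ ∑ z₀ ∈ Z, ((W z₀).card : ℝ) := by
            exact_mod_cast Finset.card_biUnion_le
        _ ≤ ∑ _z₀ ∈ Z, (2 : ℝ) ^ (τ * (2 ^ a * e)) := Finset.sum_le_sum h1
        _ = Z.card * (2 : ℝ) ^ (τ * (2 ^ a * e)) := by simp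
        _ ≤ (2 * B + 1) * 2 ^ e * 2 ^ (τ * ((2 ^ a - 1) * e)) * 2 ^ (τ * (2 ^ a * e)) := by
            gcongr
        _ = _ := by
            rw [mul_assoc ((2 * (B : ℝ) + 1) * 2 ^ e), ← Real.rpow_add two_pos]
            congr 2
            rw [pow_succ]
            ring

lemma sum_biUnion_le_sum_sum {ι κ : Type*} [DecidableEq κ] (s : Finset ι) (t : ι → Finset κ)
    {g : κ → ℝ} (hg : ∀ x, 0 ≤ g x) :
    ∑ x ∈ s.biUnion t, g x ≤ ∑ i ∈ s, ∑ x ∈ t i, g x := by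
  classical
  induction s using Finset.induction_on with
  | empty => simp
  | insert i s hi ih =>
    rw [Finset.biUnion_insert, Finset.sum_insert hi]
    have h1 := Finset.sum_union_inter (s₁ := t i) (s₂ := s.biUnion t) (f := g)
    have h2 := Finset.sum_nonneg (s := t i ∩ s.biUnion t) fun x _ => hg x
    linarith

open scoped Classical in
/-- A set of positive dyadic content, split in finitely many pieces, has a piece with a scale of
substantial branching. -/
lemma exists_branching {T : Set ℝ} {Tk : ℕ → Set ℝ} {B M a j₀ : ℕ} (hB : ∀ t ∈ T, |t| ≤ B)
    {τ h : ℝ} (hτ : 0 < τ)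
    (hTk : ∀ k, Tk k ⊆ T) (hcov : ∀ t ∈ T, ∃ k < M, t ∈ Tk k)
    (hcont : ∀ S : Finset (ℕ × ℤ), (∀ t ∈ T, ∃ x ∈ S, dyad x.1 t = x.2) →
      h ≤ ∑ x ∈ S, (2 : ℝ) ^ (-(τ * x.1)))
    (ha : 4 ≤ 2 ^ a * τ) (hj : M * (2 * B + 1) * (2 : ℝ) ^ (-(2 * 2 ^ j₀ : ℝ)) < h) :
    ∃ k < M, ∃ b < a, ∃ (z₀ : ℤ) (W : Finset ℤ),
      (∀ z ∈ W, ∃ t ∈ Tk k, dyad (2 * 2 ^ (j₀ + k * a + b)) t = z) ∧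
      (∀ z ∈ W, z / 2 ^ 2 ^ (j₀ + k * a + b) = z₀) ∧
      (2 : ℝ) ^ (τ / 4 * 2 ^ (j₀ + k * a + b)) < W.card := by
  by_contra! hcon
  have hpow : ∀ k b, 2 ^ b * 2 ^ (j₀ + k * a) = 2 ^ (j₀ + k * a + b) := fun k b => by
    rw [← pow_add, add_comm]
  have hZ : ∀ k, ∃ Z : Finset ℤ, k < M → (∀ t ∈ Tk k, dyad (2 ^ a * 2 ^ (j₀ + k * a)) t ∈ Z) ∧
      (Z.card : ℝ) ≤ (2 * B + 1) * 2 ^ 2 ^ (j₀ + k * a) *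
        2 ^ (τ / 4 * ((2 ^ a - 1) * (2 ^ (j₀ + k * a) : ℕ))) := by
    intro k
    by_cases hk : k < M
    · obtain ⟨Z, h1, h2⟩ := exists_cover_of_no_branching (S := Tk k) (B := B)
        (e := 2 ^ (j₀ + k * a)) (a := a) (fun t ht => hB t (hTk k ht)) (τ := τ / 4) (by
          intro b hb z₀ W hW1 hW2
          rw [hpow] at hW1 hW2
          have := hcon k hk b hb z₀ W hW1 hW2
          refine this.trans (le_of_eq ?_)
          rw [show (2 : ℝ) ^ (j₀ + k * a + b) = ((2 ^ (j₀ + k * a + b) : ℕ) : ℝ) by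
            push_cast; rfl, ← hpow]
          push_cast
          rfl)
      exact ⟨Z, fun _ => ⟨h1, h2⟩⟩
    · exact ⟨∅, fun h => absurd h hk⟩
  choose Z hZ using hZ
  have h1 := hcont ((Finset.range M).biUnion fun k =>
    (Z k).image fun z => ((2 ^ a * 2 ^ (j₀ + k * a) : ℕ), z)) (by
      intro t ht
      obtain ⟨k, hk, htk⟩ := hcov t ht
      refine ⟨(2 ^ a * 2 ^ (j₀ + k * a), dyad (2 ^ a * 2 ^ (j₀ + k * a)) t), ?_, rfl⟩
      rw [Finset.mem_biUnion]
      exact ⟨k, Finset.mem_range.2 hk, Finset.mem_image_of_mem _ ((hZ k hk).1 t htk)⟩)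
  have h2 : ∑ x ∈ (Finset.range M).biUnion (fun k =>
      (Z k).image fun z => ((2 ^ a * 2 ^ (j₀ + k * a) : ℕ), z)), (2 : ℝ) ^ (-(τ * (x.1 : ℝ))) ≤
      ∑ k ∈ Finset.range M, ((2 * B + 1) * (2 : ℝ) ^ (-(2 * 2 ^ j₀ : ℝ))) := by
    refine (sum_biUnion_le_sum_sum _ _ fun x => ?_).trans ?_
    · positivity
    refine Finset.sum_le_sum fun k hk => ?_
    have hk := Finset.mem_range.1 hk
    rw [Finset.sum_image (by intro x _ y _ hxy; exact (Prod.mk.inj hxy).2)]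
    dsimp only
    rw [Finset.sum_const, nsmul_eq_mul]
    refine (mul_le_mul_of_nonneg_right (hZ k hk).2 (by positivity)).trans ?_
    set e : ℝ := 2 ^ (j₀ + k * a) with he
    have hcast : ((2 ^ (j₀ + k * a) : ℕ) : ℝ) = e := by push_cast; rfl
    have hexp : (2 : ℝ) ^ 2 ^ (j₀ + k * a) = (2 : ℝ) ^ e := by
      rw [← hcast, Real.rpow_natCast]
    rw [hexp, hcast, Nat.cast_mul, hcast, mul_assoc, mul_assoc, ← Real.rpow_add two_pos,
      ← Real.rpow_add two_pos]
    refine mul_le_mul_of_nonneg_left ?_ (by positivity)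
    refine Real.rpow_le_rpow_of_exponent_le one_le_two ?_
    have he0 : (0 : ℝ) < e := by positivity
    have hej : (2 : ℝ) ^ j₀ ≤ e := pow_le_pow_right₀ one_le_two (by omega)
    push_cast
    nlinarith [mul_pos hτ he0, mul_le_mul_of_nonneg_right ha he0.le]
  rw [Finset.sum_const, Finset.card_range, nsmul_eq_mul] at h2
  linarith

lemma eventually_linear_le_two_pow (x y : ℝ) : ∀ᶠ a : ℕ in atTop, x * a + y ≤ 2 ^ a := by
  have h1 : Tendsto (fun a : ℕ => (a : ℝ) ^ 1 / 2 ^ a) atTop (𝓝 0) :=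
    tendsto_pow_const_div_const_pow_of_one_lt 1 one_lt_two
  have h2 : Tendsto (fun a : ℕ => (a : ℝ) ^ 0 / 2 ^ a) atTop (𝓝 0) :=
    tendsto_pow_const_div_const_pow_of_one_lt 0 one_lt_two
  have h3 := (h1.const_mul x).add (h2.const_mul y)
  rw [mul_zero, mul_zero, add_zero] at h3
  filter_upwards [h3.eventually (gt_mem_nhds zero_lt_one)] with a ha
  have h0 : (0 : ℝ) < 2 ^ a := by positivity
  have e1 : x * ((a : ℝ) ^ 1 / 2 ^ a) + y * ((a : ℝ) ^ 0 / 2 ^ a) = (x * a + y) / 2 ^ a := by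
    rw [pow_one, pow_zero]; ring
  rw [e1, div_lt_one h0] at ha
  exact ha.le

lemma exists_chain_length {C u : ℝ} (hu : u < 1) :
    ∃ K : ℕ, 1 ≤ K ∧ C * (40 * K) ^ u < K + 1 := by
  have h1 : Tendsto (fun K : ℕ => (40 * K : ℝ) ^ (1 - u)) atTop atTop :=
    (tendsto_rpow_atTop (by linarith)).comp
      (tendsto_natCast_atTop_atTop.const_mul_atTop (by norm_num))
  obtain ⟨K, hK1, hK⟩ := ((eventually_ge_atTop 1).and
    (h1.eventually_ge_atTop (40 * C))).exists
  refine ⟨K, hK1, ?_⟩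
  have hK0 : (0 : ℝ) < K := by exact_mod_cast hK1
  rw [Real.rpow_sub (by positivity), Real.rpow_one, le_div_iff₀ (by positivity)] at hK
  nlinarith

set_option maxHeartbeats 800000 in
open scoped Classical in
/-- At a large scale `e`, slopes with branching and small defect are contradictory. -/
lemma exists_scale_contradiction (f K : ℕ) (hK1 : 1 ≤ K) {τ : ℝ} (hτ : 0 < τ) :
    ∃ ε : ℝ, 0 < ε ∧ ∃ e₀ : ℕ, ∀ e ≥ e₀, ∀ (ι : Type) [Fintype ι] (α β : ι → ℝ) (n : ℕ)
      (r₀ C u : ℝ) (T : Set ℝ) (W : Finset ℤ) (z₀ : ℤ), 0 < Fintype.card ι → 1 ≤ n →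
      C * (40 * K) ^ u < K + 1 → r₀ ≤ 1 / 2 ^ (n + 2 * e) →
      (∀ t ∈ T, ∑ i ∈ Finset.range n, scaleDefect α β t e i ≤ ε * e * n * Fintype.card ι) →
      (∀ t ∈ T, 5 * n * (Fintype.card ι : ℝ) ≤ ∑ i ∈ Finset.range n,
        (jointEntropy α β t i (i + 2 * e) - jointEntropy α β t (i + f) (i + 2 * e))) →
      (∀ t ∈ T, PackingBound (fun p => α p + t * β p) r₀ C u) →
      (∀ z ∈ W, ∃ t ∈ T, dyad (2 * e) t = z) → (∀ z ∈ W, z / 2 ^ e = z₀) →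
      (2 : ℝ) ^ (τ * e) < W.card → False := by
  obtain ⟨a, ha⟩ := (eventually_linear_le_two_pow (4 / τ * K / (τ / 2))
    ((4 / τ * 9 + 2) * K / (τ / 2))).exists
  set L : ℕ := ⌈4 * (a + 9) / τ⌉₊ with hL
  have hL1 : 4 * (a + 9) / τ ≤ L := Nat.le_ceil _
  have hL2 : (L : ℝ) < 4 * (a + 9) / τ + 1 := Nat.ceil_lt_add_one (by positivity)
  have hL0 : (0 : ℝ) < L := lt_of_lt_of_le (by positivity) hL1
  have hLpos : 0 < L := by exact_mod_cast hL0
  have hκK : ((L : ℝ) + 1) * K ≤ τ / 2 * 2 ^ a := by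
    have h1 : ((L : ℝ) + 1) * K ≤ (4 * (a + 9) / τ + 2) * K := by
      exact mul_le_mul_of_nonneg_right (by linarith) (Nat.cast_nonneg K)
    refine h1.trans ?_
    have h2 := mul_le_mul_of_nonneg_left ha (show 0 ≤ τ / 2 by positivity)
    refine le_trans (le_of_eq ?_) h2
    field_simp
    ring
  have hτL : (a : ℝ) + 9 ≤ τ * L / 4 := by
    rw [div_le_iff₀ hτ] at hL1
    linarith
  set κ : ℕ := 2 * 2 ^ a with hκ
  have hκ1 : 1 ≤ κ := by
    have : 1 ≤ 2 ^ a := Nat.one_le_two_pow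
    omega
  set q := decayBase κ with hq
  have hq0 : 0 < q := decayBase_pos hκ1
  set Q : ℝ := -Real.log q with hQ
  have hQ0 : 0 < Q := by
    have := Real.log_neg hq0 (decayBase_lt_one hκ1)
    linarith
  set c : ℝ := 1 / (2 * (f * Real.log 2) + 2) with hc
  have hlog2 : 0 < Real.log 2 := Real.log_pos (by norm_num)
  have hc0 : 0 < c := by positivity
  set ε : ℝ := c ^ 2 / 16 * (Q * τ / (8 * L)) with hε
  have hε0 : 0 < ε := by positivity
  set const : ℝ := 8 * (14 / c + 1) / c + Real.log (4 / c) + Q + Q * τ / 4 * (f / L + 1) with hconst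
  obtain ⟨e₀, he₀⟩ := exists_nat_gt (max (const / (Q * τ / (8 * L)))
    (4 / τ * (f + L) + (f + L)))
  refine ⟨ε, hε0, e₀, ?_⟩
  intro e he ι _ α β n r₀ C u T W z₀ hcard hn hK hr₀ hdef hgain hpack hWT hWz hWcard
  have heR : (e₀ : ℝ) ≤ e := by exact_mod_cast he
  have he1 : const / (Q * τ / (8 * L)) < e := lt_of_lt_of_le
    (lt_of_le_of_lt (le_max_left _ _) he₀) heR
  have he2 : 4 / τ * (f + L) + (f + L) < (e : ℝ) := lt_of_lt_of_le
    (lt_of_le_of_lt (le_max_right _ _) he₀) heR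
  have hfe : f ≤ e := by
    have h1 : (0 : ℝ) ≤ 4 / τ * (f + L) := by positivity
    have : (f : ℝ) ≤ e := by linarith
    exact_mod_cast this
  set m : ℕ := (e - f) / L with hm
  set g : ℕ := (e - f) % L + f with hg
  have heq : e = L * m + g := by
    have : L * m + (e - f) % L = e - f := Nat.div_add_mod (e - f) L
    omega
  have hgL : g < f + L := by
    have := Nat.mod_lt (e - f) hLpos
    omega
  have heqR : (e : ℝ) = L * m + g := by exact_mod_cast heq
  have hgR : (g : ℝ) ≤ f + L := by exact_mod_cast hgL.le
  have hgm : (g : ℝ) ≤ τ * L * m / 4 := by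
    have h1 : 4 / τ * (f + L) ≤ L * m := by linarith
    have h2 : (f : ℝ) + L ≤ τ / 4 * (L * m) := by
      have := mul_le_mul_of_nonneg_left h1 (show 0 ≤ τ / 4 by positivity)
      have e1 : τ / 4 * (4 / τ * ((f : ℝ) + L)) = f + L := by field_simp
      linarith
    linarith
  set rank : ℕ := ⌊τ * m / 2⌋₊ with hrank
  have hrank1 : (rank : ℝ) ≤ τ * m / 2 := Nat.floor_le (by positivity)
  have hrank2 : τ * m / 2 < rank + 1 := Nat.lt_floor_add_one _
  set W' : Finset ℤ := W.image fun z => z / 2 ^ g with hW'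
  have h2e : e + L * m + g = 2 * e := by omega
  have hWW' : W.card ≤ W'.card * 2 ^ g := by
    rw [mul_comm]
    refine Finset.card_le_mul_card_image W _ fun y _ => ?_
    have hsub : W.filter (fun z => z / 2 ^ g = y) ⊆ Finset.Ico (y * 2 ^ g) ((y + 1) * 2 ^ g) := by
      intro z hz
      have h1 := (Finset.mem_filter.1 hz).2
      have h0 : (0 : ℤ) < 2 ^ g := by positivity
      rw [Finset.mem_Ico]
      constructor
      · rw [← h1]; exact Int.ediv_mul_le _ h0.ne'
      · rw [← h1]; exact Int.lt_ediv_add_one_mul_self _ h0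
    refine (Finset.card_le_card hsub).trans ?_
    rw [Int.card_Ico, ← sub_mul, add_sub_cancel_left, one_mul]
    rw [show ((2 : ℤ) ^ g) = ((2 ^ g : ℕ) : ℤ) by push_cast; rfl, Int.toNat_natCast]
  have hbound := decay_bound hcard (e := e) (f := f) (L := L) (m := m) (g := g) (a := a) (K := K)
    (k' := (L + 1) * K) (rank := rank) hn heq (by omega) (X := ε * e)
    (lam := 8 * (2 * (ε * e + 7) / c + 1) / c) (by positivity) hc (by positivity)
    (le_of_eq (by field_simp)) hK1 hK le_rfl hr₀ hdef hgain hpack (W := W') (z₀ := z₀) (by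
      intro z hz
      obtain ⟨y, hy, rfl⟩ := Finset.mem_image.1 hz
      obtain ⟨t, ht, hty⟩ := hWT y hy
      refine ⟨t, ht, ?_⟩
      rw [← hty, ← h2e, dyad_div]) (by
      intro z hz
      obtain ⟨y, hy, rfl⟩ := Finset.mem_image.1 hz
      rw [← hWz y hy, Int.ediv_ediv_of_nonneg (by positivity), ← pow_add, heq, add_comm g]) (by
      have h1 : (2 * (64 * (2 * 2 ^ a) + 1)) ≤ 2 ^ (a + 9) := by
        have : 1 ≤ 2 ^ a := Nat.one_le_two_pow
        rw [pow_add]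
        omega
      have h2 : (2 * (64 * (2 * 2 ^ a) + 1)) ^ m * 2 ^ (L * rank) ≤
          2 ^ ((a + 9) * m + L * rank) := by
        rw [pow_add, pow_mul 2 (a + 9) m]
        exact Nat.mul_le_mul_right _ (Nat.pow_le_pow_left h1 m)
      refine lt_of_le_of_lt h2 ?_
      have h3 : 2 ^ ((a + 9) * m + L * rank) * 2 ^ g < W'.card * 2 ^ g := by
        refine lt_of_lt_of_le ?_ hWW'
        have h4 : ((2 ^ ((a + 9) * m + L * rank) * 2 ^ g : ℕ) : ℝ) < (W.card : ℝ) := by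
          refine lt_of_le_of_lt ?_ hWcard
          push_cast
          rw [← pow_add, ← Real.rpow_natCast]
          refine Real.rpow_le_rpow_of_exponent_le one_le_two ?_
          push_cast
          rw [heqR]
          have h5 := mul_le_mul_of_nonneg_right hτL (Nat.cast_nonneg (α := ℝ) m)
          have h6 := mul_le_mul_of_nonneg_left hrank1 hL0.le
          have h7 : 0 ≤ τ * (g : ℝ) := by positivity
          linarith
        exact_mod_cast h4
      exact lt_of_mul_lt_mul_right h3 (Nat.zero_le _))
  rw [← hκ, ← hq] at hbound
  set lam : ℝ := 8 * (2 * (ε * e + 7) / c + 1) / c with hlam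
  have hlog := Real.log_le_log (by positivity) hbound
  rw [Real.log_mul (by positivity) (by positivity), Real.log_pow, Real.log_pow, Real.log_pow,
    Real.log_div (by positivity) (by positivity), Real.log_exp] at hlog
  have hlogq : Real.log q = -Q := by rw [hQ, neg_neg]
  have hlogc : Real.log (c / 4) = -Real.log (4 / c) := by
    rw [← Real.log_inv, inv_div]
  rw [hlogq, hlogc] at hlog
  push_cast at hlog
  have hκR : (κ : ℝ) = 2 * 2 ^ a := by rw [hκ]; push_cast; rfl
  have hκ0 : (0 : ℝ) < κ := by exact_mod_cast hκ1
  have hkm : ((L : ℝ) + 1) * K * m ≤ κ * (τ * m / 4) := by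
    have := mul_le_mul_of_nonneg_right hκK (Nat.cast_nonneg (α := ℝ) m)
    rw [hκR]
    linarith
  have hfin : Q * (τ * m / 4 - 1) ≤ lam + Real.log (4 / c) := by
    refine le_of_mul_le_mul_left ?_ hκ0
    have h1 := mul_le_mul_of_nonneg_right hkm hQ0.le
    have h2 : κ * Q * (τ * m / 2 - 1) ≤ κ * Q * rank := by
      gcongr
      linarith
    nlinarith
  have hm2 : (e : ℝ) / L - (f / L + 1) ≤ m := by
    rw [sub_le_iff_le_add, div_le_iff₀ hL0]
    have : ((m : ℝ) + (f / L + 1)) * L = L * m + f + L := by field_simp; ring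
    rw [this]
    linarith
  have h8 : Q * τ / 4 * ((e : ℝ) / L - (f / L + 1)) ≤ Q * τ / 4 * m := by gcongr
  have h9 : lam = (Q * τ / (8 * L)) * e + 8 * (14 / c + 1) / c := by
    rw [hlam, hε]
    field_simp
    ring
  have h10 : Q * τ / 4 * ((e : ℝ) / L) = 2 * ((Q * τ / (8 * L)) * e) := by
    field_simp
    ring
  rw [div_lt_iff₀ (by positivity)] at he1
  rw [h9] at hfin
  nlinarith

end Core

section CoreTheorem

lemma one_div_le_abs_sub_of_dyad {l : ℕ} {v w : ℝ} (h : 2 ≤ |dyad l v - dyad l w|) :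
    1 / 2 ^ l ≤ |v - w| := by
  by_contra! hcon
  have h0 : (0 : ℝ) < 2 ^ l := by positivity
  have h1 : |2 ^ l * v - 2 ^ l * w| < ((1 : ℤ) : ℝ) := by
    rw [← mul_sub, abs_mul, abs_of_pos h0]
    rw [lt_div_iff₀ h0] at hcon
    push_cast
    linarith
  have := abs_floor_sub_floor_le h1
  unfold dyad at h
  omega

/-- A packing bound controls the number of dyadic cells met by the values. -/
lemma card_image_dyad_le {ι : Type*} [Fintype ι] {v : ι → ℝ} {r₀ C u R : ℝ} {l : ℕ}
    (hv : PackingBound v r₀ C u) (hr₀ : r₀ ≤ 1 / 2 ^ l) (hR : 1 / 2 ^ l ≤ R)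
    (hdist : ∀ p q, |v p - v q| ≤ R) :
    ((Finset.univ.image fun p => dyad l (v p)).card : ℝ) ≤ 2 * (C * (R / (1 / 2 ^ l)) ^ u) := by
  classical
  set Z := Finset.univ.image fun p => dyad l (v p) with hZ
  have key : ∀ Y ⊆ Z, (∀ y ∈ Y, ∀ y' ∈ Y, y ≠ y' → 2 ≤ |y - y'|) →
      (Y.card : ℝ) ≤ C * (R / (1 / 2 ^ l)) ^ u := by
    intro Y hYZ hY
    rcases Y.eq_empty_or_nonempty with hempty | ⟨y₀, hy₀⟩
    · have := hv ∅ (by simp) (1 / 2 ^ l) R hr₀ hR (by simp) (by simp)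
      rw [hempty]
      simpa using this
    have hq : ∀ y ∈ Y, ∃ q, dyad l (v q) = y := fun y hy => by
      simpa [hZ] using hYZ hy
    have : Nonempty ι := ⟨(hq y₀ hy₀).choose⟩
    choose! q hq using hq
    have hcard : (Y.image fun y => v (q y)).card = Y.card := by
      refine Finset.card_image_of_injOn fun y hy y' hy' h => ?_
      have h : v (q y) = v (q y') := h
      rw [← hq y hy, ← hq y' hy', h]
    rw [← hcard]
    refine hv _ ?_ _ _ hr₀ hR ?_ ?_
    · intro x hx
      obtain ⟨y, _, rfl⟩ := Finset.mem_image.1 hx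
      exact ⟨_, rfl⟩
    · intro x hx x' hx' hne
      obtain ⟨y, hy, rfl⟩ := Finset.mem_image.1 hx
      obtain ⟨y', hy', rfl⟩ := Finset.mem_image.1 hx'
      refine one_div_le_abs_sub_of_dyad ?_
      rw [hq y hy, hq y' hy']
      exact hY y hy y' hy' fun h => hne (by rw [h])
    · intro x hx x' hx'
      obtain ⟨y, hy, rfl⟩ := Finset.mem_image.1 hx
      obtain ⟨y', hy', rfl⟩ := Finset.mem_image.1 hx'
      exact hdist _ _
  have h1 := key (Z.filter fun z => z % 2 = 0) (Finset.filter_subset _ _) (by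
    intro y hy y' hy' hne
    have := (Finset.mem_filter.1 hy).2
    have := (Finset.mem_filter.1 hy').2
    rcases abs_cases (y - y') with h | h <;> omega)
  have h2 := key (Z.filter fun z => ¬ z % 2 = 0) (Finset.filter_subset _ _) (by
    intro y hy y' hy' hne
    have := (Finset.mem_filter.1 hy).2
    have := (Finset.mem_filter.1 hy').2
    rcases abs_cases (y - y') with h | h <;> omega)
  have h3 := Finset.card_filter_add_card_filter_not (s := Z) (fun z => z % 2 = 0)
  have h4 : (Z.card : ℝ) = (Z.filter fun z => z % 2 = 0).card +
      (Z.filter fun z => ¬ z % 2 = 0).card := by exact_mod_cast h3.symm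
  rw [h4]
  linarith

set_option maxHeartbeats 800000 in
/-- A projection with few values is far from injective on most scales. -/
lemma jointEntropy_gain {ι : Type*} [Fintype ι] {α β : ι → ℝ} {t : ℝ} (hcard : 0 < Fintype.card ι)
    (hα : ∀ p, 0 ≤ α p ∧ α p < 1) (hβ : ∀ p, 0 ≤ β p ∧ β p < 1) {n E f B : ℕ}
    (hinj : Function.Injective fun p => (dyad n (α p), dyad n (β p)))
    (hβinj : ∀ p q, dyad n (β p) = dyad n (β q) → β p = β q) (ht : |t| ≤ B)
    {C u σ r₀ : ℝ} (hC : 0 < C) (hσ : σ * n ≤ Real.log (Fintype.card ι))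
    (hr₀ : r₀ ≤ 1 / 2 ^ (n + 2 * E)) (hpack : PackingBound (fun p => α p + t * β p) r₀ C u)
    (hf : 10 ≤ f * (σ - u * Real.log 2))
    (hn : f * (u * (2 * E * Real.log 2) + Real.log (2 * C) + u * Real.log (1 + B) +
      f * Real.log 2 + Real.log 8) ≤ 5 * n) {e : ℕ} (he : e ≤ E) :
    5 * n * (Fintype.card ι : ℝ) ≤ ∑ i ∈ Finset.range n,
      (jointEntropy α β t i (i + 2 * e) - jointEntropy α β t (i + f) (i + 2 * e)) := by
  classical
  refine le_trans ?_ (sum_jointEntropy_sub_ge α β t n f e (n + 2 * E) (by omega))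
  set l := n + 2 * E with hl
  have hB0 : (0 : ℝ) ≤ B := Nat.cast_nonneg B
  have h2l : (0 : ℝ) < 2 ^ l := by positivity
  have hcell := card_image_dyad_le (R := 1 + B) hpack hr₀ (by
    have h1 : (1 : ℝ) / 2 ^ l ≤ 1 := by
      rw [div_le_one h2l]
      exact one_le_pow₀ one_le_two
    linarith) (by
      intro p q
      have h1 : |α p - α q| ≤ 1 := by
        rw [abs_le]
        constructor <;> linarith [hα p, hα q]
      have h2 : |β p - β q| ≤ 1 := by
        rw [abs_le]
        constructor <;> linarith [hβ p, hβ q]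
      calc |α p + t * β p - (α q + t * β q)| = |(α p - α q) + t * (β p - β q)| := by
            congr 1; ring
        _ ≤ |α p - α q| + |t * (β p - β q)| := abs_add_le _ _
        _ = |α p - α q| + |t| * |β p - β q| := by rw [abs_mul]
        _ ≤ 1 + B * 1 := by gcongr
        _ = 1 + B := by ring)
  have hlogm : Real.log (2 * (C * ((1 + B) / (1 / 2 ^ l)) ^ u)) =
      Real.log (2 * C) + u * Real.log (1 + B) + u * (l * Real.log 2) := by
    rw [← mul_assoc, Real.log_mul (by positivity) (by positivity), Real.log_rpow (by positivity),
      div_div_eq_mul_div, div_one,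
      Real.log_mul (show 1 + (B : ℝ) ≠ 0 by positivity) h2l.ne', Real.log_pow]
    ring
  have hm0 : 0 < 2 * (C * ((1 + (B : ℝ)) / (1 / 2 ^ l)) ^ u) :=
    mul_pos two_pos (mul_pos hC (Real.rpow_pos_of_pos (by positivity) u))
  have h0 := card_mul_log_card_le α β t (fun p => (hβ p).1) (fun p => (hβ p).2)
    (l := l) (fun p => Finset.mem_image.2 ⟨p, Finset.mem_univ p, rfl⟩) hm0 hcell
  rw [hlogm] at h0
  have h1 := jointEntropy_le_add_left α β t 0 l f
  rw [zero_add] at h1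
  have h2 := jointEntropy_diag_le α β t hinj hβinj
  have h3 := jointEntropy_anti α β t (le_refl n) (show n ≤ l by omega)
  set N : ℝ := (Fintype.card ι : ℝ) with hN
  have hN0 : 0 < N := by rw [hN]; exact_mod_cast hcard
  have hlR : (l : ℝ) = n + 2 * E := by rw [hl]; push_cast; ring
  rw [hlR] at h0
  have h4 : N * (σ * n) ≤ N * Real.log N := by gcongr
  set c : ℝ := u * (2 * E * Real.log 2) + Real.log (2 * C) + u * Real.log (1 + B) +
    f * Real.log 2 + Real.log 8 with hc
  have h5 : N * ((σ - u * Real.log 2) * n - c) ≤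
      jointEntropy α β t f l - jointEntropy α β t n l := by
    rw [hc]
    linarith
  refine le_trans ?_ (mul_le_mul_of_nonneg_left h5 (Nat.cast_nonneg (α := ℝ) f))
  have h7 := mul_le_mul_of_nonneg_right hf (Nat.cast_nonneg (α := ℝ) n)
  have h8 : N * (5 * n) ≤ N * (f * (σ - u * Real.log 2) * n - f * c) :=
    mul_le_mul_of_nonneg_left (by linarith) hN0.le
  linarith

/-- Some block of consecutive scales carries little total defect. -/
lemma exists_block_small {a M j₀ : ℕ} {x : ℕ → ℝ} (hx : ∀ j, 0 ≤ x j) {X ε : ℝ}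
    (hsum : ∑ j ∈ Finset.range (j₀ + M * a), x j ≤ X) (hX : X < M * ε) :
    ∃ k < M, ∀ b < a, x (j₀ + k * a + b) ≤ ε := by
  by_contra! hcon
  choose! b hb hbx using hcon
  have hinj : Set.InjOn (fun k => j₀ + k * a + b k) (Finset.range M) := by
    intro k hk k' hk' h
    have hk := hb k (Finset.mem_range.1 hk)
    have hk' := hb k' (Finset.mem_range.1 hk')
    have h : j₀ + k * a + b k = j₀ + k' * a + b k' := h
    rcases lt_trichotomy k k' with hlt | heq | hlt
    · have := Nat.mul_le_mul_right a hlt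
      rw [Nat.succ_mul] at this
      omega
    · exact heq
    · have := Nat.mul_le_mul_right a hlt
      rw [Nat.succ_mul] at this
      omega
  have h1 : ∑ k ∈ Finset.range M, x (j₀ + k * a + b k) ≤
      ∑ j ∈ Finset.range (j₀ + M * a), x j := by
    rw [← Finset.sum_image (f := x) hinj]
    refine Finset.sum_le_sum_of_subset_of_nonneg ?_ fun _ _ _ => hx _
    intro j hj
    obtain ⟨k, hk, rfl⟩ := Finset.mem_image.1 hj
    have hk := Finset.mem_range.1 hk
    have := hb k hk
    have h2 := Nat.mul_le_mul_right a hk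
    rw [Nat.succ_mul] at h2
    rw [Finset.mem_range]
    omega
  have h2 : M * ε ≤ ∑ k ∈ Finset.range M, x (j₀ + k * a + b k) := by
    rw [← nsmul_eq_mul]
    refine (Finset.card_nsmul_le_sum (Finset.range M) _ ε fun k hk =>
      (hbx k (Finset.mem_range.1 hk)).le).trans' ?_
    rw [Finset.card_range]
  linarith

/-- Quantitative projection theorem: a set of slopes of positive dyadic content cannot consist of
projections all of whose images of `A × A` have dimension `u < min (2 s) 1`. -/
theorem projection_core {s u C τ h : ℝ} (hu1 : u < 1) (hus : u < 2 * s) (hC : 0 < C)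
    (hτ : 0 < τ) (hh : 0 < h) (B : ℕ) :
    ∃ n N' : ℕ, 1 ≤ n ∧ ∀ (A : Finset ℝ) (T : Set ℝ), (∀ a ∈ A, 0 ≤ a ∧ a < 1) →
      (∀ a ∈ A, ∀ b ∈ A, dyad n a = dyad n b → a = b) → (2 : ℝ) ^ (s * n) ≤ A.card →
      (∀ t ∈ T, |t| ≤ B) →
      (∀ S : Finset (ℕ × ℤ), (∀ t ∈ T, ∃ x ∈ S, dyad x.1 t = x.2) →
        h ≤ ∑ x ∈ S, (2 : ℝ) ^ (-(τ * x.1))) →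
      (∀ t ∈ T, PackingBound (fun p : A × A => (p.1 : ℝ) + t * p.2) (1 / 2 ^ N') C u) →
      False := by
  have hlog2 : 0 < Real.log 2 := Real.log_pos (by norm_num)
  set γ : ℝ := (2 * s - u) * Real.log 2 with hγ
  have hγ0 : 0 < γ := mul_pos (by linarith) hlog2
  obtain ⟨f, hf⟩ := exists_nat_gt (10 / γ)
  have hf10 : 10 ≤ f * γ := by
    rw [div_lt_iff₀ hγ0] at hf
    exact hf.le
  obtain ⟨K, hK1, hK⟩ := exists_chain_length (C := C) hu1
  obtain ⟨ε, hε, e₀, hcontra⟩ := exists_scale_contradiction f K hK1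
    (τ := τ / 4) (by positivity)
  obtain ⟨M, hM⟩ := exists_nat_gt (4 / ε)
  rw [div_lt_iff₀ hε] at hM
  obtain ⟨a, ha⟩ := pow_unbounded_of_one_lt (4 / τ) (one_lt_two (α := ℝ))
  rw [div_lt_iff₀ hτ] at ha
  obtain ⟨j₀, hj₀, hj₀e⟩ : ∃ j₀ : ℕ, M * (2 * B + 1) * (2 : ℝ) ^ (-(2 * 2 ^ j₀ : ℝ)) < h ∧
      e₀ ≤ 2 ^ j₀ := by
    have h1 : Tendsto (fun j : ℕ => M * (2 * B + 1) * (2 : ℝ) ^ (-(2 * 2 ^ j : ℝ))) atTop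
        (𝓝 0) := by
      have h2 : Tendsto (fun j : ℕ => (2 * 2 ^ j : ℝ)) atTop atTop :=
        (tendsto_pow_atTop_atTop_of_one_lt one_lt_two).const_mul_atTop two_pos
      have h3 := (tendsto_rpow_atBot_of_base_gt_one 2 one_lt_two).comp
        (tendsto_neg_atTop_atBot.comp h2)
      simpa using h3.const_mul (M * (2 * B + 1) : ℝ)
    exact ((h1.eventually (gt_mem_nhds hh)).and
      ((tendsto_pow_atTop_atTop_of_one_lt one_lt_two).eventually_ge_atTop e₀)).exists
  set J := j₀ + M * a with hJ
  set E := 2 ^ J with hE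
  obtain ⟨n, hn⟩ := exists_nat_gt (max (E : ℝ) (f * (u * (2 * E * Real.log 2) +
    Real.log (2 * C) + u * Real.log (1 + B) + f * Real.log 2 + Real.log 8) / 5))
  have hnE : E ≤ n := by
    have := (le_max_left _ _).trans hn.le
    exact_mod_cast this
  have hn5 : f * (u * (2 * E * Real.log 2) +
      Real.log (2 * C) + u * Real.log (1 + B) + f * Real.log 2 + Real.log 8) ≤ 5 * n := by
    have := (le_max_right _ _).trans hn.le
    linarith
  have hn1 : 1 ≤ n := le_trans Nat.one_le_two_pow hnE
  refine ⟨n, n + 2 * E, hn1, ?_⟩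
  intro A T hA hAinj hAcard hT hcont hpack
  set α : A × A → ℝ := fun p => p.1 with hα
  set β : A × A → ℝ := fun p => p.2 with hβ
  have hApos : (0 : ℝ) < A.card := lt_of_lt_of_le (by positivity) hAcard
  have hcardeq : (Fintype.card (A × A) : ℝ) = A.card * A.card := by simp
  have hcard : 0 < Fintype.card (A × A) := by
    have : (0 : ℝ) < Fintype.card (A × A) := by rw [hcardeq]; positivity
    exact_mod_cast this
  have hσ : 2 * s * Real.log 2 * n ≤ Real.log (Fintype.card (A × A)) := by
    rw [hcardeq, Real.log_mul hApos.ne' hApos.ne']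
    have h1 := Real.log_le_log (by positivity) hAcard
    rw [Real.log_rpow two_pos] at h1
    linarith
  set Tk : ℕ → Set ℝ := fun k => {t ∈ T | ∀ b < a, ∑ i ∈ Finset.range n,
    scaleDefect α β t (2 ^ (j₀ + k * a + b)) i ≤
      ε * ((2 ^ (j₀ + k * a + b) : ℕ) : ℝ) * n * Fintype.card (A × A)} with hTk
  have hNpos : (0 : ℝ) < n * Fintype.card (A × A) := by
    have : (0 : ℝ) < n := by exact_mod_cast hn1
    have : (0 : ℝ) < Fintype.card (A × A) := by exact_mod_cast hcard
    positivity
  have hcov : ∀ t ∈ T, ∃ k < M, t ∈ Tk k := by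
    intro t ht
    obtain ⟨k, hk, hkb⟩ := exists_block_small (a := a) (M := M) (j₀ := j₀)
      (x := fun j => (∑ i ∈ Finset.range n, scaleDefect α β t (2 ^ j) i) / 2 ^ j)
      (fun j => div_nonneg (Finset.sum_nonneg fun i _ => scaleDefect_nonneg α β t _ i)
        (by positivity)) (ε := ε * (n * Fintype.card (A × A)))
      (sum_sum_scaleDefect_le α β t n J hnE) (by nlinarith)
    refine ⟨k, hk, ht, fun b hb => ?_⟩
    have h1 := hkb b hb
    rw [div_le_iff₀ (by positivity)] at h1
    push_cast
    linarith
  obtain ⟨k, hk, b, hb, z₀, W, hW1, hW2, hW3⟩ := exists_branching (Tk := Tk) hT hτ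
    (fun k t ht => ht.1) hcov hcont ha.le hj₀
  have hscale : j₀ + k * a + b ≤ J := by
    have h2 := Nat.mul_le_mul_right a hk
    rw [Nat.succ_mul] at h2
    omega
  set e := 2 ^ (j₀ + k * a + b) with he
  have heE : e ≤ E := Nat.pow_le_pow_right two_pos hscale
  have he₀ : e₀ ≤ e := hj₀e.trans (Nat.pow_le_pow_right two_pos (by omega))
  refine hcontra e he₀ (A × A) α β n (1 / 2 ^ (n + 2 * E)) C u (Tk k) W z₀ hcard hn1 hK ?_ ?_ ?_ ?_
    hW1 hW2 ?_
  · exact one_div_pow_le_one_div_pow_of_le one_le_two (by omega)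
  · exact fun t ht => ht.2 b hb
  · intro t ht
    refine jointEntropy_gain hcard (fun p => hA _ p.1.2) (fun p => hA _ p.2.2) ?_ ?_ (hT t ht.1) hC
      hσ le_rfl (hpack t ht.1) ?_ hn5 heE
    · intro p q hpq
      obtain ⟨h1, h2⟩ := Prod.mk.inj hpq
      exact Prod.ext (Subtype.ext (hAinj _ p.1.2 _ q.1.2 h1))
        (Subtype.ext (hAinj _ p.2.2 _ q.2.2 h2))
    · exact fun p q h => hAinj _ p.2.2 _ q.2.2 h
    · refine hf10.trans (le_of_eq ?_)
      rw [hγ]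
      ring
  · exact fun t ht => hpack t ht.1
  · refine lt_of_eq_of_lt ?_ hW3
    rw [he]
    push_cast
    rfl

end CoreTheorem

section AssouadCover

/-- The covering condition in the definition of the Assouad dimension. -/
def AssouadCover (E : Set ℝ) (α C : ℝ) : Prop :=
  ∀ x ∈ E, ∀ r R : ℝ, 0 < r → r < R →
    ∃ 𝒰 : Finset (Set ℝ), (E ∩ closedBall x R ⊆ ⋃ U ∈ 𝒰, U) ∧
      (∀ U ∈ 𝒰, ediam U ≤ ENNReal.ofReal r) ∧ ((𝒰.card : ℝ) ≤ C * (R / r) ^ α)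

lemma assouadDim_eq (E : Set ℝ) :
    assouadDim E = sInf {α : ℝ | 0 ≤ α ∧ ∃ C : ℝ, 0 < C ∧ AssouadCover E α C} := rfl

lemma ediam_le_ofReal {U : Set ℝ} {r : ℝ} (h : ∀ x ∈ U, ∀ y ∈ U, |x - y| ≤ r) :
    ediam U ≤ ENNReal.ofReal r := by
  refine ediam_le fun x hx y hy => ?_
  rw [edist_dist, Real.dist_eq]
  exact ENNReal.ofReal_le_ofReal (h x hx y hy)

lemma abs_sub_le_of_ediam_le {U : Set ℝ} {r : ℝ} (hr : 0 ≤ r) (h : ediam U ≤ ENNReal.ofReal r)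
    {x y : ℝ} (hx : x ∈ U) (hy : y ∈ U) : |x - y| ≤ r := by
  have h1 := edist_le_of_ediam_le hx hy h
  rwa [edist_dist, ENNReal.ofReal_le_ofReal_iff hr, Real.dist_eq] at h1

/-- Separated subsets of a set with the covering condition are small. -/
lemma AssouadCover.card_le {E : Set ℝ} {α C : ℝ} (hE : AssouadCover E α C) {D : Finset ℝ}
    (hD : ∀ x ∈ D, x ∈ E) (hne : D.Nonempty) {r R : ℝ} (hr : 0 < r) (hrR : r < R)
    (hsep : ∀ x ∈ D, ∀ y ∈ D, x ≠ y → r < |x - y|) (hR : ∀ x ∈ D, ∀ y ∈ D, |x - y| ≤ R) :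
    (D.card : ℝ) ≤ C * (R / r) ^ α := by
  obtain ⟨x₀, hx₀⟩ := hne
  obtain ⟨𝒰, hcov, hdiam, hcard⟩ := hE x₀ (hD x₀ hx₀) r R hr hrR
  refine le_trans ?_ hcard
  have hU : ∀ x ∈ D, ∃ U ∈ 𝒰, x ∈ U := fun x hx => by
    simpa using hcov ⟨hD x hx, by rw [mem_closedBall, Real.dist_eq]; exact hR x hx x₀ hx₀⟩
  choose! U hU𝒰 hxU using hU
  have : D.card ≤ 𝒰.card := by
    refine Finset.card_le_card_of_injOn U hU𝒰 fun x hx y hy hxy => ?_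
    by_contra hne
    have h1 := hsep x hx y hy hne
    have h2 := abs_sub_le_of_ediam_le hr.le (hdiam _ (hU𝒰 x hx)) (hxU x hx)
      (by rw [hxy]; exact hxU y hy)
    linarith
  exact_mod_cast this

lemma assouadCover_one (E : Set ℝ) : AssouadCover E 1 4 := by
  classical
  intro x _ r R hr hrR
  refine ⟨(Finset.Icc ⌊(x - R) / r⌋ ⌊(x + R) / r⌋).image fun z => {y : ℝ | ⌊y / r⌋ = z},
    ?_, ?_, ?_⟩
  · rintro y ⟨_, hy⟩
    rw [mem_closedBall, Real.dist_eq, abs_le] at hy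
    simp only [Finset.mem_image, mem_iUnion, exists_prop]
    refine ⟨_, ⟨⌊y / r⌋, ?_, rfl⟩, rfl⟩
    rw [Finset.mem_Icc]
    constructor
    · exact Int.floor_le_floor (div_le_div_of_nonneg_right (by linarith) hr.le)
    · exact Int.floor_le_floor (div_le_div_of_nonneg_right (by linarith) hr.le)
  · intro U hU
    obtain ⟨z, _, rfl⟩ := Finset.mem_image.1 hU
    refine ediam_le_ofReal fun v hv w hw => ?_
    have hv : ⌊v / r⌋ = z := hv
    have hw : ⌊w / r⌋ = z := hw
    have h1 := Int.abs_sub_lt_one_of_floor_eq_floor (hv.trans hw.symm)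
    rw [← sub_div, abs_div, abs_of_pos hr, div_lt_one hr] at h1
    exact h1.le
  · refine (Nat.cast_le.2 Finset.card_image_le).trans ?_
    rw [Int.card_Icc, Real.rpow_one]
    have h1 : ⌊(x - R) / r⌋ ≤ ⌊(x + R) / r⌋ :=
      Int.floor_le_floor (div_le_div_of_nonneg_right (by linarith) hr.le)
    have h2 : (((⌊(x + R) / r⌋ + 1 - ⌊(x - R) / r⌋).toNat : ℤ) : ℝ) =
        ((⌊(x + R) / r⌋ + 1 - ⌊(x - R) / r⌋ : ℤ) : ℝ) := by
      rw [Int.toNat_of_nonneg (by omega)]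
    rw [Int.cast_natCast] at h2
    rw [h2]
    push_cast
    have h3 := Int.floor_le ((x + R) / r)
    have h4 := Int.lt_floor_add_one ((x - R) / r)
    have h5 : 1 < R / r := (one_lt_div hr).2 hrR
    have h6 : (x + R) / r - (x - R) / r = 2 * (R / r) := by ring
    linarith

lemma ediam_dyad_le (j : ℕ) (z : ℤ) {r : ℝ} (hr : 1 / 2 ^ j ≤ r) :
    ediam {y : ℝ | dyad j y = z} ≤ ENNReal.ofReal r :=
  ediam_le_ofReal fun v hv w hw =>
    ((abs_sub_lt_of_dyad_eq ((show dyad j v = z from hv).trans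
      (show dyad j w = z from hw).symm)).le).trans hr

open scoped Classical in
/-- Iterating a one-step bound on the number of sub-cells. -/
lemma exists_cells_of_no_zoom {F : Set ℝ} {ℓ₀ n : ℕ} {q : ℝ}
    (hno : ∀ ℓ ≥ ℓ₀, ∀ (m : ℤ) (Z : Finset ℤ),
      (∀ z ∈ Z, ∃ x ∈ F, dyad ℓ x = m ∧ dyad (ℓ + n) x = z) → (Z.card : ℝ) ≤ q)
    {ℓ : ℕ} (hℓ : ℓ₀ ≤ ℓ) (Y : Finset ℤ) (k : ℕ) :
    ∃ Z : Finset ℤ, (∀ x ∈ F, dyad ℓ x ∈ Y → dyad (ℓ + k * n) x ∈ Z) ∧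
      (Z.card : ℝ) ≤ Y.card * q ^ k := by
  have hq : 0 ≤ q := by simpa using hno ℓ₀ le_rfl 0 ∅ (by simp)
  induction k with
  | zero => exact ⟨Y, fun x _ hx => by simpa using hx, by simp⟩
  | succ k ih =>
    obtain ⟨Z, hZ, hcard⟩ := ih
    set W : ℤ → Finset ℤ := fun m => (Finset.Ico (m * 2 ^ n) ((m + 1) * 2 ^ n)).filter
      fun z => ∃ x ∈ F, dyad (ℓ + k * n) x = m ∧ dyad (ℓ + k * n + n) x = z with hW
    refine ⟨Z.biUnion W, fun x hx hxm => ?_, ?_⟩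
    · rw [show ℓ + (k + 1) * n = ℓ + k * n + n by ring, Finset.mem_biUnion]
      exact ⟨_, hZ x hx hxm, Finset.mem_filter.2 ⟨dyad_add_mem _ _ _, x, hx, rfl, rfl⟩⟩
    · calc ((Z.biUnion W).card : ℝ) ≤ ∑ m ∈ Z, ((W m).card : ℝ) := by
            exact_mod_cast Finset.card_biUnion_le
        _ ≤ ∑ _m ∈ Z, q := Finset.sum_le_sum fun m _ =>
            hno (ℓ + k * n) (by omega) m _ fun z hz => (Finset.mem_filter.1 hz).2
        _ = Z.card * q := by simp
        _ ≤ Y.card * q ^ k * q := by gcongr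
        _ = Y.card * q ^ (k + 1) := by ring

lemma exists_cover_of_no_zoom {F : Set ℝ} {ℓ₀ n : ℕ} (hn : 1 ≤ n) {s : ℝ} (hs : 0 ≤ s)
    (hno : ∀ ℓ ≥ ℓ₀, ∀ (m : ℤ) (Z : Finset ℤ),
      (∀ z ∈ Z, ∃ x ∈ F, dyad ℓ x = m ∧ dyad (ℓ + n) x = z) → (Z.card : ℝ) ≤ 2 ^ (s * n))
    {ℓ : ℕ} (hℓ : ℓ₀ ≤ ℓ) (Y : Finset ℤ) {r Q : ℝ} (hr : 0 < r) (hQ1 : 1 ≤ Q)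
    (hQ : 1 / 2 ^ ℓ ≤ Q * r) :
    ∃ 𝒰 : Finset (Set ℝ), (∀ x ∈ F, dyad ℓ x ∈ Y → ∃ U ∈ 𝒰, x ∈ U) ∧
      (∀ U ∈ 𝒰, ediam U ≤ ENNReal.ofReal r) ∧
      ((𝒰.card : ℝ) ≤ Y.card * 2 ^ (s * n) * Q ^ s) := by
  classical
  obtain ⟨k, hk1, hk2⟩ : ∃ k : ℕ, 1 / 2 ^ (ℓ + k * n) ≤ r ∧
      ((2 : ℝ) ^ (s * n)) ^ k ≤ 2 ^ (s * n) * Q ^ s := by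
    have h2 : (1 : ℝ) ≤ 2 ^ (s * n) := Real.one_le_rpow one_le_two (by positivity)
    have h2l : (0 : ℝ) < 2 ^ ℓ := by positivity
    rcases le_or_gt (1 / 2 ^ ℓ) r with h | h
    · refine ⟨0, by simpa using h, ?_⟩
      rw [pow_zero]
      exact one_le_mul_of_one_le_of_one_le h2 (Real.one_le_rpow hQ1 hs)
    · rw [lt_div_iff₀ h2l] at h
      have h2n : (1 : ℝ) < 2 ^ n := one_lt_pow₀ one_lt_two (by omega)
      obtain ⟨k, hk1, hk2⟩ := exists_nat_pow_near_of_lt_one (x := r * 2 ^ ℓ) (y := 1 / 2 ^ n)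
        (by positivity) h.le (by positivity) ((div_lt_one (by positivity)).2 h2n)
      refine ⟨k + 1, ?_, ?_⟩
      · rw [pow_add, div_le_iff₀ (by positivity), ← mul_assoc]
        rw [div_pow, one_pow, div_lt_iff₀ (by positivity), ← pow_mul, mul_comm n] at hk1
        exact hk1.le
      · rw [pow_succ, mul_comm]
        refine mul_le_mul_of_nonneg_left ?_ (by positivity)
        rw [← Real.rpow_natCast, ← Real.rpow_mul two_pos.le, mul_assoc, mul_comm s,
          Real.rpow_mul two_pos.le]
        refine Real.rpow_le_rpow (by positivity) ?_ hs
        rw [div_pow, one_pow, le_div_iff₀ (by positivity), ← pow_mul] at hk2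
        rw [div_le_iff₀ h2l] at hQ
        have h3 : (2 : ℝ) ^ ((n : ℝ) * k) = 2 ^ (n * k) := by
          rw [← Nat.cast_mul, Real.rpow_natCast]
        rw [h3]
        have h4 : 0 < r * 2 ^ ℓ := by positivity
        refine le_of_mul_le_mul_left ?_ h4
        linarith
  obtain ⟨Z, hZ, hcard⟩ := exists_cells_of_no_zoom hno hℓ Y k
  refine ⟨Z.image fun z => {y : ℝ | dyad (ℓ + k * n) y = z}, ?_, ?_, ?_⟩
  · exact fun x hx hxY => ⟨_, Finset.mem_image_of_mem _ (hZ x hx hxY), rfl⟩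
  · intro U hU
    obtain ⟨z, _, rfl⟩ := Finset.mem_image.1 hU
    exact ediam_dyad_le _ z hk1
  · refine (Nat.cast_le.2 Finset.card_image_le).trans (hcard.trans ?_)
    rw [mul_assoc]
    gcongr

/-- A set of large Assouad dimension has, at arbitrarily small scales, dyadic cells with many
sub-cells. -/
lemma exists_zoom {F : Set ℝ} {M : ℕ} (hF : ∀ x ∈ F, 0 < x ∧ x ≤ M) {s : ℝ} (hs : 0 ≤ s)
    (hsF : s < assouadDim F) {n : ℕ} (hn : 1 ≤ n) (ℓ₀ : ℕ) :
    ∃ ℓ ≥ ℓ₀, ∃ (m : ℤ) (Z : Finset ℤ),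
      (∀ z ∈ Z, ∃ x ∈ F, dyad ℓ x = m ∧ dyad (ℓ + n) x = z) ∧ (2 : ℝ) ^ (s * n) < Z.card := by
  by_contra! hno
  have hmem : s ∈ {α : ℝ | 0 ≤ α ∧ ∃ C : ℝ, 0 < C ∧ AssouadCover F α C} := by
    refine ⟨hs, (5 + (M * 2 ^ ℓ₀ + 1)) * 2 ^ (s * n) * 2 ^ s, by positivity, ?_⟩
    intro x hx r R hr hrR
    have hRr : 1 < R / r := (one_lt_div hr).2 hrR
    suffices h : ∃ ℓ ≥ ℓ₀, ∃ Y : Finset ℤ, (∀ y ∈ F, |y - x| ≤ R → dyad ℓ y ∈ Y) ∧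
        1 / 2 ^ ℓ ≤ 2 * R ∧ (Y.card : ℝ) ≤ 5 + (M * 2 ^ ℓ₀ + 1) by
      obtain ⟨ℓ, hℓ, Y, hY, hR, hcard⟩ := h
      obtain ⟨𝒰, hcov, hdiam, h𝒰⟩ := exists_cover_of_no_zoom hn hs hno hℓ Y (Q := 2 * (R / r)) hr
        (by linarith) (by rw [mul_assoc, div_mul_cancel₀ _ hr.ne']; exact hR)
      refine ⟨𝒰, ?_, hdiam, ?_⟩
      · rintro y ⟨hy, hyR⟩
        rw [mem_closedBall, Real.dist_eq] at hyR
        simpa using hcov y hy (hY y hy hyR)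
      · refine h𝒰.trans ?_
        rw [Real.mul_rpow two_pos.le (by positivity), ← mul_assoc]
        gcongr
    have h2ℓ₀ : (0 : ℝ) < 2 ^ ℓ₀ := by positivity
    rcases le_or_gt R (1 / 2 ^ ℓ₀) with hR | hR
    · have h1 : (1 : ℝ) / 2 ^ ℓ₀ ≤ 1 := (div_le_one h2ℓ₀).2 (one_le_pow₀ one_le_two)
      obtain ⟨ℓ, hℓ1, hℓ2⟩ := exists_nat_pow_near_of_lt_one (x := R) (y := 1 / 2)
        (hr.trans hrR) (hR.trans h1) (by norm_num) (by norm_num)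
      have h2ℓ : (0 : ℝ) < 2 ^ ℓ := by positivity
      refine ⟨ℓ, ?_, Finset.Icc (dyad ℓ x - 2) (dyad ℓ x + 2), ?_, ?_, ?_⟩
      · have h2 := hℓ1.trans_le hR
        rw [← one_div_pow, pow_lt_pow_iff_right_of_lt_one₀ (by norm_num) (by norm_num)] at h2
        omega
      · intro y _ hyx
        have h3 : |2 ^ ℓ * y - 2 ^ ℓ * x| < ((2 : ℤ) : ℝ) := by
          rw [← mul_sub, abs_mul, abs_of_pos h2ℓ]
          have h4 := hyx.trans hℓ2
          rw [one_div_pow, le_div_iff₀ h2ℓ] at h4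
          push_cast
          linarith
        have h5 := abs_le.1 (abs_floor_sub_floor_le h3)
        rw [Finset.mem_Icc]
        unfold dyad
        constructor <;> linarith [h5.1, h5.2]
      · rw [pow_succ, one_div_pow] at hℓ1
        linarith
      · rw [Int.card_Icc, show dyad ℓ x + 2 + 1 - (dyad ℓ x - 2) = 5 by ring,
          show Int.toNat 5 = 5 from rfl]
        have : (0 : ℝ) ≤ M * 2 ^ ℓ₀ + 1 := by positivity
        push_cast
        linarith
    · refine ⟨ℓ₀, le_rfl, Finset.Icc 0 (M * 2 ^ ℓ₀), ?_, ?_, ?_⟩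
      · intro y hy _
        obtain ⟨hy0, hyM⟩ := hF y hy
        rw [Finset.mem_Icc]
        constructor
        · exact Int.floor_nonneg.2 (by positivity)
        · have h1 : (dyad ℓ₀ y : ℝ) ≤ ((M * 2 ^ ℓ₀ : ℤ) : ℝ) := by
            refine (Int.floor_le _).trans ?_
            push_cast
            nlinarith
          exact_mod_cast h1
      · have : 0 < R := hr.trans hrR
        linarith
      · rw [Int.card_Icc, show (M * 2 ^ ℓ₀ + 1 - 0 : ℤ) = ((M * 2 ^ ℓ₀ + 1 : ℕ) : ℤ) by
          push_cast; ring, Int.toNat_natCast]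
        push_cast
        linarith
  rw [assouadDim_eq] at hsF
  exact absurd (csInf_le ⟨0, fun α hα => hα.1⟩ hmem) (not_le.2 hsF)

end AssouadCover

section Slopes

/-- A set of positive Hausdorff measure cannot be covered economically by finitely many sets. -/
lemma exists_content_pos {G : Set ℝ} {τ κ : ℝ} (hτ : 0 < τ) (hκ : 0 < κ)
    (hG : μH[τ] G ≠ 0) :
    ∃ h : ℝ, 0 < h ∧ ∀ (S : Finset (ℕ × ℤ)) (U : ℕ × ℤ → Set ℝ),
      (∀ x ∈ S, ediam (U x) ≤ ENNReal.ofReal (κ * (1 / 2 ^ x.1))) → (∀ t ∈ G, ∃ x ∈ S, t ∈ U x) →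
      h ≤ ∑ x ∈ S, (2 : ℝ) ^ (-(τ * x.1)) := by
  by_contra! hcon
  have hcon' := fun k : ℕ => hcon (1 / (k + 1)) Nat.one_div_pos_of_nat
  choose S U hdiam hcov hsum using hcon'
  refine hG (le_antisymm ?_ bot_le)
  have hpow : ∀ j : ℕ, ((1 : ℝ) / 2 ^ j) ^ τ = 2 ^ (-(τ * j)) := by
    intro j
    rw [one_div, ← Real.rpow_natCast, ← Real.rpow_neg two_pos.le, ← Real.rpow_mul two_pos.le]
    congr 1
    ring
  have hlim0 : Tendsto (fun k : ℕ => (1 : ℝ) / (k + 1)) atTop (𝓝 0) :=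
    tendsto_one_div_add_atTop_nhds_zero_nat
  have hr : Tendsto (fun k : ℕ => ENNReal.ofReal (κ * (1 / ((k : ℝ) + 1)) ^ τ⁻¹)) atTop (𝓝 0) := by
    have h1 : Tendsto (fun k : ℕ => κ * (1 / ((k : ℝ) + 1)) ^ τ⁻¹) atTop (𝓝 0) := by
      have h2 := (hlim0.rpow_const (p := τ⁻¹) (Or.inr (by positivity))).const_mul κ
      rwa [Real.zero_rpow (by positivity), mul_zero] at h2
    simpa using ENNReal.tendsto_ofReal h1
  have hle := Measure.hausdorffMeasure_le_liminf_sum (ι := fun k => S k) τ G _ hr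
    (fun k x => U k x) (Eventually.of_forall fun k x => by
      refine (hdiam k x x.2).trans (ENNReal.ofReal_le_ofReal ?_)
      refine mul_le_mul_of_nonneg_left ?_ hκ.le
      have h1 : (2 : ℝ) ^ (-(τ * (x : ℕ × ℤ).1)) ≤ 1 / (k + 1) :=
        (Finset.single_le_sum (f := fun x : ℕ × ℤ => (2 : ℝ) ^ (-(τ * x.1)))
          (fun _ _ => by positivity) x.2).trans (hsum k).le
      rw [← hpow] at h1
      have h2 := Real.rpow_le_rpow (by positivity) h1 (inv_nonneg.2 hτ.le)
      rwa [← Real.rpow_mul (by positivity), mul_inv_cancel₀ hτ.ne', Real.rpow_one] at h2)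
    (Eventually.of_forall fun k t ht => by
      obtain ⟨x, hx, htx⟩ := hcov k t ht
      exact mem_iUnion.2 ⟨⟨x, hx⟩, htx⟩)
  refine hle.trans ?_
  have hbound : ∀ k : ℕ, ∑ x : S k, ediam (U k x) ^ τ ≤
      ENNReal.ofReal (κ ^ τ * (1 / ((k : ℝ) + 1))) := by
    intro k
    calc ∑ x : S k, ediam (U k x) ^ τ
        ≤ ∑ x : S k, ENNReal.ofReal (κ ^ τ * 2 ^ (-(τ * (x : ℕ × ℤ).1))) := by
          refine Finset.sum_le_sum fun x _ => ?_
          rw [← hpow, ← Real.mul_rpow hκ.le (by positivity),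
            ← ENNReal.ofReal_rpow_of_nonneg (by positivity) hτ.le]
          exact ENNReal.rpow_le_rpow (hdiam k x x.2) hτ.le
      _ = ENNReal.ofReal (∑ x : S k, κ ^ τ * 2 ^ (-(τ * (x : ℕ × ℤ).1))) :=
          (ENNReal.ofReal_sum_of_nonneg fun _ _ => by positivity).symm
      _ ≤ _ := by
          refine ENNReal.ofReal_le_ofReal ?_
          rw [← Finset.mul_sum, Finset.sum_coe_sort (S k) fun x : ℕ × ℤ => (2 : ℝ) ^ (-(τ * x.1))]
          exact mul_le_mul_of_nonneg_left (hsum k).le (by positivity)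
  have hlim : Tendsto (fun k : ℕ => ENNReal.ofReal (κ ^ τ * (1 / ((k : ℝ) + 1)))) atTop (𝓝 0) := by
    simpa using ENNReal.tendsto_ofReal (hlim0.const_mul (κ ^ τ))
  exact (liminf_le_liminf (Eventually.of_forall hbound)).trans hlim.liminf_eq.le

/-- A set of Hausdorff dimension greater than `τ` meets two disjoint compact intervals in sets of
positive `τ`-dimensional Hausdorff measure. -/
lemma exists_separated_intervals_hausdorffMeasure_ne_zero {F : Set ℝ}
    (hpos : F ⊆ Ioi (0 : ℝ)) {τ : ℝ≥0} (hτ : (τ : ℝ≥0∞) < dimH F) :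
    ∃ a b c d : ℝ, 0 < a ∧ a < b ∧ b < c ∧ c < d ∧ μH[(τ : ℝ)] (F ∩ Icc a b) ≠ 0 ∧
      μH[(τ : ℝ)] (F ∩ Icc c d) ≠ 0 := by
  obtain ⟨x, hxF, hx⟩ := exists_mem_nhdsWithin_lt_dimH_of_lt_dimH hτ
  have hF' : (τ : ℝ≥0∞) < dimH (F \ {x}) := by
    have h1 : dimH F ≤ dimH (F \ {x} ∪ {x}) := dimH_mono fun y hy => by
      by_cases h : y = x
      · exact Or.inr h
      · exact Or.inl ⟨hy, h⟩
    rw [dimH_union, dimH_singleton, max_eq_left zero_le] at h1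
    exact hτ.trans_le h1
  obtain ⟨y, ⟨hyF, hyx⟩, hy⟩ := exists_mem_nhdsWithin_lt_dimH_of_lt_dimH hF'
  have hyx : y ≠ x := hyx
  have hmeas : ∀ {z δ : ℝ}, 0 < δ → (∀ t ∈ 𝓝[F] z, (τ : ℝ≥0∞) < dimH t) →
      μH[(τ : ℝ)] (F ∩ Icc (z - δ) (z + δ)) ≠ 0 := by
    intro z δ hδ hz
    rw [hausdorffMeasure_of_lt_dimH (hz _ (inter_mem self_mem_nhdsWithin
      (mem_nhdsWithin_of_mem_nhds (Icc_mem_nhds (by linarith) (by linarith)))))]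
    exact ENNReal.top_ne_zero
  have hyMem : ∀ t ∈ 𝓝[F] y, (τ : ℝ≥0∞) < dimH t := fun t ht =>
    hy t (nhdsWithin_mono y sdiff_subset ht)
  have hx0 : 0 < x := hpos hxF
  have hy0 : 0 < y := hpos hyF
  have key : ∀ {v w : ℝ}, 0 < v → v < w → (∀ t ∈ 𝓝[F] v, (τ : ℝ≥0∞) < dimH t) →
      (∀ t ∈ 𝓝[F] w, (τ : ℝ≥0∞) < dimH t) →
      ∃ a b c d : ℝ, 0 < a ∧ a < b ∧ b < c ∧ c < d ∧ μH[(τ : ℝ)] (F ∩ Icc a b) ≠ 0 ∧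
        μH[(τ : ℝ)] (F ∩ Icc c d) ≠ 0 := by
    intro v w hv hvw hFv hFw
    set δ := min (v / 2) ((w - v) / 3) with hδ
    have hδ0 : 0 < δ := lt_min (by linarith) (by linarith)
    have h1 : δ ≤ v / 2 := min_le_left _ _
    have h2 : δ ≤ (w - v) / 3 := min_le_right _ _
    exact ⟨v - δ, v + δ, w - δ, w + δ, by linarith, by linarith, by linarith, by linarith,
      hmeas hδ0 hFv, hmeas hδ0 hFw⟩
  rcases lt_or_gt_of_ne hyx with h | h
  · exact key hy0 h hyMem hx
  · exact key hx0 h hx hyMem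

/-- A lower bound on the derivative of `L ↦ L * exp (p * L)` makes the slope map expanding. -/
lemma slope_expanding {a b p c Λ M : ℝ} (ha : 0 < a) (hp : 0 ≤ p) (hpM : p ≤ M)
    (hbM : b ≤ M) (hΛ : ∀ x ∈ Icc a b, |Real.log x| ≤ Λ)
    (hder : ∀ x ∈ Icc a b, c ≤ |1 + p * Real.log x|) {x y : ℝ} (hx : x ∈ Icc a b)
    (hy : y ∈ Icc a b) :
    c * Real.exp (-(M * Λ)) / M * |x - y| ≤ |x ^ p * Real.log x - y ^ p * Real.log y| := by
  wlog hxy : y < x generalizing x y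
  · rcases (not_lt.1 hxy).eq_or_lt with h | h
    · simp [h]
    · rw [abs_sub_comm x, abs_sub_comm (x ^ p * _)]
      exact this hy hx h
  have hy0 : 0 < y := ha.trans_le hy.1
  have hderiv : ∀ z, 0 < z → HasDerivAt (fun z => z ^ p * Real.log z)
      (p * z ^ (p - 1) * Real.log z + z ^ p * z⁻¹) z := fun z hz =>
    (Real.hasDerivAt_rpow_const (Or.inl hz.ne')).mul (Real.hasDerivAt_log hz.ne')
  obtain ⟨ξ, hξ, hslope⟩ := exists_hasDerivAt_eq_slope (fun z => z ^ p * Real.log z)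
    (fun z => p * z ^ (p - 1) * Real.log z + z ^ p * z⁻¹) hxy
    (fun z hz => (hderiv z (hy0.trans_le hz.1)).continuousAt.continuousWithinAt)
    (fun z hz => hderiv z (hy0.trans hz.1))
  have hξ0 : 0 < ξ := hy0.trans hξ.1
  have hξab : ξ ∈ Icc a b := ⟨hy.1.trans hξ.1.le, hξ.2.le.trans hx.2⟩
  have hM : 0 < M := hξ0.trans_le (hξab.2.trans hbM)
  rw [eq_div_iff (by linarith)] at hslope
  rw [← hslope, abs_mul]
  refine mul_le_mul_of_nonneg_right ?_ (abs_nonneg _)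
  have h1 : p * ξ ^ (p - 1) * Real.log ξ + ξ ^ p * ξ⁻¹ = (1 + p * Real.log ξ) * ξ ^ p / ξ := by
    rw [Real.rpow_sub_one hξ0.ne']
    field_simp
    ring
  rw [h1, abs_div, abs_mul, abs_of_pos hξ0, abs_of_pos (Real.rpow_pos_of_pos hξ0 p)]
  have h2 : Real.exp (-(M * Λ)) ≤ ξ ^ p := by
    rw [Real.rpow_def_of_pos hξ0, Real.exp_le_exp]
    have h3 := hΛ ξ hξab
    have h4 : |Real.log ξ * p| ≤ Λ * M := by
      rw [abs_mul, abs_of_nonneg hp]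
      exact mul_le_mul h3 hpM hp ((abs_nonneg _).trans h3)
    linarith [neg_abs_le (Real.log ξ * p)]
  exact div_le_div₀ (by positivity) (mul_le_mul (hder ξ hξab) h2 (by positivity) (abs_nonneg _))
    hξ0 (hξab.2.trans hbM)

/-- For every exponent, the derivative is bounded below on one of two separated intervals. -/
lemma derivative_lower_bound {l₁ l₂ Λ p c : ℝ} (hl : l₁ < l₂)
    (hp : 0 ≤ p) (hc : c * (1 + 2 * Λ / (l₂ - l₁)) ≤ 1) {S₁ S₂ : Set ℝ}
    (h₁ : ∀ L ∈ S₁, |L| ≤ Λ ∧ L ≤ l₁) (h₂ : ∀ L ∈ S₂, |L| ≤ Λ ∧ l₂ ≤ L) :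
    (∀ L ∈ S₁, c ≤ |1 + p * L|) ∨ (∀ L ∈ S₂, c ≤ |1 + p * L|) := by
  by_contra! hcon
  obtain ⟨⟨L₁, hL₁, hlt₁⟩, L₂, hL₂, hlt₂⟩ := hcon
  obtain ⟨h1, h2⟩ := h₁ L₁ hL₁
  obtain ⟨h3, h4⟩ := h₂ L₂ hL₂
  have hδ : 0 < l₂ - l₁ := by linarith
  obtain ⟨h5, h6⟩ := abs_lt.1 hlt₁
  obtain ⟨h7, h8⟩ := abs_lt.1 hlt₂
  have hpδ : p * (l₂ - l₁) ≤ 2 * c := by nlinarith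
  have hpc : p ≤ 2 * c / (l₂ - l₁) := (le_div_iff₀ hδ).2 hpδ
  have hΛ : 0 ≤ Λ := (abs_nonneg _).trans h1
  have h9 : p * Λ ≤ 2 * c / (l₂ - l₁) * Λ := mul_le_mul_of_nonneg_right hpc hΛ
  have h10 : -(p * Λ) ≤ p * L₁ := by nlinarith [(abs_le.1 h1).1]
  have h11 : c * (1 + 2 * Λ / (l₂ - l₁)) = c + 2 * c / (l₂ - l₁) * Λ := by ring
  linarith

/-- The slopes `x ^ p * log x` have uniformly positive dyadic content. -/
lemma exists_slopes {F : Set ℝ} (hpos : F ⊆ Ioi (0 : ℝ)) (M : ℕ) (hH : 0 < dimH F) :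
    ∃ (τ h Λ : ℝ), 0 < τ ∧ 0 < h ∧ 0 < Λ ∧ ∀ p : ℝ, 0 ≤ p → p ≤ M →
      ∃ G ⊆ F, (∀ x ∈ G, |Real.log x| ≤ Λ) ∧
        ∀ S : Finset (ℕ × ℤ), (∀ x ∈ G, ∃ y ∈ S, dyad y.1 (x ^ p * Real.log x) = y.2) →
          h ≤ ∑ y ∈ S, (2 : ℝ) ^ (-(τ * y.1)) := by
  obtain ⟨τ, hτ0, hτ⟩ := ENNReal.lt_iff_exists_nnreal_btwn.1 hH
  have hτ0 : 0 < τ := by exact_mod_cast hτ0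
  obtain ⟨a, b, c, d, ha, hab, hbc, hcd, hμ₁, hμ₂⟩ := exists_separated_intervals_hausdorffMeasure_ne_zero hpos hτ
  set Λ : ℝ := |Real.log a| + |Real.log d| + 1 with hΛ
  have hΛ0 : 0 < Λ := by positivity
  have hlog : ∀ x, a ≤ x → x ≤ d → |Real.log x| ≤ Λ := by
    intro x h1 h2
    have h3 := Real.log_le_log ha h1
    have h4 := Real.log_le_log (ha.trans_le h1) h2
    rw [abs_le]
    constructor
    · linarith [neg_abs_le (Real.log a), abs_nonneg (Real.log d)]
    · linarith [le_abs_self (Real.log d), abs_nonneg (Real.log a)]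
  have hl : Real.log b < Real.log c := Real.log_lt_log (ha.trans hab) hbc
  set l := Real.log c - Real.log b with hldef
  have hl0 : 0 < l := by linarith
  set ρ : ℝ := 1 / (1 + 2 * Λ / l) with hρ
  have hρ0 : 0 < ρ := by positivity
  set K : ℝ := (M : ℝ) + d with hK
  have hK0 : 0 < K := by
    have : (0 : ℝ) ≤ M := Nat.cast_nonneg M
    linarith
  set κ : ℝ := ρ * Real.exp (-(K * Λ)) / K with hκ
  have hκ0 : 0 < κ := by positivity
  obtain ⟨h₁, hh₁, hcont₁⟩ := exists_content_pos (κ := κ⁻¹) (NNReal.coe_pos.2 hτ0)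
    (by positivity) hμ₁
  obtain ⟨h₂, hh₂, hcont₂⟩ := exists_content_pos (κ := κ⁻¹) (NNReal.coe_pos.2 hτ0)
    (by positivity) hμ₂
  have transfer : ∀ {p v w h : ℝ}, 0 ≤ p → p ≤ M → a ≤ v → w ≤ d →
      (∀ x ∈ Icc v w, ρ ≤ |1 + p * Real.log x|) →
      (∀ (S : Finset (ℕ × ℤ)) (U : ℕ × ℤ → Set ℝ),
        (∀ x ∈ S, ediam (U x) ≤ ENNReal.ofReal (κ⁻¹ * (1 / 2 ^ x.1))) →
        (∀ t ∈ F ∩ Icc v w, ∃ x ∈ S, t ∈ U x) → h ≤ ∑ x ∈ S, (2 : ℝ) ^ (-((τ : ℝ) * x.1))) →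
      ∀ S : Finset (ℕ × ℤ),
        (∀ x ∈ F ∩ Icc v w, ∃ y ∈ S, dyad y.1 (x ^ p * Real.log x) = y.2) →
        h ≤ ∑ y ∈ S, (2 : ℝ) ^ (-((τ : ℝ) * y.1)) := by
    intro p v w h hp hpM hv hw hder hcont S hS
    refine hcont S (fun y => {x ∈ Icc v w | dyad y.1 (x ^ p * Real.log x) = y.2}) ?_ ?_
    · intro y _
      refine ediam_le_ofReal fun x hx x' hx' => ?_
      have h1 := slope_expanding (ha.trans_le hv) hp (M := K) (by linarith)
        (by linarith [Nat.cast_nonneg (α := ℝ) M])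
        (fun z hz => hlog z (hv.trans hz.1) (hz.2.trans hw)) hder hx.1 hx'.1
      have h2 := abs_sub_lt_of_dyad_eq (hx.2.trans hx'.2.symm)
      rw [inv_mul_eq_div, le_div_iff₀ hκ0]
      linarith
    · intro x hx
      obtain ⟨y, hy, hxy⟩ := hS x hx
      exact ⟨y, hy, hx.2, hxy⟩
  refine ⟨τ, min h₁ h₂, Λ, NNReal.coe_pos.2 hτ0, lt_min hh₁ hh₂, hΛ0, ?_⟩
  intro p hp hpM
  have hcases := derivative_lower_bound (Λ := Λ) (c := ρ) hl hp
    (le_of_eq (one_div_mul_cancel (by positivity)))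
    (S₁ := Real.log '' Icc a b) (S₂ := Real.log '' Icc c d)
    (by
      rintro _ ⟨x, hx, rfl⟩
      exact ⟨hlog x hx.1 (by linarith [hx.2]), Real.log_le_log (ha.trans_le hx.1) hx.2⟩)
    (by
      rintro _ ⟨x, hx, rfl⟩
      exact ⟨hlog x (by linarith [hx.1]) hx.2, Real.log_le_log (by linarith) hx.1⟩)
  rcases hcases with hder | hder
  · exact ⟨F ∩ Icc a b, inter_subset_left, fun x hx => hlog x hx.2.1 (by linarith [hx.2.2]),
      fun S hS => (min_le_left _ _).trans (transfer hp hpM le_rfl (by linarith)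
        (fun x hx => hder _ (mem_image_of_mem _ hx)) hcont₁ S hS)⟩
  · exact ⟨F ∩ Icc c d, inter_subset_left, fun x hx => hlog x (by linarith [hx.2.1]) hx.2.2,
      fun S hS => (min_le_right _ _).trans (transfer hp hpM (by linarith) le_rfl
        (fun x hx => hder _ (mem_image_of_mem _ hx)) hcont₂ S hS)⟩

end Slopes

section Conclusion

/-- A packing bound for values that, after an affine change of scale, are close to points of a set
with the covering condition. -/
lemma packingBound_of_assouadCover {ι : Type*} {E : Set ℝ} {u C : ℝ} (hE : AssouadCover E u C)
    (hC : 0 < C) (v w : ι → ℝ) (hw : ∀ q, w q ∈ E) {ρ r₀ c : ℝ} (hρ : 0 < ρ) (hr₀ : 0 < r₀)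
    (hclose : ∀ q, |w q - c - ρ * v q| ≤ ρ * (r₀ / 4)) :
    PackingBound v r₀ (C * 8 ^ u) u := by
  intro D hD r R hr hrR hsep hdist
  have hr0 : 0 < r := hr₀.trans_le hr
  have hR0 : 0 < R := hr0.trans_le hrR
  rw [mul_assoc, ← Real.mul_rpow (by norm_num) (by positivity)]
  rcases D.eq_empty_or_nonempty with hempty | ⟨x₀, hx₀⟩
  · rw [hempty, Finset.card_empty, Nat.cast_zero]
    positivity
  have : Nonempty ι := ⟨(hD x₀ hx₀).choose⟩
  choose! q hq using hD
  have hdiff : ∀ x ∈ D, ∀ y ∈ D,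
      |w (q x) - w (q y) - ρ * (x - y)| ≤ ρ * r / 2 := by
    intro x hx y hy
    have h1 := hclose (q x)
    have h2 := hclose (q y)
    rw [hq x hx] at h1
    rw [hq y hy] at h2
    have h3 : w (q x) - w (q y) - ρ * (x - y) = (w (q x) - c - ρ * x) - (w (q y) - c - ρ * y) := by
      ring
    rw [h3]
    refine (abs_sub _ _).trans ?_
    have h4 : ρ * r₀ ≤ ρ * r := mul_le_mul_of_nonneg_left hr hρ.le
    linarith
  have hlow : ∀ x ∈ D, ∀ y ∈ D, x ≠ y → ρ * r / 4 < |w (q x) - w (q y)| := by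
    intro x hx y hy hne
    have h1 := hdiff x hx y hy
    have h2 : ρ * r ≤ |ρ * (x - y)| := by
      rw [abs_mul, abs_of_pos hρ]
      exact mul_le_mul_of_nonneg_left (hsep x hx y hy hne) hρ.le
    have h3 := abs_sub_abs_le_abs_sub (ρ * (x - y)) (w (q x) - w (q y))
    rw [abs_sub_comm (ρ * (x - y))] at h3
    have h4 : 0 < ρ * r := by positivity
    linarith
  have hup : ∀ x ∈ D, ∀ y ∈ D, |w (q x) - w (q y)| ≤ 2 * ρ * R := by
    intro x hx y hy
    have h1 := hdiff x hx y hy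
    have h2 : |ρ * (x - y)| ≤ ρ * R := by
      rw [abs_mul, abs_of_pos hρ]
      exact mul_le_mul_of_nonneg_left (hdist x hx y hy) hρ.le
    have h3 := abs_sub_abs_le_abs_sub (w (q x) - w (q y)) (ρ * (x - y))
    have h4 : ρ * r ≤ ρ * R := mul_le_mul_of_nonneg_left hrR hρ.le
    have h5 : 0 < ρ * r := by positivity
    linarith
  have hcard : (D.image fun x => w (q x)).card = D.card := by
    refine Finset.card_image_of_injOn fun x hx y hy hxy => ?_
    by_contra hne
    have hxy : w (q x) = w (q y) := hxy
    have h1 := hlow x hx y hy hne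
    rw [hxy, sub_self, abs_zero] at h1
    have h2 : 0 < ρ * r := by positivity
    linarith
  rw [← hcard]
  have h8 : 8 * (R / r) = 2 * ρ * R / (ρ * r / 4) := by
    field_simp
    ring
  rw [h8]
  refine hE.card_le ?_ ⟨w (q x₀), Finset.mem_image.2 ⟨x₀, hx₀, rfl⟩⟩ (by positivity) ?_ ?_ ?_
  · intro x hx
    obtain ⟨y, _, rfl⟩ := Finset.mem_image.1 hx
    exact hw _
  · have h4 : ρ * r ≤ ρ * R := mul_le_mul_of_nonneg_left hrR hρ.le
    have h5 : 0 < ρ * r := by positivity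
    linarith
  · intro x hx y hy hne
    obtain ⟨x, hxD, rfl⟩ := Finset.mem_image.1 hx
    obtain ⟨y, hyD, rfl⟩ := Finset.mem_image.1 hy
    exact hlow x hxD y hyD fun h => hne (by rw [h])
  · intro x hx y hy
    obtain ⟨x, hxD, rfl⟩ := Finset.mem_image.1 hx
    obtain ⟨y, hyD, rfl⟩ := Finset.mem_image.1 hy
    exact hup x hxD y hyD

lemma rpow_le_exp {x p M Λ : ℝ} (hx : 0 < x) (hp : 0 ≤ p) (hpM : p ≤ M)
    (hΛ : |Real.log x| ≤ Λ) : x ^ p ≤ Real.exp (M * Λ) := by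
  rw [Real.rpow_def_of_pos hx, Real.exp_le_exp]
  have h1 : |Real.log x * p| ≤ Λ * M := by
    rw [abs_mul, abs_of_nonneg hp]
    exact mul_le_mul hΛ hpM hp ((abs_nonneg _).trans hΛ)
  linarith [le_abs_self (Real.log x * p)]

/-- First-order expansion of `x ^ y` in the exponent. -/
lemma abs_rpow_add_sub_le {x p M Λ ρ b : ℝ} (hx : 0 < x) (hp : 0 ≤ p) (hpM : p ≤ M)
    (hΛ : |Real.log x| ≤ Λ) (hρ : 0 < ρ) (hρΛ : ρ * Λ ≤ 1) (hb0 : 0 ≤ b) (hb1 : b ≤ 1) :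
    |x ^ (p + ρ * b) - x ^ p - ρ * (x ^ p * Real.log x * b)| ≤
      ρ * (ρ * (Real.exp (M * Λ) * Λ ^ 2)) := by
  have hxp : 0 < x ^ p := Real.rpow_pos_of_pos hx p
  have h1 : x ^ (p + ρ * b) - x ^ p - ρ * (x ^ p * Real.log x * b) =
      x ^ p * (Real.exp (Real.log x * (ρ * b)) - 1 - Real.log x * (ρ * b)) := by
    rw [Real.rpow_add hx, Real.rpow_def_of_pos hx (ρ * b)]
    ring
  have hy : |Real.log x * (ρ * b)| ≤ ρ * Λ := by
    rw [abs_mul, abs_of_nonneg (by positivity : 0 ≤ ρ * b)]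
    have hΛ0 : 0 ≤ Λ := (abs_nonneg _).trans hΛ
    calc |Real.log x| * (ρ * b) ≤ Λ * (ρ * 1) := by gcongr
      _ = ρ * Λ := by ring
  rw [h1, abs_mul, abs_of_pos hxp]
  calc x ^ p * |Real.exp (Real.log x * (ρ * b)) - 1 - Real.log x * (ρ * b)|
      ≤ Real.exp (M * Λ) * (ρ * Λ) ^ 2 := by
        refine mul_le_mul (rpow_le_exp hx hp hpM hΛ) ?_ (abs_nonneg _) (Real.exp_nonneg _)
        refine (Real.abs_exp_sub_one_sub_id_le (hy.trans hρΛ)).trans ?_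
        rw [← sq_abs]
        exact pow_le_pow_left₀ (abs_nonneg _) hy 2
    _ = _ := by ring

lemma dyad_rescale (ℓ n : ℕ) (m : ℤ) (y : ℝ) :
    dyad n (2 ^ ℓ * y - m) = dyad (ℓ + n) y - 2 ^ n * m := by
  unfold dyad
  have : (2 : ℝ) ^ n * (2 ^ ℓ * y - m) = 2 ^ (ℓ + n) * y - ((2 ^ n * m : ℤ) : ℝ) := by
    push_cast
    rw [pow_add]
    ring
  rw [this, Int.floor_sub_intCast]

/-- The covering condition for `F ^ F + F` fails below `min (2 * dim F) 1`. -/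
lemma not_assouadCover_expSum {F : Set ℝ} (hpos : F ⊆ Ioi (0 : ℝ)) {M : ℕ}
    (hM : ∀ x ∈ F, x ≤ M) (hH : 0 < dimH F) {u C : ℝ} (hu0 : 0 ≤ u) (hC : 0 < C)
    (hu1 : u < 1) (hu2 : u < 2 * assouadDim F) :
    ¬ AssouadCover {w : ℝ | ∃ x ∈ F, ∃ y ∈ F, ∃ z ∈ F, w = x ^ y + z} u C := by
  classical
  intro hcover
  obtain ⟨s, hs1, hs2⟩ := exists_between (show u / 2 < assouadDim F by linarith)
  obtain ⟨τ, h, Λ, hτ, hh, hΛ, hslopes⟩ := exists_slopes hpos M hH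
  obtain ⟨B, hB⟩ := exists_nat_ge (Real.exp (M * Λ) * Λ)
  obtain ⟨n, N', hn, hcore⟩ := projection_core (s := s) (C := C * 8 ^ u) hu1 (by linarith)
    (by positivity) hτ hh B
  set r₀ : ℝ := 1 / 2 ^ N' with hr₀
  have hr₀0 : 0 < r₀ := by positivity
  set X : ℝ := Real.exp (M * Λ) * Λ ^ 2 with hX
  obtain ⟨ℓ₀, hℓ₀⟩ := pow_unbounded_of_one_lt (max Λ (4 * X / r₀)) (one_lt_two (α := ℝ))
  obtain ⟨ℓ, hℓ, m, Z, hZ, hZcard⟩ := exists_zoom (fun x hx => ⟨hpos hx, hM x hx⟩)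
    (show 0 ≤ s by linarith) hs2 hn ℓ₀
  set ρ : ℝ := 1 / 2 ^ ℓ with hρ
  have h2ℓ : (0 : ℝ) < 2 ^ ℓ := by positivity
  have hρ0 : 0 < ρ := by positivity
  have hρℓ : ρ * 2 ^ ℓ = 1 := one_div_mul_cancel h2ℓ.ne'
  have hpow : max Λ (4 * X / r₀) ≤ 2 ^ ℓ := hℓ₀.le.trans (pow_le_pow_right₀ one_le_two hℓ)
  have hρΛ : ρ * Λ ≤ 1 := by
    rw [← hρℓ]
    exact mul_le_mul_of_nonneg_left ((le_max_left _ _).trans hpow) hρ0.le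
  have hρX : ρ * X ≤ r₀ / 4 := by
    have h1 := (le_max_right _ _).trans hpow
    rw [div_le_iff₀ hr₀0] at h1
    have h2 := mul_le_mul_of_nonneg_left h1 hρ0.le
    have h3 : ρ * (2 ^ ℓ * r₀) = r₀ := by rw [← mul_assoc, hρℓ, one_mul]
    rw [h3] at h2
    linarith
  have hZne : Z.Nonempty := by
    rw [← Finset.card_pos]
    have : (0 : ℝ) < Z.card := lt_trans (by positivity) hZcard
    exact_mod_cast this
  choose! y hyF hym hyz using hZ
  set p : ℝ := ρ * m with hp
  have hfloor : ∀ z ∈ Z, (m : ℝ) ≤ 2 ^ ℓ * y z ∧ 2 ^ ℓ * y z < m + 1 := fun z hz => by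
    rw [← hym z hz]
    exact ⟨Int.floor_le _, Int.lt_floor_add_one _⟩
  have hp0 : 0 ≤ p := by
    obtain ⟨z, hz⟩ := hZne
    have h1 : 0 ≤ m := by
      rw [← hym z hz]
      have : 0 < y z := hpos (hyF z hz)
      exact Int.floor_nonneg.2 (by positivity)
    have h2 : (0 : ℝ) ≤ m := by exact_mod_cast h1
    positivity
  have hpM : p ≤ M := by
    obtain ⟨z, hz⟩ := hZne
    have h1 := mul_le_mul_of_nonneg_left (hfloor z hz).1 hρ0.le
    rw [← mul_assoc, hρℓ, one_mul] at h1
    exact h1.trans (hM _ (hyF z hz))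
  obtain ⟨G, hGF, hGΛ, hGcont⟩ := hslopes p hp0 hpM
  set A : Finset ℝ := Z.image fun z => 2 ^ ℓ * y z - m with hA
  have hA01 : ∀ a ∈ A, 0 ≤ a ∧ a < 1 := by
    intro a ha
    obtain ⟨z, hz, rfl⟩ := Finset.mem_image.1 ha
    have := hfloor z hz
    constructor <;> linarith
  have hAF : ∀ a ∈ A, p + ρ * a ∈ F := by
    intro a ha
    obtain ⟨z, hz, rfl⟩ := Finset.mem_image.1 ha
    have h1 : p + ρ * (2 ^ ℓ * y z - m) = y z := by
      rw [hp, mul_sub, ← mul_assoc, hρℓ]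
      ring
    rw [h1]
    exact hyF z hz
  have hdyad : ∀ z ∈ Z, dyad n (2 ^ ℓ * y z - m) = z - 2 ^ n * m := fun z hz => by
    rw [dyad_rescale, hyz z hz]
  have hAcard : A.card = Z.card := by
    refine Finset.card_image_of_injOn fun z hz z' hz' hzz => ?_
    have hzz : 2 ^ ℓ * y z - (m : ℝ) = 2 ^ ℓ * y z' - m := hzz
    have h1 := hdyad z hz
    rw [hzz, hdyad z' hz'] at h1
    linarith
  refine hcore A ((fun x => x ^ p * Real.log x) '' G) hA01 ?_ (by rw [hAcard]; exact hZcard.le)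
    ?_ ?_ ?_
  · intro a ha b hb hab
    obtain ⟨z, hz, rfl⟩ := Finset.mem_image.1 ha
    obtain ⟨z', hz', rfl⟩ := Finset.mem_image.1 hb
    rw [hdyad z hz, hdyad z' hz'] at hab
    rw [show z = z' by linarith]
  · rintro _ ⟨x, hx, rfl⟩
    have hx0 : 0 < x := hpos (hGF hx)
    refine le_trans ?_ hB
    rw [abs_mul, abs_of_pos (Real.rpow_pos_of_pos hx0 p)]
    exact mul_le_mul (rpow_le_exp hx0 hp0 hpM (hGΛ x hx)) (hGΛ x hx) (abs_nonneg _)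
      (Real.exp_nonneg _)
  · intro S hS
    exact hGcont S fun x hx => hS _ (mem_image_of_mem _ hx)
  · rintro _ ⟨x, hx, rfl⟩
    have hx0 : 0 < x := hpos (hGF hx)
    refine packingBound_of_assouadCover hcover hC _
      (fun q : A × A => x ^ (p + ρ * (q.2 : ℝ)) + (p + ρ * (q.1 : ℝ)))
      (fun q => ⟨x, hGF hx, _, hAF _ q.2.2, _, hAF _ q.1.2, rfl⟩) (c := x ^ p + p) hρ0 hr₀0 ?_
    intro q
    have h1 := abs_rpow_add_sub_le hx0 hp0 hpM (hGΛ x hx) hρ0 hρΛ (hA01 _ q.2.2).1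
      (hA01 _ q.2.2).2.le
    have h2 := h1.trans (mul_le_mul_of_nonneg_left hρX hρ0.le)
    refine le_trans (le_of_eq ?_) h2
    congr 1
    ring

end Conclusion

/-- **Theorem 3.10** (sum-product, second part): for non-empty bounded `F ⊆ (0,∞)` with
`dim_H F > 0`, `dim_A (F^F + F) ≥ min{2 dim_A F, 1}`. -/
theorem assouad_exp_product (F : Set ℝ) (hne : F.Nonempty) (hbd : Bornology.IsBounded F)
    (hpos : F ⊆ Set.Ioi (0 : ℝ)) (hH : 0 < dimH F) :
    min (2 * assouadDim F) 1 ≤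
      assouadDim {w : ℝ | ∃ x ∈ F, ∃ y ∈ F, ∃ z ∈ F, w = x ^ y + z} := by
  obtain ⟨R, hR⟩ := hbd.exists_norm_le
  obtain ⟨M, hM⟩ := exists_nat_ge R
  rw [assouadDim_eq {w : ℝ | ∃ x ∈ F, ∃ y ∈ F, ∃ z ∈ F, w = x ^ y + z}]
  refine le_csInf ⟨1, zero_le_one, 4, by norm_num, assouadCover_one _⟩ ?_
  rintro u ⟨hu0, C, hC, hcover⟩
  by_contra! hlt
  obtain ⟨hu2, hu1⟩ := lt_min_iff.1 hlt
  exact not_assouadCover_expSum hpos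
    (fun x hx => ((le_abs_self x).trans (hR x hx)).trans hM) hH hu0 hC hu1 hu2 hcover

end
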